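/- arXiv:1906.10494 — 3 statements merged into one kernel-verified Lean document; each statement's English description precedes it below -/
import Mathlib

section
/- Exponential run theorem: there exists a polynomial p with natural-number coefficients such that for every 2-VASS V with n control states and norm M and for every (0,0)-run τ of V, there is a (0,0)-run of V of length at most p(nM)ⁿ with the same source and target configurations as τ. -/
/-- Integer vectors in the plane. -/
abbrev Vec2 : Type := ℤ × ℤ

/-- The norm of a vector: the maximum of the absolute values of its coordinates. -/
def vnorm (v : Vec2) : ℕ := max v.1.natAbs v.2.natAbs

/-- A vector is positive if both coordinates are positive. -/
def Pos (v : Vec2) : Prop := 0 < v.1 ∧ 0 < v.2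

/-- A vector is semi-positive if both coordinates are nonnegative and one is positive. -/
def SemiPos (v : Vec2) : Prop := 0 ≤ v.1 ∧ 0 ≤ v.2 ∧ (0 < v.1 ∨ 0 < v.2)

/-- A vector is vertical if it is of the form (0, a) with a > 0. -/
def Vert (v : Vec2) : Prop := v.1 = 0 ∧ 0 < v.2

/-- A vector is horizontal if it is of the form (a, 0) with a > 0. -/
def Horiz (v : Vec2) : Prop := 0 < v.1 ∧ v.2 = 0

/-- Embedding of integer vectors into the rational plane. -/
def toQ (v : Vec2) : ℚ × ℚ := ((v.1 : ℚ), (v.2 : ℚ))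

/-- The half-line (ray) ℚ≥0 · x generated by a rational vector x. -/
def rayQ (x : ℚ × ℚ) : Set (ℚ × ℚ) := {z | ∃ a : ℚ, 0 ≤ a ∧ z = a • x}

/-- The cone of a finite list of integer vectors: all nonnegative rational
linear combinations. -/
def Cone (vs : List Vec2) : Set (ℚ × ℚ) :=
  {x | ∃ a : Fin vs.length → ℚ, (∀ i, 0 ≤ a i) ∧ x = ∑ i, a i • toQ (vs.get i)}

/-- The sequential cone: nonnegative rational combinations all of whose
partial sums are in the nonnegative orthant. -/
def SeqCone (vs : List Vec2) : Set (ℚ × ℚ) :=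
  {x | ∃ a : Fin vs.length → ℚ, (∀ i, 0 ≤ a i) ∧
    (∀ k : ℕ, k ≤ vs.length →
      0 ≤ ∑ i : Fin vs.length, if (i : ℕ) < k then a i • toQ (vs.get i) else 0) ∧
    x = ∑ i, a i • toQ (vs.get i)}

/-- Two integer vectors are colinear if they generate the same half-line. -/
def Colinear (v w : Vec2) : Prop := rayQ (toQ v) = rayQ (toQ w)

/-- The clockwise relation on nonnegative vectors:
`Clk v u` iff u lies strictly clockwise from v. -/
def Clk (v u : Vec2) : Prop := 0 < v.2 * u.1 - v.1 * u.2

/-- Projection of a vector on coordinate `j` (`Fin 2` indexes the two coordinates). -/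
def proj (j : Fin 2) (v : Vec2) : ℤ := if j = 0 then v.1 else v.2

/-! ### 2-dimensional vector addition systems with states (2-VASS) -/

/-- A transition of a 2-VASS with control states `Fin n`:
a source state, an effect vector, and a target state. -/
abbrev Transition (n : ℕ) : Type := Fin n × Vec2 × Fin n

/-- A 2-VASS with control states `Fin n` is a finite set of transitions. -/
abbrev VASS (n : ℕ) : Type := Finset (Transition n)

/-- The norm of a 2-VASS: the largest norm of an effect of a transition. -/
def vassNorm {n : ℕ} (V : VASS n) : ℕ := V.sup (fun t => vnorm t.2.1)

/-- The effect of a sequence of transitions: the sum of the individual effects. -/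
def effect {n : ℕ} (π : List (Transition n)) : Vec2 := (π.map (fun t => t.2.1)).sum

/-- A path of `V`: a sequence of transitions of `V` in which
consecutive control states match. -/
def IsPath {n : ℕ} (V : VASS n) (π : List (Transition n)) : Prop :=
  (∀ t ∈ π, t ∈ V) ∧ π.Chain' (fun s t => s.2.2 = t.1)

/-- The path `π` starts at control state `q` (vacuously true for the empty path). -/
def startsAt {n : ℕ} (π : List (Transition n)) (q : Fin n) : Prop :=
  ∀ t ∈ π.head?, t.1 = q

/-- The control state after the first `i` transitions of `π`, for a path
starting at control state `q`. -/
def stateAt {n : ℕ} (π : List (Transition n)) (q : Fin n) (i : ℕ) : Fin n :=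
  (((π.take i).getLast?).map (fun t => t.2.2)).getD q

/-- The final control state of a path `π` starting at control state `q`. -/
def endState {n : ℕ} (π : List (Transition n)) (q : Fin n) : Fin n := stateAt π q π.length

/-- The counter values after the first `i` transitions of `π`, starting from
counter values `u`. -/
def vecAt {n : ℕ} (π : List (Transition n)) (u : Vec2) (i : ℕ) : Vec2 :=
  u + effect (π.take i)

/-- The path `π` is enabled in the configuration `(q, u)`: it starts at `q`
and all intermediate counter values are nonnegative. -/
def Enabled {n : ℕ} (π : List (Transition n)) (q : Fin n) (u : Vec2) : Prop :=
  startsAt π q ∧ ∀ i ≤ π.length, 0 ≤ vecAt π u i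

/-- For `j ∈ {1,2}`, the path `π` is `{j}`-enabled in the configuration `(q, u)`:
it starts at `q` and the `j`-th coordinate of all intermediate counter values is
nonnegative. -/
def JEnabled {n : ℕ} (π : List (Transition n)) (q : Fin n) (u : Vec2) (j : Fin 2) : Prop :=
  startsAt π q ∧ ∀ i ≤ π.length, 0 ≤ proj j (vecAt π u i)

/-- A run of `V`: a path of `V` enabled in the configuration `(q, u)`.
Its source is `(q, u)`, its target is `(endState π q, vecAt π u π.length)`,
and its configurations are `(stateAt π q i, vecAt π u i)` for `i ≤ π.length`. -/
def IsRun {n : ℕ} (V : VASS n) (π : List (Transition n)) (q : Fin n) (u : Vec2) : Prop :=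
  IsPath V π ∧ Enabled π q u

/-- A (0,0)-run of `V`: a run whose source and target counter values are `(0,0)`. -/
def IsZeroRun {n : ℕ} (V : VASS n) (π : List (Transition n)) (q : Fin n) : Prop :=
  IsRun V π q 0 ∧ effect π = 0

/-- A cycle of `V`: a nonempty path of `V` whose starting and ending control
states coincide. -/
def IsCycle {n : ℕ} (V : VASS n) (γ : List (Transition n)) : Prop :=
  IsPath V γ ∧ γ ≠ [] ∧ γ.head?.map (fun t => t.1) = γ.getLast?.map (fun t => t.2.2)

/-!
A shortest run from `0` to `0` is bounded as follows. Suppose first that every configuration lies in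
a narrow belt around a line through the origin with a short direction. Far from the origin these
belts are disjoint, so a high excursion stays in a single belt, where it behaves like a run of a
one-counter system: an ascending and a descending piece can be cut out, matched so that the target
is unchanged. Hence the run has small height, and it does not repeat a configuration.

Otherwise some configuration `c` lies outside the belts. To reach `c` from `0` the run must pump: an
initial segment of it yields an engine, a short run followed by cycles that provide a strictly
positive vector `b` as often as desired. From there, cycles whose directions turn from `b` towards
`c` show that not only `c` is reachable but every vector of a whole lattice coset of `c` in a wedge
containing `c`, in a number of steps linear in the vector. Reversing all transitions gives the same
for the way back to `0`. A small vector that is congruent to `c` and lies in both wedges can thus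
replace `c`. All sizes are polynomial in that of the engine, which is polynomial in `(nM)ⁿ`: along a
run without increasing cycles the height grows at most by a factor polynomial in `nM` with each
state that is visited for the first time.
-/

namespace TwoVASS

open Set

/-! ### Bounded vectors and determinants -/

/-- Both coordinates of `v` have absolute value at most `B`; an integer version of `vnorm v ≤ B`. -/
def Bdd (B : ℤ) (v : Vec2) : Prop := |v.1| ≤ B ∧ |v.2| ≤ B

/-- The determinant of two vectors: positive iff `v` points counterclockwise from `u`. -/
def det (u v : Vec2) : ℤ := u.1 * v.2 - u.2 * v.1

section Plane

variable {B C D : ℤ} {g u v w y z : Vec2}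

theorem Bdd.mono (h : Bdd B v) (hBC : B ≤ C) : Bdd C v :=
  ⟨h.1.trans hBC, h.2.trans hBC⟩

theorem Bdd.add (hv : Bdd B v) (hw : Bdd C w) : Bdd (B + C) (v + w) :=
  ⟨(abs_add_le _ _).trans (add_le_add hv.1 hw.1), (abs_add_le _ _).trans (add_le_add hv.2 hw.2)⟩

theorem Bdd.neg (h : Bdd B v) : Bdd B (-v) := by simpa [Bdd] using h

theorem Bdd.swap (h : Bdd B v) : Bdd B v.swap := And.symm h

theorem Bdd.smul {k : ℤ} (h : Bdd B v) (hk : |k| ≤ C) : Bdd (C * B) (k • v) := by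
  have hC := (abs_nonneg k).trans hk
  constructor
  · rw [Prod.smul_fst, smul_eq_mul, abs_mul]
    exact mul_le_mul hk h.1 (abs_nonneg _) hC
  · rw [Prod.smul_snd, smul_eq_mul, abs_mul]
    exact mul_le_mul hk h.2 (abs_nonneg _) hC

theorem Bdd.of_smul {k : ℤ} (hk : k ≠ 0) (h : Bdd B (k • v)) : Bdd B v := by
  simp only [Bdd, Prod.smul_fst, Prod.smul_snd, smul_eq_mul, abs_mul] at h
  exact ⟨(le_mul_of_one_le_left (abs_nonneg _) (Int.one_le_abs hk)).trans h.1,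
    (le_mul_of_one_le_left (abs_nonneg _) (Int.one_le_abs hk)).trans h.2⟩

theorem Bdd.abs_le_of_smul {k : ℤ} (hv : v ≠ 0) (h : Bdd B (k • v)) : |k| ≤ B := by
  simp only [Bdd, Prod.smul_fst, Prod.smul_snd, smul_eq_mul, abs_mul] at h
  by_cases h1 : v.1 = 0
  · have h2 : v.2 ≠ 0 := fun h2 => hv (Prod.ext h1 h2)
    exact (le_mul_of_one_le_right (abs_nonneg _) (Int.one_le_abs h2)).trans h.2
  · exact (le_mul_of_one_le_right (abs_nonneg _) (Int.one_le_abs h1)).trans h.1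

theorem Bdd.nonneg (h : Bdd B v) : 0 ≤ B := (abs_nonneg _).trans h.1

theorem bdd_zero (hB : 0 ≤ B) : Bdd B 0 := by simp [Bdd, hB]

theorem det_add (u v w : Vec2) : det u (v + w) = det u v + det u w := by
  simp only [det, Prod.fst_add, Prod.snd_add]; ring

theorem det_sub (u v w : Vec2) : det u (v - w) = det u v - det u w := by
  simp only [det, Prod.fst_sub, Prod.snd_sub]; ring

theorem det_smul (k : ℤ) (u v : Vec2) : det u (k • v) = k * det u v := by
  simp only [det, Prod.smul_fst, Prod.smul_snd, smul_eq_mul]; ring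

theorem det_neg_left (u v : Vec2) : det (-u) v = -det u v := by
  simp only [det, Prod.fst_neg, Prod.snd_neg]; ring

theorem det_comm (u v : Vec2) : det u v = -det v u := by simp only [det]; ring

theorem det_swap (u v : Vec2) : det u.swap v.swap = -det u v := by
  simp only [det, Prod.fst_swap, Prod.snd_swap]; ring

theorem det_smul_eq (u v z : Vec2) : det u v • z = det z v • u + det u z • v := by
  ext <;> simp only [det, Prod.fst_add, Prod.snd_add, Prod.smul_fst, Prod.smul_snd, smul_eq_mul] <;>
    ring

theorem abs_det_le (hu : Bdd B u) (hv : Bdd C v) : |det u v| ≤ 2 * B * C := by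
  have hB := hu.nonneg
  calc |det u v| ≤ |u.1 * v.2| + |u.2 * v.1| := abs_sub _ _
    _ = |u.1| * |v.2| + |u.2| * |v.1| := by rw [abs_mul, abs_mul]
    _ ≤ B * C + B * C := by
      gcongr
      exacts [hu.1, hv.2, hu.2, hv.1]
    _ = 2 * B * C := by ring

theorem abs_det_le_mul_add (hv : Bdd B v) (h1 : 0 ≤ z.1) (h2 : 0 ≤ z.2) :
    |det v z| ≤ B * (z.1 + z.2) := by
  calc |det v z| ≤ |v.1 * z.2| + |v.2 * z.1| := abs_sub _ _
    _ = |v.1| * z.2 + |v.2| * z.1 := by rw [abs_mul, abs_mul, abs_of_nonneg h1, abs_of_nonneg h2]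
    _ ≤ B * z.2 + B * z.1 := by gcongr; exacts [hv.1, hv.2]
    _ = B * (z.1 + z.2) := by ring

end Plane

/-! ### Walks and traces -/

/-- The nonnegative quadrant, where the vectors of runs live. -/
def quadrant : Set Vec2 := {x | 0 ≤ x.1 ∧ 0 ≤ x.2}

/-- The box `[0, N]²`. -/
def box (N : ℕ) : Set Vec2 := {x | (0 ≤ x.1 ∧ x.1 ≤ N) ∧ 0 ≤ x.2 ∧ x.2 ≤ N}

/-- `Walk V P L p u q w`: there is a path of `V` of length `L` from state `p` to state `q` leading
from the vector `u` to the vector `w`, such that all vectors on the way belong to `P`. Runs are the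
walks in the `quadrant`, and paths without any constraint are the walks in `univ`. -/
inductive Walk {n : ℕ} (V : VASS n) (P : Set Vec2) : ℕ → Fin n → Vec2 → Fin n → Vec2 → Prop
  | nil {p : Fin n} {u : Vec2} : u ∈ P → Walk V P 0 p u p u
  | cons {L : ℕ} {p q r : Fin n} {u v w : Vec2} : u ∈ P → (p, v, q) ∈ V →
      Walk V P L q (u + v) r w → Walk V P (L + 1) p u r w

/-- The sequences of states `st` and vectors `c` describe, up to index `L`, a path of `V`
all of whose vectors belong to `P`: a walk with its intermediate configurations made explicit. -/
structure IsTrace {n : ℕ} (V : VASS n) (P : Set Vec2) (L : ℕ) (st : ℕ → Fin n) (c : ℕ → Vec2) :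
    Prop where
  step : ∀ i < L, (st i, c (i + 1) - c i, st (i + 1)) ∈ V
  mem : ∀ i ≤ L, c i ∈ P

theorem mem_quadrant_of_mem_box {N : ℕ} {x : Vec2} (h : x ∈ box N) : x ∈ quadrant :=
  ⟨h.1.1, h.2.1⟩

section Walk

variable {n : ℕ} {V : VASS n} {P P' : Set Vec2} {L L' M : ℕ} {p q r : Fin n} {u v w : Vec2}
  {st : ℕ → Fin n} {c : ℕ → Vec2}

theorem bdd_of_mem (hM : vassNorm V ≤ M) (h : (p, v, q) ∈ V) : Bdd M v := by
  have hv : vnorm v ≤ M :=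
    (Finset.le_sup (f := fun t : Transition n => vnorm t.2.1) h).trans hM
  rw [vnorm, max_le_iff] at hv
  rw [Bdd, Int.abs_eq_natAbs, Int.abs_eq_natAbs]
  exact_mod_cast hv

theorem Walk.source (h : Walk V P L p u q w) : u ∈ P := by cases h <;> assumption

theorem Walk.target (h : Walk V P L p u q w) : w ∈ P := by
  induction h with
  | nil h => exact h
  | cons _ _ _ ih => exact ih

theorem Walk.trans (h : Walk V P L p u q v) (h' : Walk V P L' q v r w) :
    Walk V P (L + L') p u r w := by
  induction h with
  | nil _ => simpa using h'
  | cons hu ht _ ih =>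
    rw [Nat.add_right_comm]
    exact .cons hu ht (ih h')

theorem Walk.shift (d : Vec2) (h : Walk V P L p u q w) (hP : ∀ x ∈ P, x + d ∈ P') :
    Walk V P' L p (u + d) q (w + d) := by
  induction h with
  | nil h => exact .nil (hP _ h)
  | cons hu ht _ ih =>
    refine .cons (hP _ hu) ht ?_
    rwa [add_right_comm]

theorem Walk.mono (h : Walk V P L p u q w) (hP : P ⊆ P') : Walk V P' L p u q w := by
  simpa using h.shift 0 fun x hx => by simpa using hP hx

theorem Walk.free (h : Walk V P L p u q w) : Walk V univ L p 0 q (w - u) := by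
  simpa [sub_eq_add_neg] using h.shift (-u) (P' := univ) fun _ _ => trivial

theorem Walk.inter_bdd (hM : vassNorm V ≤ M) (h : Walk V P L p u q w) :
    Walk V (P ∩ {x | Bdd (L * M) (x - u)}) L p u q w := by
  induction h with
  | nil h => exact .nil ⟨h, by simp [Bdd]⟩
  | @cons L p q r u v w hu ht _ ih =>
    refine .cons ⟨hu, by simpa using bdd_zero (by positivity)⟩ ht (ih.mono fun x hx => ⟨hx.1, ?_⟩)
    have hxu := (bdd_of_mem hM ht).add hx.2
    rw [show v + (x - (u + v)) = x - u by abel] at hxu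
    exact hxu.mono (by push_cast; linarith)

theorem Walk.bdd (hM : vassNorm V ≤ M) (h : Walk V P L p u q w) : Bdd (L * M) (w - u) :=
  (h.inter_bdd hM).target.2

theorem Walk.exists_trace (h : Walk V P L p u q w) :
    ∃ st c, IsTrace V P L st c ∧ st 0 = p ∧ c 0 = u ∧ st L = q ∧ c L = w := by
  induction h with
  | @nil p u h => exact ⟨fun _ => p, fun _ => u, ⟨by simp, fun _ _ => h⟩, rfl, rfl, rfl, rfl⟩
  | @cons L p q r u v w hu ht _ ih =>
    obtain ⟨st, c, htr, hst, hc, hstL, hcL⟩ := ih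
    refine ⟨fun i => Nat.casesOn i p st, fun i => Nat.casesOn i u c, ⟨?_, ?_⟩, rfl, rfl, hstL, hcL⟩
    · rintro (_ | i) hi
      · simpa [hst, hc] using ht
      · exact htr.step i (by omega)
    · rintro (_ | i) hi
      · exact hu
      · exact htr.mem i (by omega)

theorem IsTrace.walk_of_mem (h : IsTrace V P L st c) {i j : ℕ} (hij : i ≤ j) (hj : j ≤ L)
    (hP : ∀ m, i ≤ m → m ≤ j → c m ∈ P') : Walk V P' (j - i) (st i) (c i) (st j) (c j) := by
  induction hij using Nat.decreasingInduction with
  | self => simpa using Walk.nil (hP j le_rfl le_rfl)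
  | of_succ i hi ih =>
    rw [show j - i = j - (i + 1) + 1 by omega]
    refine .cons (hP i le_rfl (by omega)) (h.step i (by omega)) ?_
    rw [add_sub_cancel]
    exact ih fun m hm => hP m (by omega)

theorem IsTrace.walk (h : IsTrace V P L st c) {i j : ℕ} (hij : i ≤ j) (hj : j ≤ L) :
    Walk V P (j - i) (st i) (c i) (st j) (c j) :=
  h.walk_of_mem hij hj fun m _ hm => h.mem m (hm.trans hj)

theorem IsTrace.bdd_step (hM : vassNorm V ≤ M) (h : IsTrace V P L st c) {i : ℕ} (hi : i < L) :
    Bdd M (c (i + 1) - c i) := bdd_of_mem hM (h.step i hi)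

theorem exists_lt_map_eq_of_card_le {α : Type*} [Fintype α] (f : ℕ → α) {k : ℕ}
    (hk : Fintype.card α ≤ k) : ∃ i j, i < j ∧ j ≤ k ∧ f i = f j := by
  obtain ⟨i, j, hij, he⟩ := Fintype.exists_ne_map_eq_of_card_lt (fun i : Fin (k + 1) => f i)
    (by simpa using hk)
  rcases lt_or_gt_of_ne (Fin.val_ne_of_ne hij) with h | h
  · exact ⟨i, j, h, by omega, he⟩
  · exact ⟨j, i, h, by omega, he.symm⟩

/-- Loops whose removal shifts the rest of a walk by an element of `H` can be cut out, so that
no state is visited twice with the same key. -/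
theorem Walk.shorten {ι : Type*} [Fintype ι] (H : AddSubmonoid Vec2)
    (hP : ∀ x ∈ P, ∀ d ∈ H, x + d ∈ P) (key : Vec2 → ι)
    (hkey : ∀ {l s x y}, l ≤ n * Fintype.card ι → Walk V P l s x s y → key x = key y → x - y ∈ H)
    (h : Walk V P L p u q w) :
    ∃ L' w', L' ≤ n * Fintype.card ι ∧ w' - w ∈ H ∧ Walk V P L' p u q w' := by
  induction L using Nat.strong_induction_on generalizing w with
  | _ L ih =>
  by_cases hL : L ≤ n * Fintype.card ι
  · exact ⟨L, w, hL, by simp, h⟩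
  obtain ⟨st, c, htr, rfl, rfl, rfl, rfl⟩ := h.exists_trace
  obtain ⟨i, j, hij, hj, he⟩ := exists_lt_map_eq_of_card_le (fun i => (st i, key (c i)))
    (k := n * Fintype.card ι) (by simp)
  obtain ⟨hst, hc⟩ := Prod.mk.inj he
  have hloop := htr.walk hij.le (by omega)
  rw [← hst] at hloop
  have hd : c i - c j ∈ H := hkey (by omega) hloop hc
  have htail := (htr.walk (i := j) (j := L) (by omega) le_rfl).shift (c i - c j)
    fun x hx => hP x hx _ hd
  rw [← hst, add_sub_cancel] at htail
  obtain ⟨L', w', hL', hw', hwalk⟩ :=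
    ih _ (by omega) ((htr.walk (Nat.zero_le i) (by omega)).trans htail)
  refine ⟨L', w', hL', ?_, hwalk⟩
  simpa only [sub_add_eq_sub_sub, sub_add_cancel] using H.add_mem hw' hd

theorem add_mem_quadrant {d x : Vec2} (hdM : L * M ≤ d.1 ∧ L * M ≤ d.2) (hx : Bdd (L * M) x) :
    d + x ∈ quadrant := by
  have h1 := (abs_le.1 hx.1).1
  have h2 := (abs_le.1 hx.2).1
  exact ⟨by rw [Prod.fst_add]; linarith, by rw [Prod.snd_add]; linarith⟩

theorem Walk.enable (hM : vassNorm V ≤ M) (h : Walk V univ L p u q w) {d : Vec2}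
    (hd : L * M ≤ d.1 ∧ L * M ≤ d.2) : Walk V quadrant L p d q (d + (w - u)) := by
  have := (h.inter_bdd hM).shift (P' := quadrant) (d - u) fun x hx => by
    rw [show x + (d - u) = d + (x - u) by abel]
    exact add_mem_quadrant hd hx.2
  rwa [add_sub_cancel, show w + (d - u) = d + (w - u) by abel] at this

theorem Walk.iterate {d : Vec2} {m : ℕ} (hd : d ∈ P)
    (h : ∀ i < m, Walk V P L p (d + i • w) p (d + i • w + w)) :
    Walk V P (m * L) p d p (d + m • w) := by
  induction m with
  | zero => simpa using Walk.nil hd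
  | succ m ih =>
    rw [Nat.add_mul, Nat.one_mul, succ_nsmul, ← add_assoc]
    exact (ih fun i hi => h i (by omega)).trans (h m (by omega))

theorem le_add_mul_of_le {a b k : ℤ} {i m : ℕ} (hi : i ≤ m) (h0 : k ≤ a) (hm : k ≤ a + m * b) :
    k ≤ a + i * b := by
  rcases le_total 0 b with hb | hb
  · exact h0.trans (le_add_of_nonneg_right (by positivity))
  · exact hm.trans (add_le_add_right (mul_le_mul_of_nonpos_right (by exact_mod_cast hi) hb) a)

/-- By convexity, a cycle is enabled at all vectors in between as soon as it is at the first and the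
last one. -/
theorem Walk.iterate_of_le (hM : vassNorm V ≤ M) (h : Walk V univ L p 0 p w) (m : ℕ) {d : Vec2}
    (hd : L * M ≤ d.1 ∧ L * M ≤ d.2)
    (hdm : L * M ≤ (d + m • w).1 ∧ L * M ≤ (d + m • w).2) :
    Walk V quadrant (m * L) p d p (d + m • w) := by
  have hLM : (0 : ℤ) ≤ L * M := by positivity
  refine .iterate ⟨hLM.trans hd.1, hLM.trans hd.2⟩ fun i hi => ?_
  have := h.enable hM (d := d + i • w)
    ⟨by simpa using le_add_mul_of_le hi.le hd.1 (by simpa using hdm.1),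
      by simpa using le_add_mul_of_le hi.le hd.2 (by simpa using hdm.2)⟩
  rwa [sub_zero] at this

theorem Walk.iterate_of_nonneg {a : Vec2} (ha : 0 ≤ a) (h : Walk V quadrant L p u p (u + a))
    (m : ℕ) : Walk V quadrant (m * L) p u p (u + m • a) := by
  refine .iterate h.source fun i _ => ?_
  have hi : 0 ≤ i • a := nsmul_nonneg ha i
  have := h.shift (P' := quadrant) (i • a) fun x hx =>
    ⟨add_nonneg hx.1 hi.1, add_nonneg hx.2 hi.2⟩
  rwa [add_right_comm u a] at this

end Walk

/-! ### Shortest runs inside belts -/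

/-- The vector `c` lies in a belt of width `W` around a line through the origin which is spanned by
a vector of norm at most `W`. -/
def Thin (W : ℤ) (c : Vec2) : Prop := ∃ g : Vec2, g ≠ 0 ∧ Bdd W g ∧ |det g c| ≤ W

/-- The threshold beyond which belts of different directions are disjoint. -/
def beltSep {R : Type*} [CommSemiring R] (W M : R) : R :=
  2 * (W * (W * W + 2 * W * M) + W * W) + W

/-- A bound on the sum of the coordinates along a shortest run in belts. The square counts the
pairs of crossings of a level, each of which is described by its state, its position in the belt
and its distance to the level. -/
def thinHeight {R : Type*} [CommSemiring R] (n W M : R) : R :=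
  beltSep W M + 2 * M + (n * (2 * (W * W) + 1) * (2 * M)) ^ 2

section Belt

variable {B C D W : ℤ} {g g' z δ : Vec2}

theorem Thin.swap (h : Thin W z) : Thin W z.swap := by
  obtain ⟨g, hg, hgW, hgz⟩ := h
  exact ⟨g.swap, fun h0 => hg (Prod.swap_injective h0), hgW.swap, by rwa [det_swap, abs_neg]⟩

theorem lt_abs_det_of_not_thin (h : ¬ Thin W z) (hg : g ≠ 0) (hgW : Bdd W g) : W < |det g z| :=
  not_le.1 fun hle => h ⟨g, hg, hgW, hle⟩

theorem bdd_of_abs_det_le (hg : Bdd B g) (hg' : Bdd B g') (h : det g g' ≠ 0)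
    (hgz : |det g z| ≤ C) (hgz' : |det g' z| ≤ D) : Bdd (D * B + C * B) z := by
  refine Bdd.of_smul h ?_
  rw [det_smul_eq, det_comm z]
  exact (hg.smul (by rwa [abs_neg])).add (hg'.smul hgz)

theorem abs_det_le_of_parallel (hg : Bdd B g) (hg' : g' ≠ 0) (h : det g g' = 0)
    (hgz' : |det g' z| ≤ C) : |det g z| ≤ C * B := by
  refine Bdd.abs_le_of_smul hg' ?_
  have : det g z • g' = det g' z • g := by
    have := det_smul_eq g g' z
    rwa [h, zero_smul, det_comm z, neg_smul, eq_comm, neg_add_eq_zero, eq_comm] at this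
  rw [this]
  exact hg.smul hgz'

theorem Thin.exists_nonneg_direction (h : Thin W z) (hz : z ∈ quadrant) (hl : W < z.1 + z.2) :
    ∃ g : Vec2, g ∈ quadrant ∧ 0 < g.1 + g.2 ∧ Bdd W g ∧ |det g z| ≤ W := by
  obtain ⟨g, hg, hgW, hgz⟩ := h
  obtain ⟨hz1, hz2⟩ := hz
  have hne : g.1 ≠ 0 ∨ g.2 ≠ 0 := by
    contrapose! hg
    exact Prod.ext hg.1 hg.2
  have hdet := abs_le.1 hgz
  simp only [det] at hdet
  obtain h | h | h | h : (0 ≤ g.1 ∧ 0 ≤ g.2) ∨ (g.1 ≤ 0 ∧ g.2 ≤ 0) ∨ (0 < g.1 ∧ g.2 < 0) ∨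
    (g.1 < 0 ∧ 0 < g.2) := by omega
  · exact ⟨g, h, by omega, hgW, hgz⟩
  · refine ⟨-g, ⟨by simpa using h.1, by simpa using h.2⟩, ?_, hgW.neg, ?_⟩
    case refine_2 => rwa [det_neg_left, abs_neg]
    simp only [Prod.fst_neg, Prod.snd_neg]
    omega
  · nlinarith
  · nlinarith

theorem sub_mem_quadrant_of_abs_det_le (hg : g ∈ quadrant) (hg0 : 0 < g.1 + g.2)
    (hz : z ∈ quadrant) (hδ : det g δ = 0) (hgz : |det g z| ≤ B)
    (hl : B ≤ z.1 + z.2 - (δ.1 + δ.2)) : z - δ ∈ quadrant := by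
  obtain ⟨hg1, hg2⟩ := hg
  obtain ⟨hz1, hz2⟩ := hz
  have hdet := abs_le.1 hgz
  simp only [det] at hdet hδ
  constructor
  · rw [Prod.fst_sub]
    rcases hg1.eq_or_lt with h | h
    · have : δ.1 = 0 := (mul_eq_zero.1 (by rw [← h] at hδ; linarith : g.2 * δ.1 = 0)).resolve_left
        (by omega)
      omega
    · by_contra
      nlinarith
  · rw [Prod.snd_sub]
    rcases hg2.eq_or_lt with h | h
    · have : δ.2 = 0 := (mul_eq_zero.1 (by rw [← h] at hδ; linarith : g.1 * δ.2 = 0)).resolve_left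
        (by omega)
      omega
    · by_contra
      nlinarith

theorem eq_of_det_eq_of_sum_eq (hg0 : 0 < g.1 + g.2) (hdet : det g z = det g δ)
    (hsum : z.1 + z.2 = δ.1 + δ.2) : z = δ := by
  simp only [det] at hdet
  refine Prod.ext (mul_left_cancel₀ hg0.ne' ?_) (mul_left_cancel₀ hg0.ne' ?_)
  · linear_combination g.1 * hsum - hdet
  · linear_combination g.2 * hsum + hdet

end Belt

section Crossings

variable {f : ℕ → ℤ} {j J : ℤ} {s t e S : ℕ}

theorem exists_last_le (hst : s ≤ t) (hs : f s ≤ j) (ht : j < f t) :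
    ∃ i, s ≤ i ∧ i < t ∧ f i ≤ j ∧ ∀ m, i < m → m ≤ t → j < f m := by
  induction t, hst using Nat.le_induction with
  | base => omega
  | succ t hst ih =>
    by_cases h : f t ≤ j
    · refine ⟨t, hst, by omega, h, fun m hm hmt => ?_⟩
      rwa [show m = t + 1 by omega]
    · obtain ⟨i, hsi, hit, hi, habove⟩ := ih (by omega)
      refine ⟨i, hsi, by omega, hi, fun m hm hmt => ?_⟩
      rcases Nat.lt_or_ge t m with htm | hmt
      · rwa [show m = t + 1 by omega]
      · exact habove m hm hmt

theorem exists_first_le (hte : t ≤ e) (he : f e ≤ j) (ht : j < f t) :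
    ∃ i, t < i ∧ i ≤ e ∧ f i ≤ j ∧ ∀ m, t ≤ m → m < i → j < f m := by
  obtain ⟨i, -, hi, hfi, habove⟩ := exists_last_le (f := fun i => f (e - i)) (s := 0) (t := e - t)
    (Nat.zero_le _) (by simpa using he) (by simpa [Nat.sub_sub_self hte] using ht)
  refine ⟨e - i, by omega, by omega, hfi, fun m htm hmi => ?_⟩
  simpa [Nat.sub_sub_self (show m ≤ e by omega)] using habove (e - m) (by omega) (by omega)

/-- `f` is above the level `j` from just after the index `i < t` to just before the index `k > t`,
and exceeds `j` neither at `i` nor at `k`, where it falls short of `j` by less than `S`. -/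
structure IsHill (f : ℕ → ℤ) (S t : ℕ) (j : ℤ) (i k : ℕ) : Prop where
  lt_top : i < t
  top_lt : t < k
  start_mem : f i - j ∈ Ioc (-S : ℤ) 0
  end_mem : f k - j ∈ Ioc (-S : ℤ) 0
  above : ∀ m, i < m → m < k → j < f m

theorem exists_isHill (hst : s ≤ t) (hte : t ≤ e)
    (hstep : ∀ i, s ≤ i → i < e → |f (i + 1) - f i| ≤ S) (hs : f s + S ≤ j) (he : f e + S ≤ j)
    (ht : j < f t) : ∃ i k, s < i ∧ k < e ∧ IsHill f S t j i k := by
  obtain ⟨i, hsi, hit, hi, hleft⟩ := exists_last_le hst (by omega) ht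
  obtain ⟨_ | k, htk, hke, hk, hright⟩ := exists_first_le hte (by omega) ht
  · omega
  have hup := abs_le.1 (hstep i hsi (by omega))
  have hdown := abs_le.1 (hstep k (by omega) hke)
  have hi' := hleft (i + 1) (by omega) hit
  have hk' := hright k (by omega) (by omega)
  refine ⟨i, k + 1, hsi.lt_of_ne ?_, hke.lt_of_ne ?_, hit, htk, ⟨by omega, by omega⟩,
    ⟨by omega, by omega⟩, fun m him hmk => ?_⟩
  · rintro rfl; omega
  · rintro rfl; omega
  · rcases le_total m t with hmt | hmt
    exacts [hleft m him hmt, hright m hmt hmk]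

theorem IsHill.sub_lt {i k m : ℕ} (h : IsHill f S t j i k) (him : i ≤ m) (hmk : m ≤ k) :
    j - S < f m := by
  have hi := h.start_mem.1
  have hk := h.end_mem.1
  rcases him.eq_or_lt with rfl | him
  · omega
  rcases hmk.eq_or_lt with rfl | hmk
  · omega
  have := h.above m him hmk
  omega

theorem IsHill.nested {j' : ℤ} {i i' k k' : ℕ} (h : IsHill f S t j i k)
    (h' : IsHill f S t j' i' k') (hj : j < j') (hi : f i - j = f i' - j')
    (hk : f k - j = f k' - j') : i < i' ∧ k' < k := by
  have hlt := h.lt_top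
  have htop := h.top_lt
  have hlt' := h'.lt_top
  have htop' := h'.top_lt
  constructor
  · by_contra! hle
    rcases hle.eq_or_lt with rfl | hlt
    · omega
    · have := h'.above i hlt (by omega)
      have := h.start_mem.2
      omega
  · by_contra! hle
    rcases hle.eq_or_lt with rfl | hlt
    · omega
    · have := h'.above k (by omega) hlt
      have := h.end_mem.2
      omega

/-- Pigeonhole on the hills above the levels from `J + S` to `J + S + (K.card * S) ^ 2`. -/
theorem exists_matching_crossings {α : Type*} {key : ℕ → α} {K : Finset α} (hst : s ≤ t)
    (hte : t ≤ e) (hs : f s ≤ J) (he : f e ≤ J)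
    (hstep : ∀ i, s ≤ i → i < e → |f (i + 1) - f i| ≤ S)
    (hkey : ∀ i, s < i → i < e → key i ∈ K) (ht : J + S + (K.card * S) ^ 2 < f t) :
    ∃ i i' k' k, s < i ∧ i < i' ∧ i' ≤ k' ∧ k' < k ∧ k < e ∧ key i = key i' ∧ key k = key k' ∧
      f i' - f i = f k' - f k ∧ ∀ m, i' ≤ m → m ≤ k' → J ≤ f m - (f i' - f i) := by
  set C := (K.card * S) ^ 2 with hC
  have hlevel (j : Fin (C + 1)) : J + S + j < f t := by
    have hj : (j : ℤ) ≤ C := by exact_mod_cast Nat.lt_succ_iff.1 j.2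
    have hC' : (C : ℤ) = (K.card * S) ^ 2 := by simp [hC]
    omega
  choose up down hup hdown hill using fun j : Fin (C + 1) =>
    exists_isHill hst hte hstep (by omega) (by omega) (hlevel j)
  obtain ⟨j, -, j', -, hne, heq⟩ := Finset.exists_ne_map_eq_of_card_lt_of_maps_to
    (s := Finset.univ) (t := (K ×ˢ Finset.Ioc (-S : ℤ) 0) ×ˢ (K ×ˢ Finset.Ioc (-S : ℤ) 0))
    (f := fun j => ((key (up j), f (up j) - (J + S + j)), (key (down j), f (down j) - (J + S + j))))
    (by simp [hC, sq])
    (fun j _ => by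
      have hlt := (hill j).lt_top
      have htop := (hill j).top_lt
      simpa [hkey (up j) (hup j) (by omega), hkey (down j) (by omega) (hdown j)] using
        And.intro (hill j).start_mem (hill j).end_mem)
  wlog hlt : j < j' generalizing j j'
  · exact this j' j hne.symm heq.symm (lt_of_le_of_ne (not_lt.1 hlt) hne.symm)
  simp only [Prod.mk.injEq] at heq
  obtain ⟨⟨hkeyup, hup_eq⟩, hkeydown, hdown_eq⟩ := heq
  obtain ⟨hupup, hdowndown⟩ :=
    (hill j).nested (hill j') (by gcongr; exact_mod_cast hlt) hup_eq hdown_eq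
  refine ⟨up j, up j', down j', down j, hup j, hupup,
    ((hill j').lt_top.trans (hill j').top_lt).le, hdowndown, hdown j, hkeyup, hkeydown,
    by omega, fun m hm hm' => ?_⟩
  have := (hill j').sub_lt hm hm'
  omega

end Crossings

section Thin

variable {n : ℕ} {V : VASS n} {L M W : ℕ} {st : ℕ → Fin n} {c : ℕ → Vec2}

theorem exists_belt_of_thin (hM : vassNorm V ≤ M) (htr : IsTrace V quadrant L st c) {s e : ℕ}
    (hse : s < e) (heL : e ≤ L) (hfar : ∀ m, s ≤ m → m < e → beltSep (W : ℤ) M < (c m).1 + (c m).2)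
    (hthin : ∀ m ≤ L, Thin W (c m)) :
    ∃ g ∈ quadrant, 0 < g.1 + g.2 ∧ ∀ m, s ≤ m → m < e → |det g (c m)| ≤ W * W := by
  have hWsep : (W : ℤ) ≤ beltSep (W : ℤ) M := le_add_of_nonneg_left (by positivity)
  obtain ⟨g, hg, hg0, hgW, hgs⟩ := (hthin s (by omega)).exists_nonneg_direction
    (htr.mem s (by omega)) (hWsep.trans_lt (hfar s le_rfl hse))
  refine ⟨g, hg, hg0, fun m hsm => ?_⟩
  induction m, hsm using Nat.le_induction with
  | base =>
    intro _
    exact hgs.trans (by exact_mod_cast Nat.le_mul_self W)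
  | succ m hsm ih =>
    intro hme
    have hnear : |det g (c (m + 1))| ≤ W * W + 2 * W * M := by
      rw [← add_sub_cancel (c m) (c (m + 1)), det_add]
      exact (abs_add_le _ _).trans
        (add_le_add (ih (by omega)) (abs_det_le hgW (htr.bdd_step hM (by omega))))
    obtain ⟨g', hg'0, hg'W, hg'⟩ := hthin (m + 1) (by omega)
    by_cases hdet : det g g' = 0
    · exact abs_det_le_of_parallel hgW hg'0 hdet hg'
    · obtain ⟨h1, h2⟩ := bdd_of_abs_det_le hgW hg'W hdet hnear hg'
      have hlt := hfar (m + 1) (by omega) hme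
      rw [abs_le] at h1 h2
      rw [beltSep] at hlt
      linarith

theorem IsTrace.abs_sum_step_le (hM : vassNorm V ≤ M) (htr : IsTrace V quadrant L st c) {i : ℕ}
    (hi : i < L) : |(c (i + 1)).1 + (c (i + 1)).2 - ((c i).1 + (c i).2)| ≤ (2 * M : ℕ) := by
  obtain ⟨h1, h2⟩ := htr.bdd_step hM hi
  rw [add_sub_add_comm]
  push_cast
  exact (abs_add_le _ _).trans (by simp only [Prod.fst_sub, Prod.snd_sub] at h1 h2; linarith)

theorem IsTrace.walk_cut_hill (htr : IsTrace V quadrant L st c) {g δ : Vec2} (hg : g ∈ quadrant)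
    (hg0 : 0 < g.1 + g.2) (hδ : det g δ = 0) {B : ℤ} {i i' k k' : ℕ} (hi : i ≤ i') (hik : i' ≤ k')
    (hk : k' ≤ k) (hkL : k ≤ L) (hsti : st i = st i') (hci : c i' = c i + δ)
    (hstk : st k = st k') (hck : c k' = c k + δ)
    (hbelt : ∀ m, i' ≤ m → m ≤ k' → |det g (c m)| ≤ B)
    (hfar : ∀ m, i' ≤ m → m ≤ k' → B ≤ (c m).1 + (c m).2 - (δ.1 + δ.2)) :
    Walk V quadrant (i + (k' - i') + (L - k)) (st 0) (c 0) (st L) (c L) := by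
  have hmid := htr.walk_of_mem (P' := {x | x - δ ∈ quadrant}) hik (by omega) fun m hm hm' =>
    sub_mem_quadrant_of_abs_det_le hg hg0 (htr.mem m (by omega)) hδ (hbelt m hm hm')
      (hfar m hm hm')
  have hlow := hmid.shift (P' := quadrant) (-δ) fun x hx => by rwa [← sub_eq_add_neg]
  rw [hci, hck, add_neg_cancel_right, add_neg_cancel_right, ← hsti, ← hstk] at hlow
  exact ((htr.walk (Nat.zero_le i) (by omega)).trans hlow).trans (htr.walk hkL le_rfl)

theorem IsTrace.exists_lt_walk_of_belt (hM : vassNorm V ≤ M) (htr : IsTrace V quadrant L st c)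
    {g : Vec2} (hg : g ∈ quadrant) (hg0 : 0 < g.1 + g.2) {J : ℤ} {B s t e : ℕ} (hst : s ≤ t)
    (hte : t ≤ e) (heL : e ≤ L) (hs : (c s).1 + (c s).2 ≤ J) (he : (c e).1 + (c e).2 ≤ J)
    (hBJ : B ≤ J) (hbelt : ∀ m, s < m → m < e → |det g (c m)| ≤ B)
    (ht : J + 2 * M + (n * (2 * B + 1) * (2 * M)) ^ 2 < (c t).1 + (c t).2) :
    ∃ L' < L, Walk V quadrant L' (st 0) (c 0) (st L) (c L) := by
  obtain ⟨i, i', k', k, hsi, hii', hik', hk'k, hke, hkeyi, hkeyk, hδsum, habove⟩ :=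
    exists_matching_crossings (f := fun m => (c m).1 + (c m).2) (S := 2 * M)
      (key := fun m => (st m, det g (c m))) (K := Finset.univ ×ˢ Finset.Icc (-(B : ℤ)) B)
      hst hte hs he (fun m _ hme => htr.abs_sum_step_le hM (by omega))
      (fun m hsm hme => by simpa [abs_le] using hbelt m hsm hme) (by
        rw [Finset.card_product, Finset.card_univ, Fintype.card_fin, Int.card_Icc,
          show ((B : ℤ) + 1 - -B).toNat = 2 * B + 1 by omega]
        simpa using ht)
  obtain ⟨hsti, hdeti⟩ := Prod.mk.inj hkeyi
  obtain ⟨hstk, hdetk⟩ := Prod.mk.inj hkeyk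
  have hδ : c k' - c k = c i' - c i :=
    eq_of_det_eq_of_sum_eq hg0 (by rw [det_sub, det_sub, hdeti, hdetk, sub_self, sub_self])
      (by simpa only [Prod.fst_sub, Prod.snd_sub, sub_add_sub_comm] using hδsum.symm)
  refine ⟨i + (k' - i') + (L - k), by omega, htr.walk_cut_hill hg hg0 (δ := c i' - c i)
    (by rw [det_sub, hdeti, sub_self]) hii'.le hik' hk'k.le (by omega) hsti (by abel) hstk
    (by rw [← hδ]; abel) (fun m hm hm' => hbelt m (by omega) (by omega))
    (fun m hm hm' => hBJ.trans ?_)⟩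
  simpa only [Prod.fst_sub, Prod.snd_sub, add_sub_add_comm] using habove m hm hm'

theorem height_le_of_thin (hM : vassNorm V ≤ M) (htr : IsTrace V quadrant L st c) (h0 : c 0 = 0)
    (hL : c L = 0) (hmin : ∀ L', Walk V quadrant L' (st 0) 0 (st L) 0 → L ≤ L')
    (hthin : ∀ i ≤ L, Thin W (c i)) {t : ℕ} (ht : t ≤ L) :
    (c t).1 + (c t).2 ≤ thinHeight (n : ℤ) W M := by
  by_contra! hhigh
  set f : ℕ → ℤ := fun i => (c i).1 + (c i).2 with hf
  have hsep : (0 : ℤ) ≤ beltSep (W : ℤ) M := by simp only [beltSep]; positivity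
  have hsepW : (W : ℤ) * W ≤ beltSep (W : ℤ) M := by
    rw [beltSep]
    linarith [show (0 : ℤ) ≤ 2 * (W * (W * W + 2 * W * M)) + W * W + W by positivity]
  have hlow : beltSep (W : ℤ) M < f t := lt_of_le_of_lt (by
    rw [thinHeight, add_assoc]
    exact le_add_of_nonneg_right (by positivity)) hhigh
  obtain ⟨s, -, hst, hs, hfars⟩ := exists_last_le (Nat.zero_le t) (by simpa [hf, h0]) hlow
  obtain ⟨e, hte, heL, he, hfare⟩ := exists_first_le ht (by simpa [hf, hL]) hlow
  have hfar : ∀ m, s + 1 ≤ m → m < e → beltSep (W : ℤ) M < f m := fun m hsm hme =>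
    (le_total m t).elim (hfars m hsm) fun htm => hfare m htm hme
  obtain ⟨g, hg, hg0, hbelt⟩ := exists_belt_of_thin hM htr (by omega) heL hfar hthin
  obtain ⟨L', hL', hwalk⟩ := htr.exists_lt_walk_of_belt hM hg hg0 (B := W * W) hst.le hte.le heL
    hs he (by exact_mod_cast hsepW) (by exact_mod_cast hbelt) (by simpa [thinHeight] using hhigh)
  rw [h0, hL] at hwalk
  exact hL'.not_ge (hmin L' hwalk)

end Thin

/-! ### Small representatives of congruence classes in cones -/

/-- The points lying to the left of all directions in `F`, with some margin. For short directions
this is, up to the margin, a convex cone. -/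
def wedge (K : ℤ) (F : Set Vec2) : Set Vec2 := {z | ∀ f ∈ F, K ≤ det f z}

/-- The directions of the edges of the quadrant, which lies to the left of both. -/
def quadrantEdges : Set Vec2 := {(1, 0), (0, -1)}

/-- The level above which a constraint of a wedge is not violated by one step of descent. -/
def slackLevel {R : Type*} [CommSemiring R] (K E : R) : R := K + 2 * K * K * E

/-- A bound on the smallest points of a congruence class modulo `E` inside a wedge. -/
def repBound {R : Type*} [CommSemiring R] (K E : R) : R := 4 * K * slackLevel K E

section Wedge

variable {K E : ℤ} {F : Set Vec2} {f g z : Vec2}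

theorem le_coords_of_mem_wedge (hF : quadrantEdges ⊆ F) (hz : z ∈ wedge K F) :
    K ≤ z.1 ∧ K ≤ z.2 := by
  have h1 := hz (0, -1) (hF (by simp [quadrantEdges]))
  have h2 := hz (1, 0) (hF (by simp [quadrantEdges]))
  simp only [det] at h1 h2
  constructor <;> linarith

theorem sub_smul_mem_wedge (hE : 0 ≤ E) (hF : ∀ f ∈ F, Bdd K f) (hz : z ∈ wedge K F)
    (hg : Bdd K g) (h : ∀ f ∈ F, det f z < slackLevel K E → det f g = 0) :
    z - E • g ∈ wedge K F := by
  intro f hf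
  rw [det_sub, det_smul]
  by_cases htight : det f z < slackLevel K E
  · rw [h f hf htight, mul_zero, sub_zero]
    exact hz f hf
  · have hfg := (le_abs_self _).trans (abs_det_le (hF f hf) hg)
    rw [not_lt, slackLevel] at htight
    linarith [mul_le_mul_of_nonneg_left hfg hE]

theorem exists_pos_sum_of_det_pos (hK : Bdd K f) (hz1 : 0 ≤ z.1) (hz2 : 0 ≤ z.2)
    (hpos : 0 < det f z) (hlt : det f z < z.1 + z.2) :
    ∃ g : Vec2, (g = f ∨ g = -f) ∧ Bdd K g ∧ 0 < g.1 + g.2 := by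
  rcases lt_trichotomy (f.1 + f.2) 0 with h | h | h
  · refine ⟨-f, .inr rfl, hK.neg, ?_⟩
    simp only [Prod.fst_neg, Prod.snd_neg]
    omega
  · have hdet : det f z = f.1 * (z.1 + z.2) := by rw [det, show f.2 = -f.1 by omega]; ring
    rw [hdet] at hpos hlt
    have hf1 : 0 < f.1 := pos_of_mul_pos_left hpos (by omega)
    exact absurd hlt (not_lt.2 (le_mul_of_one_le_left (by omega) hf1))
  · exact ⟨f, .inl rfl, hK, h⟩

/-- Far away from the origin one can descend along a tight constraint, because all other tight
constraints are parallel to it. -/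
theorem exists_descent (hK : 1 ≤ K) (hE : 0 ≤ E) (hF : ∀ f ∈ F, Bdd K f)
    (hFq : quadrantEdges ⊆ F) (hz : z ∈ wedge K F) (hl : repBound K E < z.1 + z.2) :
    ∃ g : Vec2, 0 < g.1 + g.2 ∧ z - E • g ∈ wedge K F := by
  obtain ⟨hz1, hz2⟩ := le_coords_of_mem_wedge hFq hz
  by_cases htight : ∃ f ∈ F, det f z < slackLevel K E
  · obtain ⟨f, hf, hft⟩ := htight
    have hslack : slackLevel K E ≤ repBound K E := by
      rw [repBound]
      exact le_mul_of_one_le_left (by rw [slackLevel]; positivity) (by omega)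
    obtain ⟨g, hgf, hgK, hg⟩ := exists_pos_sum_of_det_pos (hF f hf) (z := z) (by omega) (by omega)
      (by linarith [hz f hf]) (by omega)
    refine ⟨g, hg, sub_smul_mem_wedge hE hF hz hgK fun f' hf' ht => ?_⟩
    suffices hdet : det f' f = 0 by
      rcases hgf with rfl | rfl
      · exact hdet
      · rw [det_comm, det_neg_left, neg_neg, det_comm, hdet, neg_zero]
    by_contra hne
    have habs (f : Vec2) (hf : f ∈ F) (hft : det f z < slackLevel K E) :
        |det f z| ≤ slackLevel K E := by
      rw [abs_of_nonneg (by linarith [hz f hf])]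
      exact hft.le
    obtain ⟨h1, h2⟩ :=
      bdd_of_abs_det_le (hF f' hf') (hF f hf) hne (habs f' hf' ht) (habs f hf hft)
    rw [abs_le] at h1 h2
    rw [repBound] at hl
    linarith
  · push Not at htight
    refine ⟨(1, 0), by simp, sub_smul_mem_wedge hE hF hz (hF _ (hFq (by simp [quadrantEdges])))
      fun f hf ht => absurd ht (not_lt.2 (htight f hf))⟩

theorem exists_small_rep (hK : 1 ≤ K) (hE : 1 ≤ E) (hF : ∀ f ∈ F, Bdd K f)
    (hFq : quadrantEdges ⊆ F) (hz : z ∈ wedge K F) :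
    ∃ y : Vec2, z + E • y ∈ wedge K F ∧ (z + E • y).1 + (z + E • y).2 ≤ repBound K E := by
  induction hm : (z.1 + z.2).toNat using Nat.strong_induction_on generalizing z with
  | _ m ih =>
  rcases le_or_gt (z.1 + z.2) (repBound K E) with hle | hlt
  · exact ⟨0, by simpa using hz, by simpa using hle⟩
  obtain ⟨g, hg, hgz⟩ := exists_descent hK (by omega) hF hFq hz hlt
  obtain ⟨h1, h2⟩ := le_coords_of_mem_wedge hFq hgz
  have hdesc : (z - E • g).1 + (z - E • g).2 < z.1 + z.2 := by
    have : 0 < E * (g.1 + g.2) := by positivity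
    simp only [Prod.fst_sub, Prod.snd_sub, Prod.smul_fst, Prod.smul_snd, smul_eq_mul]
    linarith
  obtain ⟨y, hy⟩ := ih _ (by omega) hgz rfl
  refine ⟨y - g, ?_⟩
  rwa [show z + E • (y - g) = z - E • g + E • y by rw [smul_sub]; abel]

end Wedge

/-! ### Reversed and mirrored systems -/

/-- The vector addition system with all transitions reversed. -/
def reverse {n : ℕ} (V : VASS n) : VASS n := V.image fun t => (t.2.2, -t.2.1, t.1)

/-- The vector addition system with exchanged coordinates. -/
def mirror {n : ℕ} (V : VASS n) : VASS n := V.image fun t => (t.1, t.2.1.swap, t.2.2)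

section Symmetry

variable {n : ℕ} {V : VASS n} {P : Set Vec2} {L : ℕ} {p q r : Fin n} {u v w : Vec2}
  {st : ℕ → Fin n} {c : ℕ → Vec2}

theorem mem_reverse_of_mem (h : (p, v, q) ∈ V) : (q, -v, p) ∈ reverse V :=
  Finset.mem_image_of_mem (fun t : Transition n => (t.2.2, -t.2.1, t.1)) h

theorem mem_mirror_of_mem (h : (p, v, q) ∈ V) : (p, v.swap, q) ∈ mirror V :=
  Finset.mem_image_of_mem (fun t : Transition n => (t.1, t.2.1.swap, t.2.2)) h

theorem reverse_reverse (V : VASS n) : reverse (reverse V) = V := by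
  simp [reverse, Finset.image_image, Function.comp_def]

theorem mirror_mirror (V : VASS n) : mirror (mirror V) = V := by
  simp [mirror, Finset.image_image, Function.comp_def]

theorem vassNorm_reverse (V : VASS n) : vassNorm (reverse V) = vassNorm V := by
  simp [vassNorm, reverse, Finset.sup_image, Function.comp_def, vnorm]

theorem vassNorm_mirror (V : VASS n) : vassNorm (mirror V) = vassNorm V := by
  simp [vassNorm, mirror, Finset.sup_image, Function.comp_def, vnorm, max_comm]

theorem Walk.to_reverse (h : Walk V P L p u q w) : Walk (reverse V) P L q w p u := by
  induction h with
  | nil h => exact .nil h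
  | @cons L p q r u v w hu ht hw ih =>
    refine ih.trans (.cons hw.source (mem_reverse_of_mem ht) ?_)
    rw [add_neg_cancel_right]
    exact .nil hu

theorem Walk.of_reverse (h : Walk (reverse V) P L p u q w) : Walk V P L q w p u := by
  simpa only [reverse_reverse] using h.to_reverse

theorem Walk.to_mirror (h : Walk V quadrant L p u q w) :
    Walk (mirror V) quadrant L p u.swap q w.swap := by
  induction h with
  | nil h => exact .nil (And.symm h)
  | cons hu ht _ ih => exact .cons (And.symm hu) (mem_mirror_of_mem ht) ih

theorem Walk.of_mirror (h : Walk (mirror V) quadrant L p u.swap q w.swap) :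
    Walk V quadrant L p u q w := by
  simpa only [mirror_mirror, Prod.swap_swap] using h.to_mirror

theorem IsTrace.to_mirror (h : IsTrace V quadrant L st c) :
    IsTrace (mirror V) quadrant L st fun i => (c i).swap :=
  ⟨fun i hi => mem_mirror_of_mem (h.step i hi), fun i hi => And.symm (h.mem i hi)⟩

end Symmetry

/-! ### Fat pairs of states -/

/-- From `(q, 0)` one can quickly reach `(r, z)`, for all `z` in some wedge around `c` which are
congruent to `c` for some modulus. -/
def Fat {n : ℕ} (V : VASS n) (q r : Fin n) (K : ℤ) (c : Vec2) : Prop :=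
  ∃ D : ℤ, 0 < D ∧ D ≤ K ∧ ∃ F : Set Vec2, (∀ f ∈ F, Bdd K f) ∧ quadrantEdges ⊆ F ∧
    c ∈ wedge K F ∧ ∀ y : Vec2, c + D • y ∈ wedge K F →
      ∃ L : ℕ, L ≤ K * ((c + D • y).1 + (c + D • y).2 + 1) ∧ Walk V quadrant L q 0 r (c + D • y)

section Fat

variable {n : ℕ} {V : VASS n} {q q' r : Fin n} {K : ℤ} {c : Vec2}

theorem Fat.exists_walk (h : Fat V q r K c) (h' : Fat (reverse V) q' r K c) :
    ∃ L : ℕ, (L : ℤ) ≤ 2 * (K * (repBound K (K * K) + 1)) ∧ Walk V quadrant L q 0 q' 0 := by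
  obtain ⟨D, hD, hDK, F, hF, hFq, hc, hreach⟩ := h
  obtain ⟨D', hD', hDK', F', hF', -, hc', hreach'⟩ := h'
  obtain ⟨y, hy, hsum⟩ := exists_small_rep (K := K) (E := D * D') (F := F ∪ F') (by omega)
    (Int.mul_pos hD hD') (fun f hf => hf.elim (hF f) (hF' f)) (hFq.trans subset_union_left)
    (fun f hf => hf.elim (hc f) (hc' f))
  obtain ⟨L, hL, hwalk⟩ := hreach (D' • y) fun f hf => by
    rw [smul_smul]
    exact hy f (.inl hf)
  obtain ⟨L', hL', hwalk'⟩ := hreach' (D • y) fun f hf => by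
    rw [smul_smul, mul_comm]
    exact hy f (.inr hf)
  rw [smul_smul] at hL hwalk
  rw [smul_smul, mul_comm D'] at hL' hwalk'
  refine ⟨L + L', ?_, hwalk.trans hwalk'.of_reverse⟩
  have hrep : repBound K (D * D') ≤ repBound K (K * K) := by
    have : 0 ≤ K := by omega
    simp only [repBound, slackLevel]
    gcongr
  have := mul_le_mul_of_nonneg_left (hsum.trans hrep) (show 0 ≤ K by omega)
  push_cast
  linarith

theorem Fat.of_mirror (h : Fat (mirror V) q r K c.swap) : Fat V q r K c := by
  obtain ⟨D, hD, hDK, F, hF, hFq, hc, hreach⟩ := h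
  have hmem (z : Vec2) : z.swap ∈ wedge K F ↔ z ∈ wedge K ((fun f => -f.swap) '' F) := by
    simp only [wedge, mem_ofPred_eq, forall_mem_image, det_neg_left]
    simp only [← det_swap, Prod.swap_swap]
  refine ⟨D, hD, hDK, _, ?_, ?_, (hmem c).1 hc, fun y hy => ?_⟩
  · rintro _ ⟨f, hf, rfl⟩
    exact (hF f hf).swap.neg
  · rintro _ (rfl | rfl)
    · exact ⟨(0, -1), hFq (by simp [quadrantEdges]), by simp⟩
    · exact ⟨(1, 0), hFq (by simp [quadrantEdges]), by simp⟩
  · obtain ⟨L, hL, hwalk⟩ := hreach y.swap ((hmem _).2 hy)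
    exact ⟨L, by simpa [add_comm, add_left_comm] using hL, hwalk.of_mirror (u := 0)⟩

end Fat

/-! ### Runs without increasing cycles -/

section Record

variable {f : ℕ → ℤ} {a M : ℤ} {s t : ℕ}

theorem exists_first_crossing (hst : s ≤ t) (hs : f s < a) (ht : a ≤ f t)
    (hstep : ∀ i, s ≤ i → i < t → f (i + 1) ≤ f i + M) :
    ∃ i, s < i ∧ i ≤ t ∧ a ≤ f i ∧ f i < a + M ∧ ∀ k, s ≤ k → k < i → f k < a := by
  obtain ⟨i, hsi, hit, hi, hbelow⟩ :=
    exists_first_le (f := fun i => -f i) (j := -a) hst (by simpa using ht) (by simpa using hs)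
  simp only [neg_le_neg_iff, neg_lt_neg_iff] at hi hbelow
  refine ⟨i, hsi, hit, hi, ?_, hbelow⟩
  have hprev := hstep (i - 1) (by omega) (by omega)
  rw [Nat.sub_add_cancel (by omega)] at hprev
  exact hprev.trans_lt (add_lt_add_left (hbelow _ (by omega) (by omega)) M)

/-- The keys are compared at the first times when `f` crosses the levels `a + l * M`, for
`l = 0, …, card ι`. -/
theorem exists_record_pair {ι : Type*} [Fintype ι] (key : ℕ → ι) (hM : 0 ≤ M) (hst : s ≤ t)
    (hs : f s < a) (hstep : ∀ i, s ≤ i → i < t → f (i + 1) ≤ f i + M)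
    (ht : a + Fintype.card ι * M ≤ f t) :
    ∃ i j, s ≤ i ∧ i < j ∧ j ≤ t ∧ key i = key j ∧ f i < f j ∧
      ∀ k, s ≤ k → k ≤ j → f k < a + (Fintype.card ι + 1) * M := by
  have hcross : ∀ l : Fin (Fintype.card ι + 1), ∃ i, s < i ∧ i ≤ t ∧ a + l * M ≤ f i ∧
      f i < a + l * M + M ∧ ∀ k, s ≤ k → k < i → f k < a + l * M := by
    intro l
    have hl : (l : ℤ) * M ≤ Fintype.card ι * M := by
      gcongr
      exact_mod_cast Nat.lt_succ_iff.1 l.2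
    have hl0 : 0 ≤ (l : ℤ) * M := by positivity
    exact exists_first_crossing hst (by linarith) (by linarith) hstep
  choose τ hsτ hτt hge hlt hbelow using hcross
  obtain ⟨x, y, hxy, he⟩ : ∃ x y, x < y ∧ key (τ x) = key (τ y) := by
    obtain ⟨x, y, hxy, he⟩ := Fintype.exists_ne_map_eq_of_card_lt (fun l => key (τ l)) (by simp)
    rcases hxy.lt_or_gt with h | h
    exacts [⟨x, y, h, he⟩, ⟨y, x, h, he.symm⟩]
  have hle : ((x : ℤ) + 1) * M ≤ y * M := by
    gcongr
    exact_mod_cast hxy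
  have hy : (y : ℤ) * M ≤ Fintype.card ι * M := by
    gcongr
    exact_mod_cast Nat.lt_succ_iff.1 y.2
  have hf : f (τ x) < f (τ y) := by linarith [hlt x, hge y]
  refine ⟨τ x, τ y, (hsτ x).le, ?_, hτt y, he, hf, fun k hsk hk => ?_⟩
  · rcases lt_trichotomy (τ x) (τ y) with h | h | h
    · exact h
    · exact absurd hf (by simp [h])
    · linarith [hbelow x _ (hsτ y).le h, hge x]
  · rcases hk.lt_or_eq with hk | rfl
    · linarith [hbelow y k hsk hk]
    · linarith [hlt y]

end Record

theorem eq_of_ofNat_toNat_eq {N : ℕ} [NeZero N] {x y : ℤ} (hx : 0 ≤ x) (hxN : x < N) (hy : 0 ≤ y)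
    (hyN : y < N) (h : Fin.ofNat N x.toNat = Fin.ofNat N y.toNat) : x = y := by
  simp only [Fin.ext_iff, Fin.ofNat] at h
  rw [Nat.mod_eq_of_lt (by omega), Nat.mod_eq_of_lt (by omega)] at h
  omega

section

variable {n : ℕ} {V : VASS n} {L M T : ℕ} {p q : Fin n} {u w : Vec2} {st : ℕ → Fin n}
  {c : ℕ → Vec2}

theorem Walk.shorten_box {N : ℕ} (h : Walk V (box N) L p u q w) :
    ∃ L', L' ≤ n * (N + 1) ^ 2 ∧ Walk V (box N) L' p u q w := by
  obtain ⟨L', w', hL', hw', h'⟩ := h.shorten (ι := Fin (N + 1) × Fin (N + 1)) ⊥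
    (fun x hx d hd => by rwa [AddSubmonoid.mem_bot.1 hd, add_zero])
    (fun x => (Fin.ofNat (N + 1) x.1.toNat, Fin.ofNat (N + 1) x.2.toNat))
    (fun {_ _ x y} _ hl hk => by
      obtain ⟨⟨hx1, hx2⟩, hx3, hx4⟩ := hl.source
      obtain ⟨⟨hy1, hy2⟩, hy3, hy4⟩ := hl.target
      obtain ⟨hk1, hk2⟩ := Prod.mk.inj hk
      rw [AddSubmonoid.mem_bot, sub_eq_zero]
      exact Prod.ext
        (eq_of_ofNat_toNat_eq hx1 (by push_cast; omega) hy1 (by push_cast; omega) hk1)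
        (eq_of_ofNat_toNat_eq hx3 (by push_cast; omega) hy3 (by push_cast; omega) hk2))
  rw [AddSubmonoid.mem_bot, sub_eq_zero] at hw'
  exact ⟨L', by simpa [sq] using hL', hw' ▸ h'⟩

/-- Up to index `T`, no configuration is strictly larger than an earlier one with the same state. -/
def NoIncrease (st : ℕ → Fin n) (c : ℕ → Vec2) (T : ℕ) : Prop :=
  ∀ i j, i < j → j ≤ T → st i = st j → ¬c i < c j

/-- The states visited up to index `T`. -/
def visited (st : ℕ → Fin n) (T : ℕ) : Finset (Fin n) := (Finset.range (T + 1)).image st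

theorem visited_mono {i : ℕ} (hi : i ≤ T) : visited st i ⊆ visited st T :=
  Finset.image_subset_image (Finset.range_mono (by omega))

theorem mem_visited {s : Fin n} : s ∈ visited st T ↔ ∃ i ≤ T, st i = s := by
  simp [visited]

theorem exists_first_visited_eq (st : ℕ → Fin n) (T : ℕ) :
    ∃ σ ≤ T, visited st σ = visited st T ∧
      ∀ i < σ, (visited st i).card < (visited st T).card := by
  classical
  have hex : ∃ σ, visited st σ = visited st T := ⟨T, rfl⟩
  have hle := Nat.find_min' hex rfl
  refine ⟨Nat.find hex, hle, Nat.find_spec hex, fun i hi => Finset.card_lt_card ?_⟩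
  exact (visited_mono (hi.le.trans hle)).ssubset_of_ne (Nat.find_min hex hi)

theorem NoIncrease.mono {T' : ℕ} (h : NoIncrease st c T) (hT : T' ≤ T) : NoIncrease st c T' :=
  fun i j hij hj => h i j hij (hj.trans hT)

theorem NoIncrease.min_lt (h : NoIncrease st c T) {i j : ℕ} (hij : i ≤ j) (hj : j ≤ T)
    (hst : st i = st j) {B : ℤ} (hB : max (c i).1 (c i).2 < B) : min (c j).1 (c j).2 < B := by
  rcases hij.lt_or_eq with hij | rfl
  · by_contra! hcon
    exact h i j hij hj hst (Prod.lt_iff.2 (.inl ⟨by omega, by omega⟩))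
  · exact min_le_max.trans_lt hB

theorem IsTrace.max_step_le {P : Set Vec2} (hM : vassNorm V ≤ M) (h : IsTrace V P L st c) {i : ℕ}
    (hi : i < L) :
    max (c (i + 1)).1 (c (i + 1)).2 ≤ max (c i).1 (c i).2 + M := by
  obtain ⟨h1, h2⟩ := h.bdd_step hM hi
  have := (le_abs_self _).trans h1
  have := (le_abs_self _).trans h2
  simp only [Prod.fst_sub, Prod.snd_sub] at *
  omega

theorem IsTrace.max_lt_add {P : Set Vec2} (hM : vassNorm V ≤ M) (htr : IsTrace V P L st c)
    (h0 : c 0 = 0) (hT : T ≤ L) {B : ℤ} (hB : 0 < B) (hlt : ∀ i < T, max (c i).1 (c i).2 < B)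
    {i : ℕ} (hi : i ≤ T) : max (c i).1 (c i).2 < B + M := by
  rcases i with _ | i
  · rw [h0, Prod.fst_zero, Prod.snd_zero, max_self]
    positivity
  · exact (htr.max_step_le hM (by omega)).trans_lt (add_lt_add_left (hlt i hi) _)

/-- While the smaller coordinate is below `B`, the larger one cannot cross `2 * n * B` levels. -/
theorem NoIncrease.max_lt_of_min_lt (h : NoIncrease st c T) (hM : vassNorm V ≤ M)
    (htr : IsTrace V quadrant L st c) (hT : T ≤ L) {σ B : ℕ} (hσ : σ ≤ T)
    (hmax : max (c σ).1 (c σ).2 < B)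
    (hmin : ∀ i, σ ≤ i → i ≤ T → min (c i).1 (c i).2 < B) :
    max (c T).1 (c T).2 < (1 + 2 * n * M) * B := by
  have hnonneg : ∀ i ≤ T, 0 ≤ min (c i).1 (c i).2 := fun i hi =>
    le_min (htr.mem i (by omega)).1 (htr.mem i (by omega)).2
  have : NeZero B := ⟨by rintro rfl; have := hnonneg σ hσ; push_cast at hmax; omega⟩
  by_contra! hcon
  obtain ⟨i, j, hi, hij, hj, hkey, hlt, -⟩ := exists_record_pair
    (f := fun i => max (c i).1 (c i).2) (a := B) (M := M)
    (fun i => (st i, decide ((c i).1 ≤ (c i).2), Fin.ofNat B (min (c i).1 (c i).2).toNat))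
    (by positivity) hσ hmax (fun i _ hi => htr.max_step_le hM (by omega))
    (by
      simp only [Fintype.card_prod, Fintype.card_fin, Fintype.card_bool]
      push_cast
      linarith)
  simp only [Prod.mk.injEq, decide_eq_decide] at hkey
  obtain ⟨hst, horder, hfin⟩ := hkey
  have heq := eq_of_ofNat_toNat_eq (hnonneg i (by omega)) (hmin i hi (by omega))
    (hnonneg j hj) (hmin j (by omega) hj) hfin
  exact h i j hij hj hst (Prod.lt_iff.2 (by omega))

/-- The factor by which the visit of one more state increases the bound on runs without increasing
cycles. -/
def growth (n M : ℕ) : ℕ := (1 + M) * (1 + 2 * n * M)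

theorem one_le_growth (n M : ℕ) : 1 ≤ growth n M :=
  Nat.one_le_iff_ne_zero.2 (by simp [growth])

theorem mul_add_le_growth_mul (n M : ℕ) {R : ℕ} (hR : 1 ≤ R) :
    (1 + 2 * n * M) * (R + M) ≤ growth n M * R := by
  calc (1 + 2 * n * M) * (R + M) ≤ (1 + 2 * n * M) * (R + M * R) := by
        gcongr
        exact Nat.le_mul_of_pos_right _ hR
    _ = growth n M * R := by rw [growth]; ring

theorem NoIncrease.max_lt_growth_pow (h : NoIncrease st c T) (hM : vassNorm V ≤ M)
    (htr : IsTrace V quadrant L st c) (h0 : c 0 = 0) (hT : T ≤ L) :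
    max (c T).1 (c T).2 < (growth n M ^ (visited st T).card : ℕ) := by
  induction T using Nat.strong_induction_on with
  | _ T ih =>
  obtain ⟨σ, hσT, hσ, hcard⟩ := exists_first_visited_eq st T
  obtain ⟨k, hk⟩ : ∃ k, (visited st T).card = k + 1 :=
    Nat.exists_eq_succ_of_ne_zero (Finset.card_ne_zero_of_mem (mem_visited.2 ⟨T, le_rfl, rfl⟩))
  set R := growth n M ^ k with hR
  have hR1 : 1 ≤ R := Nat.one_le_pow _ _ (one_le_growth n M)
  have hbefore : ∀ i < σ, max (c i).1 (c i).2 < R := fun i hi =>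
    (ih i (by omega) (h.mono (by omega)) (by omega)).trans_le <| by
      have := hcard i hi
      exact_mod_cast Nat.pow_le_pow_right (one_le_growth n M) (by omega)
  have hupto : ∀ i ≤ σ, max (c i).1 (c i).2 < (R + M : ℕ) := fun i hi => by
    push_cast
    exact htr.max_lt_add hM h0 (by omega) (by exact_mod_cast hR1) hbefore hi
  have hmin : ∀ i, σ ≤ i → i ≤ T → min (c i).1 (c i).2 < (R + M : ℕ) := by
    intro i hσi hi
    obtain ⟨i', hi', hst⟩ := mem_visited.1 (hσ ▸ mem_visited.2 ⟨i, hi, rfl⟩)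
    exact h.min_lt (by omega) hi hst (hupto i' hi')
  calc max (c T).1 (c T).2 < (1 + 2 * n * M) * (R + M : ℕ) :=
        h.max_lt_of_min_lt hM htr hT hσT (hupto σ le_rfl) hmin
    _ ≤ (growth n M ^ (visited st T).card : ℕ) := by
        rw [hk, pow_succ', ← hR]
        exact_mod_cast mul_add_le_growth_mul n M hR1

theorem exists_first_increase (h : ¬NoIncrease st c T) :
    ∃ t ≤ T, (∃ s < t, st s = st t ∧ c s < c t) ∧ ∀ i < t, NoIncrease st c i := by
  classical
  simp only [NoIncrease, not_forall, not_not] at h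
  obtain ⟨i, j, hij, hj, hst, hlt⟩ := h
  have hex : ∃ t, ∃ s < t, st s = st t ∧ c s < c t := ⟨j, i, hij, hst, hlt⟩
  exact ⟨Nat.find hex, (Nat.find_min' hex ⟨i, hij, hst, hlt⟩).trans hj, Nat.find_spec hex,
    fun i hi s t hst ht he hlt => Nat.find_min hex (ht.trans_lt hi) ⟨s, hst, he, hlt⟩⟩

theorem NoIncrease.max_lt (h : NoIncrease st c T) (hM : vassNorm V ≤ M)
    (htr : IsTrace V quadrant L st c) (h0 : c 0 = 0) (hT : T ≤ L) :
    max (c T).1 (c T).2 < (growth n M ^ n : ℕ) :=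
  (h.max_lt_growth_pow hM htr h0 hT).trans_le <| by
    exact_mod_cast Nat.pow_le_pow_right (one_le_growth n M)
      ((Finset.card_le_univ _).trans_eq (Fintype.card_fin n))

theorem exists_semipos_cycle (hM : vassNorm V ≤ M) (htr : IsTrace V quadrant L st c) (h0 : c 0 = 0)
    {t : ℕ} (ht : t ≤ L) (hbig : (growth n M ^ n : ℕ) ≤ (c t).1) {N : ℕ}
    (hN : growth n M ^ n + M ≤ N) :
    ∃ T ≤ t, ∃ a : Vec2, 0 < a ∧ Bdd N a ∧ c T ∈ box N ∧
      ∃ l l', l ≤ n * (N + 1) ^ 2 ∧ l' ≤ n * (N + 1) ^ 2 ∧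
        Walk V quadrant l (st 0) 0 (st T) (c T) ∧
        Walk V quadrant l' (st T) (c T) (st T) (c T + a) := by
  obtain ⟨T, hTt, ⟨s, hsT, hst, hlt⟩, hno⟩ := exists_first_increase (st := st) (c := c) (T := t)
    fun hno => absurd (hno.max_lt hM htr h0 ht) (not_lt.2 (hbig.trans (le_max_left _ _)))
  have hbox : ∀ i ≤ T, c i ∈ box N := by
    intro i hi
    obtain ⟨h1, h2⟩ := htr.mem i (by omega)
    have hmax := htr.max_lt_add hM h0 (by omega)
      (by exact_mod_cast Nat.pow_pos (one_le_growth n M))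
      (fun i hi => (hno i hi).max_lt hM htr h0 (by omega)) hi
    have hmaxN : max (c i).1 (c i).2 ≤ N := hmax.le.trans (by exact_mod_cast hN)
    exact ⟨⟨h1, (le_max_left _ _).trans hmaxN⟩, h2, (le_max_right _ _).trans hmaxN⟩
  have htr' : IsTrace V (box N) T st c := ⟨fun i hi => htr.step i (by omega), hbox⟩
  obtain ⟨l, hl, hwalk⟩ := (htr'.walk (Nat.zero_le T) le_rfl).shorten_box
  obtain ⟨l', hl', hcycle⟩ := (htr'.walk hsT.le le_rfl).shorten_box
  have hpos := sub_pos.2 hlt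
  obtain ⟨h1, h2⟩ := hpos.le
  refine ⟨T, hTt, c T - c s, hpos, ?_, hbox T le_rfl, l, l', hl, hl', ?_, ?_⟩
  · obtain ⟨⟨hs1, -⟩, hs2, -⟩ := hbox s hsT.le
    obtain ⟨⟨-, hT1⟩, -, hT2⟩ := hbox T le_rfl
    exact ⟨abs_le.2 (by simp only [Prod.fst_sub, Prod.fst_zero] at *; omega),
      abs_le.2 (by simp only [Prod.snd_sub, Prod.snd_zero] at *; omega)⟩
  · rw [h0] at hwalk
    exact hwalk.mono fun _ => mem_quadrant_of_mem_box
  · have := hcycle.shift (P' := quadrant) (c T - c s) fun x hx =>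
      ⟨add_nonneg (mem_quadrant_of_mem_box hx).1 h1, add_nonneg (mem_quadrant_of_mem_box hx).2 h2⟩
    rwa [add_sub_cancel, hst] at this

end

/-! ### Engines -/

/-- From `(q, 0)` one reaches, in linear length, the state `p` with all vectors `e + k • b + m • a`,
where `b` is positive, `a` is nonnegative and `x` lies on the line through `e` with direction `a`.
The point `x` does not lie far to the left of `b` unless `a` is vertical, and it does not lie far to
the right of `b` unless `a` is horizontal. -/
structure Engine {n : ℕ} (V : VASS n) (q : Fin n) (B : ℤ) (p : Fin n) (x b a e : Vec2) : Prop where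
  pos : Pos b
  bdd_pos : Bdd B b
  nonneg : 0 ≤ a
  bdd_nonneg : Bdd B a
  base_nonneg : 0 ≤ e
  bdd_base : Bdd B e
  exists_eq_add : ∃ j : ℤ, x = e + j • a
  exists_walk : ∀ k m : ℕ, ∃ L : ℕ, L ≤ B * (1 + k + m) ∧
    Walk V quadrant L q 0 p (e + k • b + m • a)
  det_le : det b x ≤ B ∨ Vert a
  neg_le_det : -B ≤ det b x ∨ Horiz a

/-- The vertical strip `[0, X] × ℤ`. -/
def strip (X : ℕ) : Set Vec2 := {x | 0 ≤ x.1 ∧ x.1 ≤ X}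

/-- A bound for all quantities in an engine whose walks use a box of size `N` and a strip of width
`X`, and have pieces of length at most `Q` in the box and at most `S` in the strip. -/
def engineSize {R : Type*} [CommSemiring R] (M N X S Q : R) : R :=
  3 * (S * M + 1) * (N + 1) * (X + S + Q + 1)

/-- The size of the engines that can be found on runs which leave the box of size `N`. -/
def engineBound {R : Type*} [CommSemiring R] (n M N : R) : R :=
  engineSize M N (N + (n + 1) * M) (n * ((N + (n + 1) * M + 1) * N)) (n * (N + 1) ^ 2)

section

variable {n : ℕ} {V : VASS n} {L M N X S Q l l' l₁ l₂ h : ℕ} {p q r : Fin n}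
  {a b d e g u w x : Vec2} {st : ℕ → Fin n} {c : ℕ → Vec2}

theorem Engine.of_mirror {B : ℤ} (h : Engine (mirror V) q B p x.swap b.swap a.swap e.swap) :
    Engine V q B p x b a e where
  pos := And.symm h.pos
  bdd_pos := h.bdd_pos.swap
  nonneg := And.symm h.nonneg
  bdd_nonneg := h.bdd_nonneg.swap
  base_nonneg := And.symm h.base_nonneg
  bdd_base := h.bdd_base.swap
  exists_eq_add := h.exists_eq_add.imp fun _ hj => by rw [← x.swap_swap, hj]; rfl
  exists_walk k m := by
    obtain ⟨l, hl, hwalk⟩ := h.exists_walk k m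
    exact ⟨l, hl, hwalk.of_mirror (u := 0)⟩
  det_le := h.neg_le_det.imp (fun h => by rw [det_swap] at h; linarith) And.symm
  neg_le_det := h.det_le.imp (fun h => by rw [det_swap] at h; linarith) And.symm

theorem Engine.to_mirror {B : ℤ} (h : Engine V q B p x b a e) :
    Engine (mirror V) q B p x.swap b.swap a.swap e.swap :=
  .of_mirror (by simpa only [mirror_mirror, Prod.swap_swap] using h)

theorem Walk.shorten_strip [NeZero h] (hw : Walk V (strip X) L p u q w) :
    ∃ L' ≤ n * ((X + 1) * h), ∃ j : ℤ, Walk V (strip X) L' p u q (w + j • (0, (h : ℤ))) := by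
  obtain ⟨L', w', hL', hw', hwalk⟩ := hw.shorten (ι := Fin (X + 1) × ZMod h)
    (AddSubgroup.zmultiples ((0, h) : Vec2)).toAddSubmonoid
    (by
      rintro x hx _ ⟨j, rfl⟩
      simpa [strip] using hx)
    (fun x => (Fin.ofNat (X + 1) x.1.toNat, (x.2 : ZMod h)))
    (fun {_ _ x y} _ hl hk => by
      obtain ⟨hx1, hx2⟩ := hl.source
      obtain ⟨hy1, hy2⟩ := hl.target
      obtain ⟨hk1, hk2⟩ := Prod.mk.inj hk
      obtain ⟨j, hj⟩ := (ZMod.intCast_eq_intCast_iff_dvd_sub y.2 x.2 h).1 hk2.symm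
      have := eq_of_ofNat_toNat_eq hx1 (by push_cast; omega) hy1 (by push_cast; omega) hk1
      exact ⟨j, Prod.ext (by simp [this]) (by simp [hj, mul_comm])⟩)
  obtain ⟨j, hj⟩ := hw'
  exact ⟨L', by simpa using hL', j, by rwa [← sub_eq_iff_eq_add'.1 hj.symm]⟩

theorem Walk.enable_of_le_fst (hM : vassNorm V ≤ M) (h : Walk V {x | 0 ≤ x.1} L p u q w)
    (h1 : u.1 ≤ d.1) (h2 : L * M ≤ d.2) : Walk V quadrant L p d q (d + (w - u)) := by
  have := (h.inter_bdd hM).shift (P' := quadrant) (d - u) fun x ⟨hx, hxu⟩ => by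
    have h3 := (abs_le.1 hxu.2).1
    simp only [mem_ofPred_eq, Prod.snd_sub] at hx h3
    constructor <;> simp only [Prod.fst_add, Prod.fst_sub, Prod.snd_add, Prod.snd_sub] <;> linarith
  rwa [add_sub_cancel, show w + (d - u) = d + (w - u) by abel] at this

theorem Walk.iterate_of_le_fst (hM : vassNorm V ≤ M)
    (h : Walk V {x | 0 ≤ x.1} L p u p (u + g)) (hg : 0 ≤ g.1) (k : ℕ) (h1 : u.1 ≤ d.1)
    (h2 : L * M ≤ d.2) (h2' : L * M ≤ (d + k • g).2) :
    Walk V quadrant (k * L) p d p (d + k • g) := by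
  have hLM : (0 : ℤ) ≤ L * M := by positivity
  refine .iterate ⟨h.source.trans h1, hLM.trans h2⟩ fun i hi => ?_
  have hi1 : 0 ≤ (i • g).1 := nsmul_nonneg hg i
  have := h.enable_of_le_fst hM (d := d + i • g) (h1.trans (le_add_of_nonneg_right hi1))
    (by simpa using le_add_mul_of_le hi.le h2 (by simpa using h2'))
  rwa [add_sub_cancel_left] at this

/-- The vertical cycle is iterated first, so that the middle piece and the cycle with effect `g`,
which are only known to respect the first coordinate, become enabled. -/
theorem Walk.trans_strip (hM : vassNorm V ≤ M) (hh : 0 < h) (hw : Walk V quadrant l q 0 r u)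
    (hup : Walk V quadrant l' r u r (u + (0, (h : ℤ))))
    (hmid : Walk V {x | 0 ≤ x.1} l₁ r u p w)
    (hcyc : Walk V {x | 0 ≤ x.1} l₂ p x p (x + g)) (hx : x.1 = w.1) (hg : 0 ≤ g.1) {C : ℕ}
    (hl₁ : l₁ * M ≤ C) (hl₂ : l₂ * M ≤ C) (k m : ℕ) :
    Walk V quadrant (l + (2 * C + k * (C + 1) + m) * l' + l₁ + k * l₂) q 0 p
      (w + (2 * C + k * (C + 1) + m) • (0, (h : ℤ)) + k • g) := by
  set R := 2 * C + k * (C + 1) + m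
  have hRh : 2 * (C : ℤ) + k * (C + 1) ≤ R * h := by
    exact_mod_cast (Nat.le_add_right _ m).trans (Nat.le_mul_of_pos_right R hh)
  have hl₁C : (l₁ * M : ℤ) ≤ C := by exact_mod_cast hl₁
  have hl₂C : (l₂ * M : ℤ) ≤ C := by exact_mod_cast hl₂
  have hu := hw.target.2
  have hw2 := (abs_le.1 (hmid.bdd hM).2).1
  have hg2 := (abs_le.1 (hcyc.bdd hM).2).1
  rw [add_sub_cancel_left] at hg2
  rw [Prod.snd_sub] at hw2
  have hkC : 0 ≤ (k : ℤ) * (C + 1) := by positivity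
  have hkg : (k : ℤ) * -C ≤ k * g.2 := by gcongr; linarith
  have hclimb := hw.trans (hup.iterate_of_nonneg (Prod.mk_le_mk.2 ⟨le_rfl, by positivity⟩) R)
  have hacross := hmid.enable_of_le_fst hM (d := u + R • (0, (h : ℤ))) (by simp)
    (by simp; linarith [hl₁C])
  rw [show u + R • (0, (h : ℤ)) + (w - u) = w + R • (0, (h : ℤ)) by abel] at hacross
  exact (hclimb.trans hacross).trans (hcyc.iterate_of_le_fst hM hg k (by simp [hx])
    (by simp; linarith [hl₂C]) (by simp; linarith))

theorem engineSize_bounds (M N X S Q : ℕ) :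
    X ≤ engineSize M N X S Q ∧ 3 * ((S * M + 1) * (N + 1)) ≤ engineSize M N X S Q ∧
      3 * ((S * M + 1) * (N + 1)) * X ≤ engineSize M N X S Q ∧
      3 * (S * M + 1) * (S + Q) ≤ engineSize M N X S Q := by
  set A := (S * M + 1) * (N + 1)
  have hA : 0 < A := by positivity
  have hsize : engineSize M N X S Q = 3 * A * (X + S + Q + 1) := by rw [engineSize, mul_assoc 3]
  rw [hsize]
  refine ⟨?_, Nat.le_mul_of_pos_right _ (by omega), Nat.mul_le_mul_left _ (by omega),
    Nat.mul_le_mul (Nat.mul_le_mul_left 3 (Nat.le_mul_of_pos_right _ N.succ_pos)) (by omega)⟩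
  exact (by omega : X ≤ X + S + Q + 1).trans (Nat.le_mul_of_pos_left _ (by omega))

theorem length_le_engineSize (hl : l ≤ Q) (hl' : l' ≤ Q) (hl₁ : l₁ ≤ S) (hl₂ : l₂ ≤ S) (k m : ℕ) :
    l + (2 * (S * M) + k * (S * M + 1) + m) * l' + l₁ + k * l₂ ≤
      engineSize M N X S Q * (1 + k + m) := by
  set C := S * M
  calc l + (2 * C + k * (C + 1) + m) * l' + l₁ + k * l₂
      ≤ Q + (2 * C + k * (C + 1) + m) * Q + S + k * S := by gcongr
    _ ≤ Q + (2 * C + k * (C + 1) + m) * Q + S + k * S +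
        (Q * (C + 2 + k * (2 * C + 2) + m * (3 * C + 2)) + S * (3 * C + 2) * (1 + k + m) + S * m) :=
      Nat.le_add_right _ _
    _ = 3 * (C + 1) * (S + Q) * (1 + k + m) := by ring
    _ ≤ engineSize M N X S Q * (1 + k + m) := by
        gcongr
        exact (engineSize_bounds M N X S Q).2.2.2

theorem bounds_add_vertical {B C : ℕ} (hh : 0 < h) (hhN : h ≤ N) (hg1 : 0 < g.1) (hg2 : |g.2| ≤ C)
    (hx : 0 ≤ x) (hX : x.1 + g.1 ≤ X) (hXB : X ≤ B) (hNB : (C + 1) * (N + 1) ≤ B)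
    (hXNB : (C + 1) * (N + 1) * X ≤ B) :
    Pos (g + (C + 1) • (0, (h : ℤ))) ∧ Bdd B (g + (C + 1) • (0, (h : ℤ))) ∧
      -B ≤ det (g + (C + 1) • (0, (h : ℤ))) x := by
  obtain ⟨hx1, hx2⟩ := hx
  simp only [Prod.fst_zero, Prod.snd_zero] at hx1 hx2
  obtain ⟨hg2l, hg2r⟩ := abs_le.1 hg2
  zify at hXB hNB hXNB
  have hCh : (C : ℤ) ≤ C * h := by exact_mod_cast Nat.le_mul_of_pos_right C hh
  have hChN : (C : ℤ) * h ≤ C * N := by gcongr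
  have hb2 : 0 < g.2 + (C + 1) * h := by linarith
  have hb2N : g.2 + (C + 1) * h ≤ (C + 1) * (N + 1) := by linarith
  have hb2x : (g.2 + (C + 1) * h) * x.1 ≤ (C + 1) * (N + 1) * X := by gcongr; linarith
  have hgx : 0 ≤ g.1 * x.2 := by positivity
  refine ⟨⟨by simpa using hg1, by simpa using hb2⟩,
    ⟨abs_le.2 ?_, abs_le.2 ?_⟩, by simp [det]; linarith⟩
  all_goals constructor <;> simp <;> linarith

theorem engine_of_strip (hM : vassNorm V ≤ M) (hh : 0 < h) (hhN : h ≤ N) (hu : u ∈ box N)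
    (hl : l ≤ Q) (hl' : l' ≤ Q) (hl₁ : l₁ ≤ S) (hl₂ : l₂ ≤ S) (hw : Walk V quadrant l q 0 r u)
    (hup : Walk V quadrant l' r u r (u + (0, (h : ℤ)))) {j : ℤ}
    (hmid : Walk V (strip X) l₁ r u p (x + j • (0, (h : ℤ))))
    (hcyc : Walk V (strip X) l₂ p x p (x + g)) (hx : 0 ≤ x.2) (hg : 0 < g.1) :
    Engine V q (engineSize M N X S Q : ℕ) p x (g + (S * M + 1) • (0, (h : ℤ))) (0, (h : ℤ))
      (x + j • (0, (h : ℤ)) + (2 * (S * M)) • (0, (h : ℤ))) := by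
  obtain ⟨hXB, hAB, hXAB, -⟩ := engineSize_bounds M N X S Q
  rw [mul_assoc] at hXAB
  set w := x + j • ((0, h) : Vec2) with hw_def
  set C := S * M
  set B := engineSize M N X S Q
  have hl₁C : l₁ * M ≤ C := Nat.mul_le_mul_right M hl₁
  have hl₂C : l₂ * M ≤ C := Nat.mul_le_mul_right M hl₂
  have hw2 := abs_le.1 ((hmid.bdd hM).mono (C := (C : ℤ)) (by exact_mod_cast hl₁C)).2
  have hg2 := ((hcyc.bdd hM).mono (C := (C : ℤ)) (by exact_mod_cast hl₂C)).2
  rw [add_sub_cancel_left] at hg2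
  rw [Prod.snd_sub] at hw2
  obtain ⟨hw0, hwX⟩ := hmid.target
  obtain ⟨hbpos, hbB, hdet⟩ := bounds_add_vertical hh hhN hg hg2 ⟨hcyc.source.1, hx⟩
    hcyc.target.2 hXB ((Nat.le_mul_of_pos_left _ three_pos).trans hAB)
    ((Nat.le_mul_of_pos_left _ three_pos).trans hXAB)
  obtain ⟨-, hu0, huN⟩ := hu
  zify at hXB hAB hh hhN
  have hCh : (C : ℤ) ≤ C * h := le_mul_of_one_le_right (by positivity) hh
  have hChN : (C : ℤ) * h ≤ C * N := by gcongr
  have hhalf : strip X ⊆ {x | 0 ≤ x.1} := fun _ hx => hx.1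
  exact
    { pos := hbpos
      bdd_pos := hbB
      nonneg := Prod.mk_le_mk.2 ⟨le_rfl, hh.le⟩
      bdd_nonneg := ⟨by simp, by simp; linarith⟩
      base_nonneg := ⟨by simpa using hw0, by simp; linarith⟩
      bdd_base := ⟨abs_le.2 (by constructor <;> simp <;> linarith),
        abs_le.2 (by constructor <;> simp <;> linarith)⟩
      exists_eq_add := ⟨-j - 2 * C, by simp only [hw_def]; module⟩
      exists_walk := fun k m => by
        have hwalk := hw.trans_strip hM (by exact_mod_cast hh) hup (hmid.mono hhalf)
          (hcyc.mono hhalf) (by simp [hw_def]) hg.le hl₁C hl₂C k m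
        refine ⟨_, mod_cast length_le_engineSize hl hl' hl₁ hl₂ k m, ?_⟩
        convert hwalk using 1
        module
      det_le := .inr ⟨rfl, hh⟩
      neg_le_det := .inl hdet }

/-- If the first coordinate becomes large, then there is a cycle in a vertical strip that increases
it. Together with a vertical cycle at the beginning it forms an engine. -/
theorem exists_engine_of_vertical (hM : vassNorm V ≤ M) (htr : IsTrace V quadrant L st c) {t T : ℕ}
    (hT : T ≤ t) (ht : t ≤ L) (hbig : N + n * M < (c t).1) (hbox : c T ∈ box N) (hh : 0 < h)
    (hhN : h ≤ N) (hl : l ≤ n * (N + 1) ^ 2) (hl' : l' ≤ n * (N + 1) ^ 2)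
    (hw : Walk V quadrant l q 0 (st T) (c T))
    (hup : Walk V quadrant l' (st T) (c T) (st T) (c T + (0, (h : ℤ)))) :
    ∃ s ≤ t, ∃ b a e, Engine V q (engineBound n M N : ℕ) (st s) (c s) b a e := by
  obtain ⟨i, i', hi, hii, hi', hst, hlt, hX⟩ := exists_record_pair (f := fun i => (c i).1)
    (a := N + 1) (M := M) st (by positivity) hT (by have := hbox.1.2; omega)
    (fun i _ hi => by
      have := (le_abs_self _).trans (htr.bdd_step hM (i := i) (by omega)).1
      simp only [Prod.fst_sub] at this
      omega)
    (by rw [Fintype.card_fin]; omega)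
  have hstrip : ∀ m, T ≤ m → m ≤ i' → c m ∈ strip (N + (n + 1) * M) := fun m hTm hm =>
    ⟨(htr.mem m (by omega)).1, by
      have := hX m hTm hm
      rw [Fintype.card_fin] at this
      push_cast
      omega⟩
  have : NeZero h := ⟨hh.ne'⟩
  obtain ⟨l₁, hl₁, j, hmid⟩ := (htr.walk_of_mem hi (by omega) fun m h1 h2 =>
    hstrip m h1 (by omega)).shorten_strip (h := h)
  obtain ⟨l₂, hl₂, j', hcyc⟩ := (htr.walk_of_mem hii.le (by omega) fun m h1 h2 =>
    hstrip m (by omega) h2).shorten_strip (h := h)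
  rw [← hst, ← add_sub_cancel (c i) (c i' + _)] at hcyc
  have hlen : n * ((N + (n + 1) * M + 1) * h) ≤ n * ((N + (n + 1) * M + 1) * N) := by gcongr
  exact ⟨i, by omega, _, _, _, engine_of_strip hM hh hhN hbox hl hl' (hl₁.trans hlen)
    (hl₂.trans hlen) hw hup hmid hcyc (htr.mem i (by omega)).2 (by simpa using hlt)⟩

theorem engine_of_cycle (ha : Pos a) (hab : Bdd N a) (hx : x ∈ box N) (hNX : N ≤ X) (hl : l ≤ Q)
    (hl' : l' ≤ Q) (hw : Walk V quadrant l q 0 p x) (hcyc : Walk V quadrant l' p x p (x + a)) :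
    Engine V q (engineSize M N X S Q : ℕ) p x a 0 x := by
  obtain ⟨hXB, -, hXAB, -⟩ := engineSize_bounds M N X S Q
  have hNB : (N : ℤ) ≤ (engineSize M N X S Q : ℕ) := by exact_mod_cast hNX.trans hXB
  obtain ⟨⟨hx1, hxN1⟩, hx2, hxN2⟩ := hx
  have hxN : Bdd N x := ⟨by rwa [abs_of_nonneg hx1], by rwa [abs_of_nonneg hx2]⟩
  have hNN : 2 * N * N ≤ engineSize M N X S Q := by
    refine le_trans ?_ hXAB
    gcongr
    · norm_num
    · exact N.le_succ.trans (Nat.le_mul_of_pos_left _ (by omega))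
  have hNN' : (2 * N * N : ℤ) ≤ (engineSize M N X S Q : ℕ) := by exact_mod_cast hNN
  have hdet := abs_le.1 ((abs_det_le hab hxN).trans hNN')
  exact
    { pos := ha
      bdd_pos := hab.mono hNB
      nonneg := le_rfl
      bdd_nonneg := bdd_zero (by positivity)
      base_nonneg := ⟨hx1, hx2⟩
      bdd_base := hxN.mono hNB
      exists_eq_add := ⟨0, by simp⟩
      exists_walk := fun k m => by
        refine ⟨l + k * l', ?_,
          by simpa using hw.trans (hcyc.iterate_of_nonneg ⟨ha.1.le, ha.2.le⟩ k)⟩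
        refine mod_cast le_trans ?_ (length_le_engineSize (N := N) (X := X) hl hl' (Nat.zero_le S)
          (Nat.zero_le S) k m)
        have hk : k ≤ k * (S * M + 1) := Nat.le_mul_of_pos_right k (Nat.succ_pos _)
        calc l + k * l' ≤ l + (2 * (S * M) + k * (S * M + 1) + m) * l' := by gcongr; omega
          _ = _ := by simp
      det_le := .inl hdet.2
      neg_le_det := .inl hdet.1 }

theorem exists_engine (hM : vassNorm V ≤ M) (htr : IsTrace V quadrant L st c) (h0 : c 0 = 0) {t : ℕ}
    (ht : t ≤ L) (hN : growth n M ^ n + M ≤ N) (h1 : N + n * M < (c t).1)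
    (h2 : N + n * M < (c t).2) :
    ∃ T ≤ t, ∃ b a e, Engine V (st 0) (engineBound n M N : ℕ) (st T) (c T) b a e := by
  have hbig : growth n M ^ n ≤ N + n * M := by omega
  obtain ⟨T, hT, a, ha, haN, hbox, l, l', hl, hl', hw, hcyc⟩ :=
    exists_semipos_cycle hM htr h0 ht (le_trans (by exact_mod_cast hbig) h1.le) hN
  obtain ⟨ha1, ha2⟩ : 0 ≤ a.1 ∧ 0 ≤ a.2 := ha.le
  have ha1N := (le_abs_self _).trans haN.1
  have ha2N := (le_abs_self _).trans haN.2
  have hne : a.1 ≠ 0 ∨ a.2 ≠ 0 := by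
    by_contra! h
    exact ha.ne' (Prod.ext h.1 h.2)
  rcases ha1.eq_or_lt with ha1' | ha1'
  · have h : a = (0, (a.2.toNat : ℤ)) := Prod.ext ha1'.symm (Int.toNat_of_nonneg ha2).symm
    exact exists_engine_of_vertical hM htr hT ht h1 hbox (by omega) (by omega) hl hl' hw (h ▸ hcyc)
  rcases ha2.eq_or_lt with ha2' | ha2'
  · have h : a.swap = (0, (a.1.toNat : ℤ)) := Prod.ext ha2'.symm (Int.toNat_of_nonneg ha1).symm
    have hcyc' := hcyc.to_mirror
    rw [Prod.swap_add, h] at hcyc'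
    obtain ⟨s, hs, b, a', e, heng⟩ := exists_engine_of_vertical ((vassNorm_mirror V).trans_le hM)
      htr.to_mirror hT ht h2 ⟨hbox.2, hbox.1⟩ (by omega) (by omega) hl hl' hw.to_mirror
      hcyc'
    exact ⟨s, hs, b.swap, a'.swap, e.swap, Engine.of_mirror heng⟩
  · exact ⟨T, hT, a, 0, c T, engine_of_cycle ⟨ha1', ha2'⟩ haN hbox (Nat.le_add_right _ _) hl hl' hw
      hcyc⟩

end

/-! ### Sequences of cycles -/

section

variable {n : ℕ} {V V' : VASS n} {P : Set Vec2} {L M : ℕ} {p q s : Fin n} {b g h u w z : Vec2}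
  {st : ℕ → Fin n} {c : ℕ → Vec2} {B G Y : ℤ}

/-- The vector `w` is the effect of a cycle of length at most `n` at the state `s`, where `n` is the
number of states. -/
def ShortCycle (V : VASS n) (s : Fin n) (w : Vec2) : Prop := ∃ l ≤ n, Walk V univ l s 0 s w

theorem ShortCycle.bdd (hM : vassNorm V ≤ M) (h : ShortCycle V s w) : Bdd (n * M) w := by
  obtain ⟨l, hl, hw⟩ := h
  simpa using (hw.bdd hM).mono (C := n * M) (by gcongr)

theorem Walk.mono_left (hV : V ⊆ V') (h : Walk V P L p u q w) : Walk V' P L p u q w := by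
  induction h with
  | nil h => exact .nil h
  | cons hu ht _ ih => exact .cons hu (hV ht) ih

theorem Walk.det_le (hM : vassNorm V ≤ M) (hg : Bdd G g)
    (hc : ∀ s w, ShortCycle V s w → det g w ≤ 0) (h : Walk V P L p u q w) :
    det g w ≤ det g u + 2 * G * (n * M) := by
  obtain ⟨L', w', hL', hw', hwalk⟩ := h.free.shorten (P := univ) (ι := Unit)
    ((AddSubmonoid.nonneg ℤ).comap (AddMonoidHom.mk' (det g) (det_add g)))
    (fun _ _ _ _ => trivial) (fun _ => ()) (fun {l s x y} hl hloop _ => by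
      have := hc s _ ⟨l, by simpa using hl, hloop.free⟩
      change 0 ≤ det g (x - y)
      rw [det_sub] at this ⊢
      linarith)
  replace hw' : 0 ≤ det g (w' - (w - u)) := hw'
  have hbdd : Bdd (n * M) w' := by
    simpa using (hwalk.bdd hM).mono (C := n * M) (by gcongr; simpa using hL')
  have := (le_abs_self _).trans (abs_det_le hg hbdd)
  rw [det_sub, det_sub] at hw'
  linarith

theorem IsTrace.take (h : IsTrace V P L st c) {i : ℕ} (hi : i ≤ L) : IsTrace V P i st c :=
  ⟨fun j hj => h.step j (hj.trans_le hi), fun j hj => h.mem j (hj.trans hi)⟩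

theorem IsTrace.drop {i : ℕ} (h : IsTrace V P (i + L) st c) :
    IsTrace V P L (fun j => st (i + j)) (fun j => c (i + j)) :=
  ⟨fun j hj => h.step (i + j) (by omega), fun j hj => h.mem (i + j) (by omega)⟩

theorem IsTrace.filter_visited (h : IsTrace V P L st c) :
    IsTrace {e ∈ V | e.1 ∈ visited st L} P L st c :=
  ⟨fun i hi => Finset.mem_filter.2 ⟨h.step i hi, mem_visited.2 ⟨i, hi.le, rfl⟩⟩, h.mem⟩

theorem ShortCycle.of_filter {S : Finset (Fin n)} (h : ShortCycle {e ∈ V | e.1 ∈ S} s w) :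
    w = 0 ∨ s ∈ S ∧ ShortCycle V s w := by
  obtain ⟨l, hl, hw⟩ := h
  have hw' : Walk V univ l s 0 s w := hw.mono_left (Finset.filter_subset _ _)
  cases hw with
  | nil _ => exact .inl rfl
  | cons _ ht _ => exact .inr ⟨(Finset.mem_filter.1 ht).2, _, hl, hw'⟩

theorem IsTrace.det_le (hM : vassNorm V ≤ M) (htr : IsTrace V P L st c) (hg : Bdd G g)
    (hc : ∀ s ∈ visited st L, ∀ w, ShortCycle V s w → det g w ≤ 0) :
    det g (c L) ≤ det g (c 0) + 2 * G * (n * M) := by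
  refine Walk.det_le ((Finset.sup_mono (Finset.filter_subset _ _)).trans hM) hg (fun s w hw => ?_)
    (htr.filter_visited.walk L.zero_le le_rfl)
  rcases hw.of_filter with rfl | ⟨hs, hw⟩
  · simp [det]
  · exact hc s hs w hw

/-- The run visits a nonnegative cycle `w` and then a cycle `u` such that rotating counterclockwise
from `b` through `w` to `u` takes at least half a turn. -/
def HasTurn (V : VASS n) (st : ℕ → Fin n) (b : Vec2) (L : ℕ) : Prop :=
  ∃ i j w u, i ≤ j ∧ j ≤ L ∧ ShortCycle V (st i) w ∧ ShortCycle V (st j) u ∧ 0 < det b w ∧ 0 ≤ w ∧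
    0 < det w u ∧ det b u ≤ 0

theorem HasTurn.mono {L' : ℕ} (h : HasTurn V st b L) (hL : L ≤ L') : HasTurn V st b L' := by
  obtain ⟨i, j, w, u, hij, hj, h⟩ := h
  exact ⟨i, j, w, u, hij, hj.trans hL, h⟩

theorem HasTurn.of_drop {i : ℕ} (h : HasTurn V (fun j => st (i + j)) b L) :
    HasTurn V st b (i + L) := by
  obtain ⟨j, k, w, u, hjk, hk, h⟩ := h
  exact ⟨i + j, i + k, w, u, by omega, by omega, h⟩

theorem finite_of_bdd {S : Set Vec2} (hS : ∀ w ∈ S, Bdd B w) : S.Finite :=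
  ((finite_Icc (-B) B).prod (finite_Icc (-B) B)).subset fun w hw =>
    ⟨abs_le.1 (hS w hw).1, abs_le.1 (hS w hw).2⟩

theorem exists_ccw_maximal {S : Set Vec2} (hS : S.Finite) (hne : S.Nonempty)
    (hpos : ∀ w ∈ S, 0 < det b w) : ∃ h ∈ S, ∀ w ∈ S, det h w ≤ 0 := by
  let f : Vec2 → ℤ := fun w => b.1 * w.1 + b.2 * w.2
  obtain ⟨h, hh, hmin⟩ := exists_min_image S (fun w => (f w : ℚ) / det b w) hS hne
  refine ⟨h, hh, fun w hw => ?_⟩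
  have hbh : (0 : ℚ) < det b h := by exact_mod_cast hpos h hh
  have hbw : (0 : ℚ) < det b w := by exact_mod_cast hpos w hw
  have hle : f h * det b w ≤ f w * det b h := by
    exact_mod_cast (div_le_div_iff₀ hbh hbw).1 (hmin w hw)
  have hb : 0 < b.1 ^ 2 + b.2 ^ 2 := by
    by_contra! hb
    obtain ⟨h1, h2⟩ : b.1 = 0 ∧ b.2 = 0 := by constructor <;> nlinarith
    simpa [det, h1, h2] using hpos h hh
  have hid : f h * det b w - f w * det b h = (b.1 ^ 2 + b.2 ^ 2) * det h w := by
    simp only [f, det]; ring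
  by_contra! hcon
  linarith [mul_pos hb hcon]

theorem det_nonpos_of_not_nonneg (hb : Pos b) (hbh : 0 < det b h) (hh : ¬0 ≤ h)
    (hz : z ∈ quadrant) (hbz : 0 < det b z) : det h z ≤ 0 := by
  have e1 : det b h * z.1 = det z h * b.1 + det b z * h.1 := congrArg Prod.fst (det_smul_eq b h z)
  have e2 : det b h * z.2 = det z h * b.2 + det b z * h.2 := congrArg Prod.snd (det_smul_eq b h z)
  have h1 : 0 ≤ det b h * z.1 := mul_nonneg hbh.le hz.1
  have h2 : 0 ≤ det b h * z.2 := mul_nonneg hbh.le hz.2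
  rw [det_comm]
  by_contra! hcon
  have hzh : det z h < 0 := by linarith
  refine hh ⟨?_, ?_⟩
  · have := mul_neg_of_neg_of_pos hzh hb.1
    exact (pos_of_mul_pos_right (by linarith : 0 < det b z * h.1) hbz.le).le
  · have := mul_neg_of_neg_of_pos hzh hb.2
    exact (pos_of_mul_pos_right (by linarith : 0 < det b z * h.2) hbz.le).le

theorem det_le_mul_of_det_le (hb : 0 < b.1) (hhG : Bdd G h) (hbh : 0 < det b h) (hz : 0 ≤ z.1)
    (hbz : 0 ≤ det b z) (hY : det b z ≤ Y) : det h z ≤ G * Y := by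
  have e : det b h * z.1 = det z h * b.1 + det b z * h.1 := congrArg Prod.fst (det_smul_eq b h z)
  have hbound : det h z * b.1 ≤ G * Y := by
    calc det h z * b.1 ≤ det b z * h.1 := by
          rw [det_comm z] at e
          linarith [mul_nonneg hbh.le hz]
      _ ≤ det b z * G := by gcongr; exact (le_abs_self _).trans hhG.1
      _ ≤ G * Y := by rw [mul_comm]; gcongr; exact hhG.nonneg
  rcases le_total (det h z) 0 with h0 | h0
  · exact h0.trans (mul_nonneg hhG.nonneg (hbz.trans hY))
  · exact (le_mul_of_one_le_right h0 hb).trans hbound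

theorem det_le_mul_of_det_nonpos {X : ℤ} (hbh : 0 < det b h) (hbw : 0 < det b w)
    (hhw : det h w ≤ 0) (hbz : 0 ≤ det b z) (hX : det w z ≤ det b w * X) :
    det h z ≤ det b h * X := by
  have e : det b h * det w z = -det h w * det b z + det b w * det h z := by
    simp only [det]; ring
  have h1 : 0 ≤ -det h w * det b z := mul_nonneg (by linarith) hbz
  have h2 := mul_le_mul_of_nonneg_left hX hbh.le
  refine le_of_mul_le_mul_left ?_ hbw
  linarith

/-- How far a run which starts close to the direction `b` can move counterclockwise beyond the
cycles visited so far, when `k` states have been visited. -/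
def ccwBound {R : Type*} [CommSemiring R] (n M B Y k : R) : R :=
  n * M * (Y + 2 * B * (n * M)) + 4 * (n * M) * (n * M) * k

theorem det_le_of_maximal (hM : vassNorm V ≤ M) {i : ℕ} (htr : IsTrace V P (i + L) st c)
    (hno : ¬HasTurn V st b (i + L)) (hcyc : ShortCycle V (st i) h) (hbh : 0 < det b h) (hh : 0 ≤ h)
    (hmax : ∀ s ∈ visited st (i + L), ∀ w, ShortCycle V s w → 0 < det b w → det h w ≤ 0) :
    det h (c (i + L)) ≤ det h (c i) + 2 * (n * M) * (n * M) := by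
  refine htr.drop.det_le hM (hcyc.bdd hM) fun s hs w hw => ?_
  obtain ⟨k, hk, rfl⟩ := mem_visited.1 hs
  by_contra! hcon
  refine hcon.not_ge (hmax _ (mem_visited.2 ⟨i + k, by omega, rfl⟩) w hw ?_)
  by_contra! hbw
  exact hno ⟨i, i + k, h, w, by omega, by omega, hcyc, hw, hbh, hh, hcon, hbw⟩

theorem exists_first_shortCycle (h : ∃ s ∈ visited st L, ShortCycle V s w) :
    ∃ i ≤ L, ShortCycle V (st i) w ∧ ∀ j < i, (visited st j).card < (visited st L).card := by
  classical
  have hex : ∃ i, i ≤ L ∧ ShortCycle V (st i) w := by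
    obtain ⟨s, hs, hw⟩ := h
    obtain ⟨i, hi, rfl⟩ := mem_visited.1 hs
    exact ⟨i, hi, hw⟩
  obtain ⟨hi, hw⟩ := Nat.find_spec hex
  refine ⟨Nat.find hex, hi, hw, fun j hj => Finset.card_lt_card ?_⟩
  refine (visited_mono (hj.le.trans hi)).ssubset_of_mem_notMem (mem_visited.2 ⟨_, hi, rfl⟩) ?_
  rintro hmem
  obtain ⟨k, hk, hst⟩ := mem_visited.1 hmem
  exact Nat.find_min hex (hk.trans_lt hj) ⟨by omega, hst ▸ hw⟩

theorem det_succ_le (hM : vassNorm V ≤ M) (htr : IsTrace V P (L + 1) st c) (hh : Bdd (n * M) h) :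
    det h (c (L + 1)) ≤ det h (c L) + 2 * (n * M) * (n * M) := by
  have hn : (1 : ℤ) ≤ n := by exact_mod_cast Fin.pos (st 0)
  have hMG : (M : ℤ) ≤ n * M := le_mul_of_one_le_left (by positivity) hn
  have := (le_abs_self _).trans (abs_det_le hh ((htr.bdd_step hM (Nat.lt_succ_self L)).mono hMG))
  rw [det_sub] at this
  linarith

/-- Go back to the first visit of the cycle `h`: fewer states have been visited before. -/
theorem det_le_of_maximal_cycle (hM : vassNorm V ≤ M) (hb : Pos b)
    (htr : IsTrace V (quadrant ∩ {z | 0 < det b z}) L st c) (hY : det b (c 0) ≤ Y)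
    (hno : ¬HasTurn V st b L) (hcyc : ∃ s ∈ visited st L, ShortCycle V s h) (hbh : 0 < det b h)
    (hmax : ∀ s ∈ visited st L, ∀ w, ShortCycle V s w → 0 < det b w → det h w ≤ 0) {X : ℤ}
    (hX : n * M * Y ≤ X) (hprev : ∀ i < L, (visited st i).card < (visited st L).card →
      det h (c i) ≤ det b h * X) :
    det h (c L) ≤ det b h * (X + 4 * (n * M) * (n * M)) := by
  have hhG : Bdd (n * M) h := hcyc.elim fun s hs => hs.2.bdd hM
  have hX0 : 0 ≤ X := le_trans
    (mul_nonneg (by positivity) ((htr.mem 0 L.zero_le).2.le.trans hY)) hX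
  by_cases hh : 0 ≤ h
  swap
  · obtain ⟨hcL, hbL⟩ := htr.mem L le_rfl
    exact (det_nonpos_of_not_nonneg hb hbh hh hcL hbL).trans (by positivity)
  obtain ⟨i, hi, hcyci, hcard⟩ := exists_first_shortCycle hcyc
  have hfirst : det h (c i) ≤ det b h * X + 2 * (n * M) * (n * M) := by
    cases i with
    | zero =>
      obtain ⟨hc0, hb0⟩ := htr.mem 0 L.zero_le
      calc det h (c 0) ≤ n * M * Y := det_le_mul_of_det_le hb.1 hhG hbh hc0.1 hb0.le hY
        _ ≤ det b h * X := hX.trans (le_mul_of_one_le_left hX0 hbh)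
        _ ≤ _ := le_add_of_nonneg_right (by positivity)
    | succ i =>
      exact (det_succ_le hM (htr.take hi) hhG).trans
        (by gcongr; exact hprev i hi (hcard i (Nat.lt_succ_self i)))
  obtain ⟨j, rfl⟩ := exists_add_of_le hi
  calc det h (c (i + j)) ≤ det h (c i) + 2 * (n * M) * (n * M) :=
        det_le_of_maximal hM htr hno hcyci hbh hh hmax
    _ ≤ det b h * X + 4 * (n * M) * (n * M) := by linarith
    _ ≤ det b h * X + det b h * (4 * (n * M) * (n * M)) :=
        add_le_add_right (le_mul_of_one_le_left (by positivity) hbh) _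
    _ = _ := by ring

theorem det_le_ccwBound (hM : vassNorm V ≤ M) (hb : Pos b) (hbB : Bdd B b)
    (htr : IsTrace V (quadrant ∩ {z | 0 < det b z}) L st c) (hY : det b (c 0) ≤ Y)
    (hno : ¬HasTurn V st b L) (hhG : Bdd (n * M) h) (hbh : 0 < det b h)
    (hmax : ∀ s ∈ visited st L, ∀ w, ShortCycle V s w → 0 < det b w → det h w ≤ 0) :
    det h (c L) ≤ det b h * ccwBound (n : ℤ) M B Y (visited st L).card := by
  generalize hk : (visited st L).card = k
  induction k using Nat.strong_induction_on generalizing L h with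
  | _ k ih =>
  have hB := hbB.nonneg
  have hY0 : 0 ≤ Y := (htr.mem 0 L.zero_le).2.le.trans hY
  have hbL := (htr.mem L le_rfl).2
  have hbase (m : ℕ) : n * M * (Y + 2 * B * (n * M)) ≤ ccwBound (n : ℤ) M B Y m :=
    le_add_of_nonneg_right (by positivity)
  by_cases hW : ∃ w, (∃ s ∈ visited st L, ShortCycle V s w) ∧ 0 < det b w
  · obtain ⟨w, ⟨hcyc, hbw⟩, hwmax⟩ := exists_ccw_maximal
      (finite_of_bdd fun w hw => hw.1.elim fun s hs => hs.2.bdd hM) hW fun w hw => hw.2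
    replace hwmax : ∀ s ∈ visited st L, ∀ u, ShortCycle V s u → 0 < det b u → det w u ≤ 0 :=
      fun s hs u hu hbu => hwmax u ⟨⟨s, hs, hu⟩, hbu⟩
    obtain ⟨s, hs, hw⟩ := hcyc
    obtain ⟨m, rfl⟩ : ∃ m, k = m + 1 :=
      Nat.exists_eq_succ_of_ne_zero (hk ▸ Finset.card_ne_zero_of_mem hs)
    refine det_le_mul_of_det_nonpos hbh hbw (hmax s hs w hw hbw) hbL.le ?_
    have hX : n * M * Y ≤ ccwBound (n : ℤ) M B Y m :=
      le_trans (by gcongr; simpa using by positivity) (hbase m)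
    have := det_le_of_maximal_cycle hM hb htr hY hno ⟨s, hs, hw⟩ hbw hwmax hX fun i hi hcard => ?_
    · convert this using 2
      simp only [ccwBound]; push_cast; ring
    · refine (ih _ (by omega) (htr.take hi.le) (mt (HasTurn.mono · hi.le) hno) (hw.bdd hM) hbw
        (fun s hs => hwmax s (visited_mono hi.le hs)) rfl).trans ?_
      unfold ccwBound
      gcongr
      omega
  · push Not at hW
    have h1 := htr.det_le hM hbB fun s hs w hw => hW w ⟨s, hs, hw⟩
    have h2 := det_le_mul_of_det_le hb.1 hhG hbh (htr.mem L le_rfl).1.1 hbL.le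
      (Y := Y + 2 * B * (n * M)) (by linarith)
    exact (h2.trans (hbase _)).trans
      (le_mul_of_one_le_left ((by positivity : (0 : ℤ) ≤ _).trans (hbase _)) hbh)

/-- A bound on the angular distance which can be covered by short cycles. -/
def seqBound {R : Type*} [CommSemiring R] (n M B : R) : R :=
  2 * B * (n * M) * ccwBound n M B (B + 2 * B * M) n

/-- Consider the part of the run after its last visit near the direction `b`. -/
theorem hasTurn_or_exists_shortCycle (hM : vassNorm V ≤ M) (hb : Pos b) (hbB : Bdd B b)
    (htr : IsTrace V quadrant L st c) (hstart : det b (c 0) ≤ B)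
    (hend : B + 2 * B * M + 2 * B * (n * M) < det b (c L)) :
    HasTurn V st b L ∨ ∃ i ≤ L, ∃ w, ShortCycle V (st i) w ∧ 0 < det b w ∧
      det w (c L) ≤ seqBound (n : ℤ) M B := by
  have hB := hbB.nonneg
  rw [or_iff_not_imp_left]
  intro hno
  obtain ⟨t, -, htL, ht, hleft⟩ := exists_last_le (f := fun i => det b (c i)) L.zero_le hstart
    (by linarith [(by positivity : 0 ≤ 2 * B * M + 2 * B * (n * M))])
  obtain ⟨k, rfl⟩ := exists_add_of_le (Nat.succ_le_of_lt htL)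
  have hY : det b (c (t + 1)) ≤ B + 2 * B * M := by
    have := (le_abs_self _).trans (abs_det_le hbB (htr.bdd_step hM (i := t) (by omega)))
    rw [det_sub] at this
    linarith
  have htr' : IsTrace V (quadrant ∩ {z | 0 < det b z}) k (fun i => st (t.succ + i))
      (fun i => c (t.succ + i)) :=
    ⟨htr.drop.step, fun i hi => ⟨htr.drop.mem i hi, hB.trans_lt (hleft _ (by omega) (by omega))⟩⟩
  by_cases hW : ∃ w, (∃ s ∈ visited (fun i => st (t.succ + i)) k, ShortCycle V s w) ∧ 0 < det b w
  · obtain ⟨h, ⟨⟨s, hs, hcyc⟩, hbh⟩, hmax⟩ := exists_ccw_maximal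
      (finite_of_bdd fun w hw => hw.1.elim fun s hs => hs.2.bdd hM) hW fun w hw => hw.2
    obtain ⟨i, hi, rfl⟩ := mem_visited.1 hs
    refine ⟨t.succ + i, by omega, h, hcyc, hbh, ?_⟩
    refine (det_le_ccwBound hM hb hbB htr' hY (mt HasTurn.of_drop hno) (hcyc.bdd hM) hbh
      fun s hs w hw hbw => hmax w ⟨⟨s, hs, hw⟩, hbw⟩).trans ?_
    unfold seqBound ccwBound
    gcongr
    · exact (le_abs_self _).trans (abs_det_le hbB (hcyc.bdd hM))
    · simpa using Finset.card_le_univ (visited (fun i => st (t.succ + i)) k)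
  · push Not at hW
    have := htr'.det_le hM hbB fun s hs w hw => hW w ⟨s, hs, hw⟩
    linarith

end

/-! ### Inserting cycles into short paths -/

/-- There is a path from `p` to `r` that consists of three pieces of length at most `ℓ` and has
effect `s`; after the first piece it meets a cycle with effect `w`, and after the second piece a
cycle with effect `u`, both of length at most `ℓ`. -/
def Skeleton {n : ℕ} (V : VASS n) (ℓ : ℕ) (p r : Fin n) (s w u : Vec2) : Prop :=
  ∃ p₁ p₂ s₁ s₂ s₃, s = s₁ + s₂ + s₃ ∧ (∃ l ≤ ℓ, Walk V univ l p 0 p₁ s₁) ∧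
    (∃ l ≤ ℓ, Walk V univ l p₁ 0 p₁ w) ∧ (∃ l ≤ ℓ, Walk V univ l p₁ 0 p₂ s₂) ∧
    (∃ l ≤ ℓ, Walk V univ l p₂ 0 p₂ u) ∧ ∃ l ≤ ℓ, Walk V univ l p₂ 0 r s₃

/-- A bound for the moduli of the congruences between vectors that occur. -/
def modBound {R : Type*} [CommSemiring R] (n M B : R) : R := 2 * (B + n * M) ^ 2

/-- The size of skeletons which realize a given effect up to congruence. -/
def skelLength {R : Type*} [CommSemiring R] (n M B : R) : R := n * modBound n M B ^ 2 + n

/-- A bound for all quantities of a flow. -/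
def flowBound {R : Type*} [CommSemiring R] (n M B : R) : R :=
  B + modBound n M B * B + 4 * (skelLength n M B * M) + (B + n * M) + modBound n M B +
    skelLength n M B

/-- From `(q, 0)` one can quickly reach `(r, z)`, for all sufficiently large `z` which are
obtained by adding nonnegative multiples of `b`, `a`, `w` and `u` to a vector congruent to `c`
modulo `D`. The cycle `w` is traversed before the cycle `u` and has to preserve nonnegativity if
`u` is used. -/
def Flow {n : ℕ} (V : VASS n) (q r : Fin n) (Q D : ℤ) (c b a w u : Vec2) : Prop :=
  ∃ e, Bdd Q e ∧ (∃ y, c = e + D • y) ∧ ∀ k m m' μ : ℤ, Q ≤ k → 0 ≤ m → 0 ≤ m' → 0 ≤ μ →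
    (0 ≤ w ∨ μ = 0) → ∀ z, z = e + k • b + m • a + m' • w + μ • u → Q ≤ z.1 ∧ Q ≤ z.2 →
      ∃ l : ℕ, l ≤ Q * (4 + Q + k + m + m' + μ) ∧ Walk V quadrant l q 0 r z

section Flow

variable {n : ℕ} {V : VASS n} {P : Set Vec2} {L M B ℓ : ℕ} {D Q : ℤ} {p q r : Fin n}
  {a b c e s u v w x z : Vec2}

theorem Walk.shorten_mod {D : ℕ} (hD : 0 < D) (h : Walk V P L p u q w) :
    ∃ s, (∃ l ≤ n * D ^ 2, Walk V univ l p 0 q s) ∧ ∃ y : Vec2, w - u = s + (D : ℤ) • y := by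
  have : NeZero D := ⟨hD.ne'⟩
  obtain ⟨l, s, hl, ⟨y, hy⟩, hwalk⟩ := h.free.shorten (P := univ) (ι := ZMod D × ZMod D)
    (AddMonoidHom.mrange (DistribSMul.toAddMonoidHom Vec2 (D : ℤ))) (fun _ _ _ _ => trivial)
    (fun x => (x.1, x.2)) fun {_ _ x y} _ _ hxy => by
      obtain ⟨h1, h2⟩ := Prod.mk.inj hxy
      obtain ⟨k1, hk1⟩ := (ZMod.intCast_eq_intCast_iff_dvd_sub _ _ _).1 h1.symm
      obtain ⟨k2, hk2⟩ := (ZMod.intCast_eq_intCast_iff_dvd_sub _ _ _).1 h2.symm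
      exact ⟨(k1, k2), Prod.ext hk1.symm hk2.symm⟩
  refine ⟨s, ⟨l, by simpa [sq] using hl, hwalk⟩, -y, ?_⟩
  rw [smul_neg, ← sub_eq_add_neg]
  exact (sub_eq_of_eq_add (by rw [show (D : ℤ) • y = s - (w - u) from hy]; abel)).symm

theorem bdd_of_short (hM : vassNorm V ≤ M) (h : ∃ l ≤ ℓ, Walk V univ l p 0 q s) :
    Bdd (ℓ * M) s := by
  obtain ⟨l, hl, hs⟩ := h
  simpa using (hs.bdd hM).mono (C := ℓ * M) (by gcongr)

theorem Skeleton.bdd (hM : vassNorm V ≤ M) (h : Skeleton V ℓ p r s w u) :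
    Bdd (3 * (ℓ * M)) s := by
  obtain ⟨_, _, _, _, _, rfl, h₁, -, h₂, -, h₃⟩ := h
  refine (((bdd_of_short hM h₁).add (bdd_of_short hM h₂)).add (bdd_of_short hM h₃)).mono ?_
  linarith

theorem Walk.extend (hM : vassNorm V ≤ M) (h : Walk V quadrant L q v p x)
    (hs : ∃ l ≤ ℓ, Walk V univ l p 0 r s) (hx : ℓ * M ≤ x.1 ∧ ℓ * M ≤ x.2) :
    ∃ L' ≤ L + ℓ, Walk V quadrant L' q v r (x + s) := by
  obtain ⟨l, hl, hs⟩ := hs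
  have hlM : (l : ℤ) * M ≤ ℓ * M := by gcongr
  refine ⟨L + l, by omega, h.trans ?_⟩
  simpa using hs.enable hM ⟨hlM.trans hx.1, hlM.trans hx.2⟩

theorem Walk.extend_cycle (hM : vassNorm V ≤ M) (h : Walk V quadrant L q v p x)
    (hs : ∃ l ≤ ℓ, Walk V univ l p 0 p s) (m : ℕ) (hx : ℓ * M ≤ x.1 ∧ ℓ * M ≤ x.2)
    (hxm : ℓ * M ≤ (x + m • s).1 ∧ ℓ * M ≤ (x + m • s).2) :
    ∃ L' ≤ L + m * ℓ, Walk V quadrant L' q v p (x + m • s) := by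
  obtain ⟨l, hl, hs⟩ := hs
  have hlM : (l : ℤ) * M ≤ ℓ * M := by gcongr
  exact ⟨L + m * l, by gcongr, h.trans <| hs.iterate_of_le hM m ⟨hlM.trans hx.1, hlM.trans hx.2⟩
    ⟨hlM.trans hxm.1, hlM.trans hxm.2⟩⟩

theorem le_coords_add {C K : ℤ} (hs : Bdd C s) (hx : K + C ≤ x.1 ∧ K + C ≤ x.2) :
    K ≤ (x + s).1 ∧ K ≤ (x + s).2 := by
  have h1 := (abs_le.1 hs.1).1
  have h2 := (abs_le.1 hs.2).1
  rw [Prod.fst_add, Prod.snd_add]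
  constructor <;> linarith

theorem le_coords_add_of_nonneg {K : ℤ} (hs : 0 ≤ s) (hx : K ≤ x.1 ∧ K ≤ x.2) :
    K ≤ (x + s).1 ∧ K ≤ (x + s).2 :=
  ⟨hx.1.trans (le_add_of_nonneg_right hs.1), hx.2.trans (le_add_of_nonneg_right hs.2)⟩

/-- In the middle of the skeleton the vectors are large: either because `w` only increases them, or
because there is only a short way left. -/
theorem Skeleton.exists_walk (hM : vassNorm V ≤ M) (h : Skeleton V ℓ p r s w u) {m μ : ℕ}
    (hwu : 0 ≤ w ∨ μ = 0) (hv : 4 * (ℓ * M) ≤ v.1 ∧ 4 * (ℓ * M) ≤ v.2)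
    (hz : 4 * (ℓ * M) ≤ (v + s + m • w + μ • u).1 ∧ 4 * (ℓ * M) ≤ (v + s + m • w + μ • u).2) :
    ∃ L ≤ ℓ * (3 + m + μ), Walk V quadrant L p v r (v + s + m • w + μ • u) := by
  obtain ⟨p₁, p₂, s₁, s₂, s₃, rfl, h₁, hw, h₂, hu, h₃⟩ := h
  have hb₁ := bdd_of_short hM h₁
  have hb₂ := bdd_of_short hM h₂
  have hb₃ := bdd_of_short hM h₃
  have hC : (0 : ℤ) ≤ ℓ * M := by positivity
  have weaken {K : ℤ} {x : Vec2} (hK : ℓ * M ≤ K) (hx : K ≤ x.1 ∧ K ≤ x.2) :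
      ℓ * M ≤ x.1 ∧ ℓ * M ≤ x.2 := ⟨hK.trans hx.1, hK.trans hx.2⟩
  have hx₁ : 3 * (ℓ * M) ≤ (v + s₁).1 ∧ 3 * (ℓ * M) ≤ (v + s₁).2 :=
    le_coords_add hb₁ ⟨by linarith, by linarith⟩
  have hx₄ : 3 * (ℓ * M) ≤ (v + s₁ + m • w + s₂ + μ • u).1 ∧
      3 * (ℓ * M) ≤ (v + s₁ + m • w + s₂ + μ • u).2 := by
    rw [show v + s₁ + m • w + s₂ + μ • u = v + (s₁ + s₂ + s₃) + m • w + μ • u + -s₃ by abel]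
    exact le_coords_add hb₃.neg ⟨by linarith, by linarith⟩
  have hx₂ : 2 * (ℓ * M) ≤ (v + s₁ + m • w).1 ∧ 2 * (ℓ * M) ≤ (v + s₁ + m • w).2 := by
    rcases hwu with hw0 | rfl
    · refine le_coords_add_of_nonneg (nsmul_nonneg hw0 m) ⟨?_, ?_⟩ <;> linarith
    · rw [show v + s₁ + m • w = v + s₁ + m • w + s₂ + 0 • u + -s₂ by rw [zero_nsmul]; abel]
      exact le_coords_add hb₂.neg ⟨by linarith, by linarith⟩
  have hx₃ := le_coords_add hb₂ (K := ℓ * M) ⟨by linarith, by linarith⟩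
  obtain ⟨L₁, hL₁, w₁⟩ := (Walk.nil (V := V) (p := p) (u := v) (P := quadrant)
    ⟨by linarith, by linarith⟩).extend hM h₁ (weaken (by linarith) hv)
  obtain ⟨L₂, hL₂, w₂⟩ := w₁.extend_cycle hM hw m (weaken (by linarith) hx₁)
    (weaken (by linarith) hx₂)
  obtain ⟨L₃, hL₃, w₃⟩ := w₂.extend hM h₂ (weaken (by linarith) hx₂)
  obtain ⟨L₄, hL₄, w₄⟩ := w₃.extend_cycle hM hu μ hx₃ (weaken (by linarith) hx₄)
  obtain ⟨L₅, hL₅, w₅⟩ := w₄.extend hM h₃ (weaken (by linarith) hx₄)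
  refine ⟨L₅, by linarith, ?_⟩
  convert w₅ using 1
  abel

theorem exists_skeleton {p₀ p₁ p₂ p₃ : Fin n} {c₀ c₁ c₂ c₃ : Vec2} {l₁ l₂ l₃ D E : ℕ}
    (h₁ : Walk V P l₁ p₀ c₀ p₁ c₁) (h₂ : Walk V P l₂ p₁ c₁ p₂ c₂) (h₃ : Walk V P l₃ p₂ c₂ p₃ c₃)
    (hw : ShortCycle V p₁ w) (hu : ShortCycle V p₂ u) (hD : 0 < D) (hDE : D ≤ E) :
    ∃ s, Skeleton V (n * E ^ 2 + n) p₀ p₃ s w u ∧ ∃ y : Vec2, c₃ = c₀ + s + (D : ℤ) • y := by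
  have hE : n * D ^ 2 ≤ n * E ^ 2 + n := le_add_right (by gcongr)
  have hn : n ≤ n * E ^ 2 + n := le_add_self
  obtain ⟨s₁, ⟨t₁, ht₁, hs₁⟩, y₁, hy₁⟩ := h₁.shorten_mod hD
  obtain ⟨s₂, ⟨t₂, ht₂, hs₂⟩, y₂, hy₂⟩ := h₂.shorten_mod hD
  obtain ⟨s₃, ⟨t₃, ht₃, hs₃⟩, y₃, hy₃⟩ := h₃.shorten_mod hD
  obtain ⟨lw, hlw, hw⟩ := hw
  obtain ⟨lu, hlu, hu⟩ := hu
  refine ⟨s₁ + s₂ + s₃, ⟨p₁, p₂, s₁, s₂, s₃, rfl, ⟨t₁, ht₁.trans hE, hs₁⟩, ⟨lw, hlw.trans hn, hw⟩,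
    ⟨t₂, ht₂.trans hE, hs₂⟩, ⟨lu, hlu.trans hn, hu⟩, t₃, ht₃.trans hE, hs₃⟩, y₁ + y₂ + y₃, ?_⟩
  calc c₃ = c₀ + (c₁ - c₀) + (c₂ - c₁) + (c₃ - c₂) := by abel
    _ = _ := by rw [hy₁, hy₂, hy₃, smul_add, smul_add]; abel

theorem Engine.exists_modEq {B : ℤ} (h : Engine V q B p x b a e) (hD : 0 < D) :
    ∃ m : ℕ, m ≤ D ∧ ∃ y : Vec2, x = e + m • a + D • y := by
  obtain ⟨j, rfl⟩ := h.exists_eq_add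
  obtain ⟨m, hm⟩ := Int.eq_ofNat_of_zero_le (Int.emod_nonneg j hD.ne')
  refine ⟨m, by rw [← hm]; exact (Int.emod_lt_of_pos _ hD).le, (j / D) • a, ?_⟩
  nth_rw 1 [← Int.emod_add_mul_ediv j D, hm, add_smul, natCast_zsmul, mul_smul, add_assoc]

theorem Engine.exists_walk_of_skeleton {B : ℤ} (hM : vassNorm V ≤ M) (h : Engine V q B p x b a e)
    (hs : Skeleton V ℓ p r s w u) {k m m' μ : ℕ} (hk : 4 * (ℓ * M) ≤ (k : ℤ))
    (hwu : 0 ≤ w ∨ μ = 0) (hz : z = e + k • b + m • a + s + m' • w + μ • u)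
    (hz' : 4 * (ℓ * M) ≤ z.1 ∧ 4 * (ℓ * M) ≤ z.2) :
    ∃ L : ℕ, L ≤ B * (1 + k + m) + ℓ * (3 + m' + μ) ∧ Walk V quadrant L q 0 r z := by
  obtain ⟨l, hl, hwalk⟩ := h.exists_walk k m
  have hkb : 4 * (ℓ * M) ≤ (k • b).1 ∧ 4 * (ℓ * M) ≤ (k • b).2 := by
    have hk0 : (0 : ℤ) ≤ k := by positivity
    rw [Prod.smul_fst, Prod.smul_snd, nsmul_eq_mul, nsmul_eq_mul]
    exact ⟨hk.trans (le_mul_of_one_le_right hk0 h.pos.1),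
      hk.trans (le_mul_of_one_le_right hk0 h.pos.2)⟩
  have hv : 4 * (ℓ * M) ≤ (e + k • b + m • a).1 ∧ 4 * (ℓ * M) ≤ (e + k • b + m • a).2 := by
    rw [add_comm e]
    exact le_coords_add_of_nonneg (nsmul_nonneg h.nonneg m) <|
      le_coords_add_of_nonneg h.base_nonneg hkb
  subst hz
  obtain ⟨l', hl', hwalk'⟩ := hs.exists_walk hM hwu hv hz'
  refine ⟨l + l', ?_, hwalk.trans hwalk'⟩
  push_cast
  exact add_le_add hl (by exact_mod_cast hl')

/-- Replacing paths by congruent short ones turns an engine and two cycles on the rest of the trace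
into a flow. -/
theorem Engine.exists_flow (hM : vassNorm V ≤ M) {p₀ p₁ p₂ p₃ : Fin n} {c₀ c₁ c₂ c₃ : Vec2}
    {l₁ l₂ l₃ : ℕ} (heng : Engine V q B p₀ c₀ b a e) (h₁ : Walk V P l₁ p₀ c₀ p₁ c₁)
    (h₂ : Walk V P l₂ p₁ c₁ p₂ c₂) (h₃ : Walk V P l₃ p₂ c₂ p₃ c₃) (hw : ShortCycle V p₁ w)
    (hu : ShortCycle V p₂ u) (hD : 0 < D) (hDE : D ≤ modBound (n : ℤ) M B) :
    Flow V q p₃ (flowBound (n : ℤ) M B) D c₃ b a w u := by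
  obtain ⟨m₀, hm₀, y₀, rfl⟩ := heng.exists_modEq hD
  lift D to ℕ using hD.le
  obtain ⟨s, hs, y, rfl⟩ := exists_skeleton h₁ h₂ h₃ hw hu (by exact_mod_cast hD)
    (E := modBound n M B) (by zify; simpa [modBound] using hDE)
  set ℓ := n * modBound n M B ^ 2 + n with hℓ
  have hℓ' : (ℓ : ℤ) = skelLength (n : ℤ) M B := by simp [hℓ, skelLength, modBound]
  have hE : 0 ≤ modBound (n : ℤ) M B := hD.le.trans hDE
  set Q := flowBound (n : ℤ) M B with hQ
  have hEB : 0 ≤ modBound (n : ℤ) M B * B := by positivity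
  have hℓM : (0 : ℤ) ≤ ℓ * M := by positivity
  have hnM : (0 : ℤ) ≤ n * M := by positivity
  rw [flowBound, ← hℓ'] at hQ
  have hCQ : 4 * (ℓ * M) ≤ Q := by linarith
  refine ⟨e + m₀ • a + s, ?_, ⟨y₀ + y, by rw [smul_add]; abel⟩, ?_⟩
  · have hma : Bdd (modBound (n : ℤ) M B * B) (m₀ • a) := by
      rw [← natCast_zsmul]
      exact heng.bdd_nonneg.smul (by rw [Nat.abs_cast]; exact hm₀.trans hDE)
    exact ((heng.bdd_base.add hma).add (hs.bdd hM)).mono (by linarith)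
  intro k m m' μ hk hm hm' hμ hwu z hz hz'
  lift k to ℕ using by linarith
  lift m to ℕ using hm
  lift m' to ℕ using hm'
  lift μ to ℕ using hμ
  simp only [natCast_zsmul] at hz
  obtain ⟨L, hL, hwalk⟩ := heng.exists_walk_of_skeleton hM hs (m := m₀ + m) (m' := m') (μ := μ)
    (hCQ.trans hk) (mod_cast hwu) (z := z) (by rw [hz, add_nsmul]; abel)
    ⟨hCQ.trans hz'.1, hCQ.trans hz'.2⟩
  refine ⟨L, hL.trans ?_, hwalk⟩
  push_cast
  calc (B : ℤ) * (1 + k + (m₀ + m)) + ℓ * (3 + m' + μ)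
      ≤ Q * (1 + k + (Q + m)) + Q * (3 + m' + μ) := by gcongr <;> linarith
    _ = _ := by ring

theorem Flow.exchange (h : Flow V q r Q D c b a 0 0) : Flow V q r Q D c b 0 a 0 := by
  obtain ⟨e, he, hy, hflow⟩ := h
  refine ⟨e, he, hy, fun k m m' μ hk hm hm' hμ _ z hz hz' => ?_⟩
  obtain ⟨l, hl, hwalk⟩ := hflow k m' 0 0 hk hm' le_rfl le_rfl (.inr rfl) z (by simpa using hz) hz'
  refine ⟨l, hl.trans (mul_le_mul_of_nonneg_left ?_ he.nonneg), hwalk⟩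
  linarith

end Flow

/-! ### Fatness outside of the belts -/

/-- The vector `z - e` is a combination of `b`, `w` and `u` as required by a flow, with coefficients
that are at most linear in `z`. -/
def HasCoords (Q : ℤ) (e b w u z : Vec2) : Prop :=
  ∃ k m μ : ℤ, z = e + k • b + m • w + μ • u ∧ Q ≤ k ∧ 0 ≤ m ∧ 0 ≤ μ ∧ (0 ≤ w ∨ μ = 0) ∧
    k + m + μ ≤ 6 * Q ^ 2 * (z.1 + z.2) + 18 * Q ^ 3

section Coords

variable {n : ℕ} {V : VASS n} {q r : Fin n} {u w b a e c y z : Vec2} {Q D K W : ℤ} {F : Set Vec2}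

theorem exists_coords (he : Bdd Q e) (hb : Bdd Q b) (hw : Bdd Q w) (hD : 0 < det b w)
    (hz : z = e + det b w • y) (hz1 : 0 ≤ z.1) (hz2 : 0 ≤ z.2) :
    ∃ k m : ℤ, z = e + k • b + m • w ∧ det z w - 2 * Q ^ 2 ≤ det b w * k ∧
      det b z - 2 * Q ^ 2 ≤ det b w * m ∧
      |k| ≤ Q * (z.1 + z.2) + 2 * Q ^ 2 ∧ |m| ≤ Q * (z.1 + z.2) + 2 * Q ^ 2 := by
  have hek : det b w * det y w = det z w - det e w := by
    rw [hz, det_comm (e + _), det_add, det_smul, det_comm w e, det_comm w y]; ring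
  have hem : det b w * det b y = det b z - det b e := by
    rw [hz, det_add, det_smul]; ring
  have hew := abs_det_le he hw
  have hbe := abs_det_le hb he
  rw [mul_assoc, ← sq] at hew hbe
  have hzw : |det z w| ≤ Q * (z.1 + z.2) := by
    rw [det_comm, abs_neg]
    exact abs_det_le_mul_add hw hz1 hz2
  have hbz := abs_det_le_mul_add hb hz1 hz2
  have hle (x : ℤ) : |x| ≤ |det b w * x| := by
    rw [abs_mul, abs_of_pos hD]
    exact le_mul_of_one_le_left (abs_nonneg _) hD
  refine ⟨det y w, det b y, by rw [hz, det_smul_eq, add_assoc], ?_, ?_, ?_, ?_⟩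
  · linarith [(abs_le.1 hew).2]
  · linarith [(abs_le.1 hbe).2]
  · exact (hle _).trans (hek ▸ (abs_sub _ _).trans (add_le_add hzw hew))
  · exact (hle _).trans (hem ▸ (abs_sub _ _).trans (add_le_add hbz hbe))

theorem hasCoords_of_mem_wedge (hQ : 1 ≤ Q) (he : Bdd Q e) (hb : Bdd Q b) (hw : Bdd Q w)
    (hD : 0 < det b w) (hDQ : det b w ≤ Q) (hz : z = e + det b w • y) (hz1 : 0 ≤ z.1)
    (hz2 : 0 ≤ z.2) (hzF : z ∈ wedge (24 * Q ^ 4) {b, -w}) : HasCoords Q e b w u z := by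
  obtain ⟨k, m, hkm, hk, hm, hk', hm'⟩ := exists_coords he hb hw hD hz hz1 hz2
  have hQ2 : Q ^ 2 ≤ Q ^ 4 := pow_le_pow_right₀ hQ (by norm_num)
  have hQ3 : Q ^ 2 ≤ Q ^ 3 := pow_le_pow_right₀ hQ (by norm_num)
  have hQ1 : Q * (z.1 + z.2) ≤ Q ^ 2 * (z.1 + z.2) := by
    gcongr
    exact le_self_pow₀ hQ (by norm_num)
  have hbz : 24 * Q ^ 4 ≤ det b z := hzF b (by simp)
  have hwz : 24 * Q ^ 4 ≤ det z w := by
    have := hzF (-w) (by simp)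
    rwa [det_neg_left, ← det_comm] at this
  have hkQ : Q ≤ k := by
    have : det b w * Q ≤ Q ^ 2 := by rw [sq]; gcongr
    exact le_of_mul_le_mul_left (by linarith [sq_nonneg Q]) hD
  have hm0 : 0 ≤ m := le_of_mul_le_mul_left (by linarith [sq_nonneg Q]) hD
  refine ⟨k, m, 0, by simpa using hkm, hkQ, hm0, le_rfl, .inr rfl, ?_⟩
  have : 0 ≤ Q * (z.1 + z.2) := by positivity
  linarith [le_abs_self k, le_abs_self m, sq_nonneg Q]

/-- Here `u` and `w` have a positive combination that is opposite to `b`, and can be used to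
compensate for a negative coefficient of `b`. -/
theorem hasCoords_of_turn (hQ : 1 ≤ Q) (he : Bdd Q e) (hb : Bdd Q b) (hw : Bdd Q w)
    (hD : 0 < det b w) (hDQ : det b w ≤ Q) (hw0 : 0 ≤ w) (hwu : 0 < det w u) (hwuQ : det w u ≤ Q)
    (hbu : det b u ≤ 0) (hbuQ : -Q ≤ det b u) (hz : z = e + det b w • y) (hz1 : 0 ≤ z.1)
    (hz2 : 0 ≤ z.2) (hbz : 24 * Q ^ 4 ≤ det b z) : HasCoords Q e b w u z := by
  obtain ⟨k, m, hkm, -, hm, hk', hm'⟩ := exists_coords he hb hw hD hz hz1 hz2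
  have hQ2 : Q ^ 2 ≤ Q ^ 4 := pow_le_pow_right₀ hQ (by norm_num)
  have hm0 : 0 ≤ m := le_of_mul_le_mul_left (by linarith [sq_nonneg Q]) hD
  have hrel : det w u • b + (-det b u) • w + det b w • u = 0 := by
    rw [det_smul_eq b w u, det_comm u w]; module
  set N := |k| + Q with hN
  have hN0 : 0 ≤ N := by positivity
  refine ⟨k + N * det w u, m + N * -det b u, N * det b w, ?_, ?_, ?_, by positivity, .inl hw0, ?_⟩
  · calc z = e + k • b + m • w + N • 0 := by rw [smul_zero, add_zero, hkm]
      _ = _ := by rw [← hrel]; module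
  · linarith [le_mul_of_one_le_right hN0 hwu, neg_abs_le k, hN]
  · linarith [mul_nonneg hN0 (neg_nonneg.2 hbu)]
  · have hcoeff : det w u + -det b u + det b w ≤ 3 * Q := by linarith
    have hNQ : N ≤ Q * (z.1 + z.2) + 3 * Q ^ 2 := by nlinarith
    have := mul_nonneg (show 0 ≤ z.1 + z.2 by positivity) (show 0 ≤ Q by positivity)
    calc k + N * det w u + (m + N * -det b u) + N * det b w
        = k + m + N * (det w u + -det b u + det b w) := by ring
      _ ≤ 2 * (Q * (z.1 + z.2) + 3 * Q ^ 2) + (Q * (z.1 + z.2) + 3 * Q ^ 2) * (3 * Q) := by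
        gcongr
        · linarith [le_abs_self k, le_abs_self m, sq_nonneg Q]
        · linarith
      _ ≤ 6 * Q ^ 2 * (z.1 + z.2) + 18 * Q ^ 3 := by nlinarith

theorem Flow.fat (h : Flow V q r Q D c b a w u) (hQ : 1 ≤ Q) (hD : 0 < D) (hDQ : D ≤ Q)
    (hF : ∀ f ∈ F, Bdd Q f) (hcF : c ∈ wedge (24 * Q ^ 4) (F ∪ quadrantEdges))
    (hcoords : ∀ z ∈ wedge (24 * Q ^ 4) F, 0 ≤ z.1 → 0 ≤ z.2 → ∀ e y, Bdd Q e → z = e + D • y →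
      HasCoords Q e b w u z) : Fat V q r (24 * Q ^ 4) c := by
  obtain ⟨e, he, ⟨y₀, rfl⟩, hflow⟩ := h
  have hQ1 : Q ≤ Q ^ 4 := le_self_pow₀ hQ (by norm_num)
  have hQ2 : Q ^ 2 ≤ Q ^ 4 := pow_le_pow_right₀ hQ (by norm_num)
  have hQ3 : Q ^ 3 ≤ Q ^ 4 := pow_le_pow_right₀ hQ (by norm_num)
  have hQK : Q ≤ 24 * Q ^ 4 := by linarith
  refine ⟨D, hD, hDQ.trans hQK, _, ?_, subset_union_right, hcF, fun y hz => ?_⟩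
  · rintro f (hf | rfl | rfl)
    · exact (hF f hf).mono hQK
    all_goals simpa [Bdd] using ⟨by linarith, by linarith⟩
  obtain ⟨hz1, hz2⟩ := le_coords_of_mem_wedge subset_union_right hz
  set z := e + D • y₀ + D • y with hz_def
  obtain ⟨k, m, μ, hkm, hk, hm, hμ, hwμ, hsum⟩ := hcoords z (fun f hf => hz f (.inl hf))
    (by linarith) (by linarith) e (y₀ + y) he (by rw [hz_def, smul_add, add_assoc])
  obtain ⟨L, hL, hwalk⟩ := hflow k 0 m μ hk le_rfl hm hμ hwμ z (by simpa using hkm)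
    ⟨hQK.trans hz1, hQK.trans hz2⟩
  refine ⟨L, hL.trans ?_, hwalk⟩
  have hS : 0 ≤ z.1 + z.2 := by linarith
  have hQS : Q ^ 3 * (z.1 + z.2) ≤ Q ^ 4 * (z.1 + z.2) := by gcongr
  have hQS0 : 0 ≤ Q ^ 4 * (z.1 + z.2) := by positivity
  calc Q * (4 + Q + k + 0 + m + μ) = Q * (4 + Q + (k + m + μ)) := by ring
    _ ≤ Q * (4 + Q + (6 * Q ^ 2 * (z.1 + z.2) + 18 * Q ^ 3)) := by gcongr
    _ = 4 * Q + Q ^ 2 + 18 * Q ^ 4 + 6 * (Q ^ 3 * (z.1 + z.2)) := by ring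
    _ ≤ 24 * Q ^ 4 * (z.1 + z.2 + 1) := by linarith

theorem Flow.fat_of_wedge (h : Flow V q r Q (det b w) c b a w u) (hQ : 1 ≤ Q) (hb : Bdd Q b)
    (hw : Bdd Q w) (hD : 0 < det b w) (hDQ : det b w ≤ Q)
    (hc : c ∈ wedge (24 * Q ^ 4) ({b, -w} ∪ quadrantEdges)) : Fat V q r (24 * Q ^ 4) c := by
  refine h.fat hQ hD hDQ ?_ hc fun z hz hz1 hz2 e y he hzy =>
    hasCoords_of_mem_wedge hQ he hb hw hD hDQ hzy hz1 hz2 hz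
  rintro _ (rfl | rfl)
  exacts [hb, hw.neg]

theorem mem_wedge_of_not_thin (hthin : ¬Thin W c) (hKW : K ≤ W) (hW : 1 ≤ W) (hc : c ∈ quadrant)
    (hF : ∀ f ∈ F, f ≠ 0 ∧ Bdd W f ∧ -W ≤ det f c) : c ∈ wedge K (F ∪ quadrantEdges) := by
  have hF' (f) (hf : f ∈ F ∪ quadrantEdges) : f ≠ 0 ∧ Bdd W f ∧ -W ≤ det f c := by
    rcases hf with hf | rfl | rfl
    · exact hF f hf
    all_goals refine ⟨by simp, ⟨by simp; omega, by simp; omega⟩, ?_⟩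
    · simpa [det] using (by linarith [hc.2] : -W ≤ c.2)
    · simpa [det] using (by linarith [hc.1] : -W ≤ c.1)
  intro f hf
  obtain ⟨hf0, hfW, hfc⟩ := hF' f hf
  rcases lt_abs.1 (lt_abs_det_of_not_thin hthin hf0 hfW) with h | h <;> linarith

end Coords

/-- The width of the belts outside of which all configurations are fat. -/
def fatBound {R : Type*} [CommSemiring R] (n M B : R) : R :=
  24 * flowBound n M B ^ 4 + seqBound n M B + (B + 2 * B * M + 2 * B * (n * M))

section FatEngine

variable {n : ℕ} {V : VASS n} {q : Fin n} {b a e v w u c₁ : Vec2} {M B L N : ℕ} {W : ℤ}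
  {st : ℕ → Fin n} {c : ℕ → Vec2}

theorem add_le_flowBound (n M B : ℕ) : (B : ℤ) + n * M ≤ flowBound (n : ℤ) M B := by
  have : (0 : ℤ) ≤ B + modBound (n : ℤ) M B * B + 4 * (skelLength (n : ℤ) M B * M) +
      modBound (n : ℤ) M B + skelLength (n : ℤ) M B := by
    unfold skelLength modBound; positivity
  rw [flowBound]
  linarith

theorem abs_det_le_modBound (hv : Bdd (B + n * M) v) (hw : Bdd (B + n * M) w) :
    |det v w| ≤ modBound (n : ℤ) M B := by
  rw [modBound, sq, ← mul_assoc]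
  exact abs_det_le hv hw

theorem modBound_le_flowBound (n M B : ℕ) : modBound (n : ℤ) M B ≤ flowBound (n : ℤ) M B := by
  have : (0 : ℤ) ≤ B + modBound (n : ℤ) M B * B + 4 * (skelLength (n : ℤ) M B * M) +
      (B + n * M) + skelLength (n : ℤ) M B := by
    unfold skelLength modBound; positivity
  rw [flowBound]
  linarith

theorem one_le_flowBound (hn : 0 < n) (M B : ℕ) : 1 ≤ flowBound (n : ℤ) M B := by
  have : (0 : ℤ) ≤ B + modBound (n : ℤ) M B * B + 4 * (skelLength (n : ℤ) M B * M) +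
      (B + n * M) + modBound (n : ℤ) M B + n * modBound (n : ℤ) M B ^ 2 := by
    unfold skelLength modBound; positivity
  have hskel : skelLength (n : ℤ) M B = n * modBound (n : ℤ) M B ^ 2 + n := rfl
  rw [flowBound]
  linarith [show (1 : ℤ) ≤ n by exact_mod_cast hn]

theorem le_of_fatBound_le (hW : fatBound (n : ℤ) M B ≤ W) (hn : 0 < n) :
    24 * flowBound (n : ℤ) M B ^ 4 ≤ W ∧ seqBound (n : ℤ) M B ≤ W ∧
      B + 2 * B * M + 2 * B * (n * M) ≤ W ∧ B + n * M ≤ W ∧ 1 ≤ W := by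
  have hQ := one_le_flowBound hn M B
  have hQ4 : flowBound (n : ℤ) M B ≤ flowBound (n : ℤ) M B ^ 4 := le_self_pow₀ hQ (by norm_num)
  have hseq : 0 ≤ seqBound (n : ℤ) M B := by
    unfold seqBound ccwBound
    positivity
  have hB : (0 : ℤ) ≤ B + 2 * B * M + 2 * B * (n * M) := by positivity
  have := add_le_flowBound n M B
  rw [fatBound] at hW
  refine ⟨?_, ?_, ?_, ?_, ?_⟩ <;> linarith

theorem shortCycle_zero (V : VASS n) (s : Fin n) : ShortCycle V s 0 :=
  ⟨0, n.zero_le, .nil trivial⟩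

theorem Flow.fat_of_det_le {r : Fin n} (hn : 0 < n)
    (h : Flow V q r (flowBound (n : ℤ) M B) (det b w) c₁ b a w u)
    (hW : fatBound (n : ℤ) M B ≤ W) (hb : Bdd (B + n * M) b) (hw : Bdd (B + n * M) w)
    (hbw : 0 < det b w) (hthin : ¬Thin W c₁) (hc : c₁ ∈ quadrant) (hbc : 0 < det b c₁)
    (hwc : det w c₁ ≤ W) : Fat V q r (24 * flowBound (n : ℤ) M B ^ 4) c₁ := by
  obtain ⟨hKW, -, -, hBW, hW1⟩ := le_of_fatBound_le hW hn
  have hBQ := add_le_flowBound n M B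
  have hD := (le_abs_self _).trans (abs_det_le_modBound hb hw)
  refine h.fat_of_wedge (one_le_flowBound hn M B) (hb.mono hBQ) (hw.mono hBQ) hbw
    (hD.trans (modBound_le_flowBound n M B)) (mem_wedge_of_not_thin hthin hKW hW1 hc ?_)
  rintro _ (rfl | rfl)
  · exact ⟨fun h0 => by simp [h0, det] at hbw, hb.mono hBW, by linarith⟩
  · refine ⟨fun h0 => ?_, (hw.mono hBW).neg, by rw [det_neg_left]; linarith⟩
    simp [neg_eq_zero.1 h0, det] at hbw

theorem fat_of_vert (hM : vassNorm V ≤ M) (htr : IsTrace V quadrant L st c)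
    (heng : Engine V q B (st 0) (c 0) b a e) (ha : Vert a) (hW : fatBound (n : ℤ) M B ≤ W)
    (hthin : ¬Thin W (c L)) (hpos : 0 < det b (c L)) :
    Fat V q (st L) (24 * flowBound (n : ℤ) M B ^ 4) (c L) := by
  have hnM : (0 : ℤ) ≤ n * M := by positivity
  have hb : Bdd (B + n * M) b := heng.bdd_pos.mono (by linarith)
  have ha' : Bdd (B + n * M) a := heng.bdd_nonneg.mono (by linarith)
  have hba : 0 < det b a := by
    rw [det, ha.1, mul_zero, sub_zero]
    exact mul_pos heng.pos.1 ha.2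
  have hc := htr.mem L le_rfl
  have hac : det a (c L) ≤ 0 := by
    rw [det, ha.1, zero_mul, zero_sub]
    exact neg_nonpos.2 (mul_nonneg ha.2.le hc.1)
  have hflow := heng.exists_flow hM (htr.walk L.zero_le le_rfl) (.nil hc) (.nil hc)
    (shortCycle_zero V _) (shortCycle_zero V _) hba
    ((le_abs_self _).trans (abs_det_le_modBound hb ha'))
  exact hflow.exchange.fat_of_det_le q.pos hW hb ha' hba hthin hc hpos
    (by linarith [(le_of_fatBound_le hW q.pos).2.2.2.2])

theorem fat_of_leftmost (hM : vassNorm V ≤ M) (htr : IsTrace V quadrant L st c)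
    (heng : Engine V q B (st 0) (c 0) b a e) (hW : fatBound (n : ℤ) M B ≤ W)
    (hthin : ¬Thin W (c L)) (hpos : 0 < det b (c L)) {i : ℕ} (hi : i ≤ L)
    (hw : ShortCycle V (st i) w) (hbw : 0 < det b w)
    (hwc : det w (c L) ≤ seqBound (n : ℤ) M B) :
    Fat V q (st L) (24 * flowBound (n : ℤ) M B ^ 4) (c L) := by
  have hnM : (0 : ℤ) ≤ n * M := by positivity
  have hb : Bdd (B + n * M) b := heng.bdd_pos.mono (by linarith)
  have hw' : Bdd (B + n * M) w := (hw.bdd hM).mono (by linarith)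
  have hc := htr.mem L le_rfl
  have hflow := heng.exists_flow hM (htr.walk i.zero_le hi) (htr.walk hi le_rfl) (.nil hc) hw
    (shortCycle_zero V _) hbw ((le_abs_self _).trans (abs_det_le_modBound hb hw'))
  exact hflow.fat_of_det_le q.pos hW hb hw' hbw hthin hc hpos
    (hwc.trans (le_of_fatBound_le hW q.pos).2.1)

theorem fat_of_hasTurn (hM : vassNorm V ≤ M) (htr : IsTrace V quadrant L st c)
    (heng : Engine V q B (st 0) (c 0) b a e) (hW : fatBound (n : ℤ) M B ≤ W)
    (hthin : ¬Thin W (c L)) (hpos : 0 < det b (c L)) (hturn : HasTurn V st b L) :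
    Fat V q (st L) (24 * flowBound (n : ℤ) M B ^ 4) (c L) := by
  have hn := q.pos
  obtain ⟨hKW, -, -, hBW, hW1⟩ := le_of_fatBound_le hW hn
  obtain ⟨i, j, w, u, hij, hj, hw, hu, hbw, hw0, hwu, hbu⟩ := hturn
  have hnM : (0 : ℤ) ≤ n * M := by positivity
  have hb : Bdd (B + n * M) b := heng.bdd_pos.mono (by linarith)
  have hcyc {s v} (h : ShortCycle V s v) : Bdd (B + n * M) v := (h.bdd hM).mono (by linarith)
  have hdet {x y} (hx : Bdd (B + n * M) x) (hy : Bdd (B + n * M) y) :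
      |det x y| ≤ flowBound (n : ℤ) M B :=
    (abs_det_le_modBound hx hy).trans (modBound_le_flowBound n M B)
  have hflow := heng.exists_flow hM (htr.walk i.zero_le (hij.trans hj)) (htr.walk hij hj)
    (htr.walk hj le_rfl) hw hu hbw ((le_abs_self _).trans (abs_det_le_modBound hb (hcyc hw)))
  have hQ := one_le_flowBound hn M B
  have hbQ := hb.mono (add_le_flowBound n M B)
  refine hflow.fat (F := {b}) hQ hbw ((le_abs_self _).trans (hdet hb (hcyc hw))) ?_ ?_
    fun z hz hz1 hz2 e' y he' hzy => hasCoords_of_turn hQ he' hbQ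
      ((hcyc hw).mono (add_le_flowBound n M B)) hbw ((le_abs_self _).trans (hdet hb (hcyc hw))) hw0
      hwu ((le_abs_self _).trans (hdet (hcyc hw) (hcyc hu))) hbu
      (abs_le.1 (hdet hb (hcyc hu))).1 hzy hz1 hz2 (hz b rfl)
  · rintro _ rfl
    exact hbQ
  · refine mem_wedge_of_not_thin hthin hKW hW1 (htr.mem L le_rfl) ?_
    rintro _ rfl
    exact ⟨fun h => by simp [h, det] at hpos, hb.mono hBW, by linarith⟩

theorem fat_of_engine_of_pos (hM : vassNorm V ≤ M) (htr : IsTrace V quadrant L st c)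
    (heng : Engine V q B (st 0) (c 0) b a e) (hW : fatBound (n : ℤ) M B ≤ W)
    (hthin : ¬Thin W (c L)) (hpos : 0 < det b (c L)) :
    Fat V q (st L) (24 * flowBound (n : ℤ) M B ^ 4) (c L) := by
  rcases heng.det_le with hstart | ha
  case inr => exact fat_of_vert hM htr heng ha hW hthin hpos
  obtain ⟨-, -, hendW, hBW, -⟩ := le_of_fatBound_le hW q.pos
  have hnM : (0 : ℤ) ≤ n * M := by positivity
  have hend := lt_abs_det_of_not_thin hthin (fun h => by simp [h, det] at hpos)
    (heng.bdd_pos.mono (by linarith))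
  rw [abs_of_pos hpos] at hend
  rcases hasTurn_or_exists_shortCycle hM heng.pos heng.bdd_pos htr hstart (by linarith) with
    hturn | ⟨i, hi, w, hw, hbw, hwc⟩
  · exact fat_of_hasTurn hM htr heng hW hthin hpos hturn
  · exact fat_of_leftmost hM htr heng hW hthin hpos hi hw hbw hwc

theorem fat_of_engine (hM : vassNorm V ≤ M) (htr : IsTrace V quadrant L st c)
    (heng : Engine V q B (st 0) (c 0) b a e) (hW : fatBound (n : ℤ) M B ≤ W)
    (hthin : ¬Thin W (c L)) : Fat V q (st L) (24 * flowBound (n : ℤ) M B ^ 4) (c L) := by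
  rcases lt_trichotomy (det b (c L)) 0 with h | h | h
  · refine .of_mirror (fat_of_engine_of_pos ((vassNorm_mirror V).trans_le hM) htr.to_mirror
      heng.to_mirror hW (fun h => hthin h.swap) ?_)
    rw [det_swap]
    linarith
  · have hnM : (0 : ℤ) ≤ n * M := by positivity
    obtain ⟨-, -, -, hBW, hW1⟩ := le_of_fatBound_le hW q.pos
    have := lt_abs_det_of_not_thin hthin (fun h => absurd heng.pos.1 (by simp [h]))
      (heng.bdd_pos.mono (by linarith))
    rw [h, abs_zero] at this
    linarith
  · exact fat_of_engine_of_pos hM htr heng hW hthin h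

/-- The width of the belts outside of which all configurations of a run are fat. -/
def beltWidth {R : Type*} [CommSemiring R] (n M N : R) : R :=
  fatBound n M (engineBound n M N) + (N + n * M)

/-- The parameter of the fat configurations outside of the belts. -/
def fatSize {R : Type*} [CommSemiring R] (n M N : R) : R :=
  24 * flowBound n M (engineBound n M N) ^ 4

theorem engineBound_cast (n M N : ℕ) :
    ((engineBound n M N : ℕ) : ℤ) = engineBound (n : ℤ) M N := by
  simp [engineBound, engineSize]

theorem fatSize_cast (n M N : ℕ) : ((fatSize n M N : ℕ) : ℤ) = fatSize (n : ℤ) M N := by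
  simp [fatSize, flowBound, skelLength, modBound, engineBound_cast]

theorem beltWidth_cast (n M N : ℕ) : ((beltWidth n M N : ℕ) : ℤ) = beltWidth (n : ℤ) M N := by
  simp [beltWidth, fatBound, flowBound, skelLength, modBound, seqBound, ccwBound,
    engineBound_cast]

theorem lt_coords_of_not_thin {z : Vec2} (hW : 1 ≤ W) (hthin : ¬Thin W z) (hz : z ∈ quadrant) :
    W < z.1 ∧ W < z.2 := by
  have h1 := lt_abs_det_of_not_thin (g := (0, 1)) hthin (by simp) ⟨by simp; omega, by simpa⟩
  have h2 := lt_abs_det_of_not_thin (g := (1, 0)) hthin (by simp) ⟨by simpa, by simp; omega⟩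
  simp only [det, zero_mul, one_mul, zero_sub, sub_zero, abs_neg] at h1 h2
  rw [abs_of_nonneg hz.1] at h1
  rw [abs_of_nonneg hz.2] at h2
  exact ⟨h1, h2⟩

theorem fat_of_not_thin (hM : vassNorm V ≤ M) (htr : IsTrace V quadrant L st c) (h0 : c 0 = 0)
    (hN : growth n M ^ n + M ≤ N) (hthin : ¬Thin (beltWidth n M N : ℕ) (c L)) :
    Fat V (st 0) (st L) (fatSize n M N : ℕ) (c L) := by
  have hbelt : ((beltWidth n M N : ℕ) : ℤ) =
      fatBound (n : ℤ) M (engineBound n M N : ℕ) + (N + n * M) := by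
    rw [beltWidth_cast, engineBound_cast, beltWidth]
  have hsize : ((fatSize n M N : ℕ) : ℤ) =
      24 * flowBound (n : ℤ) M (engineBound n M N : ℕ) ^ 4 := by
    rw [fatSize_cast, engineBound_cast, fatSize]
  rw [hsize]
  rw [hbelt] at hthin
  have hN0 : (0 : ℤ) ≤ N + n * M := by positivity
  have h1 := (le_of_fatBound_le (M := M) (B := engineBound n M N) le_rfl (st 0).pos).2.2.2.2
  obtain ⟨hc1, hc2⟩ := lt_coords_of_not_thin (by linarith) hthin (htr.mem L le_rfl)
  obtain ⟨T, hT, b, a, e, heng⟩ :=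
    exists_engine hM htr h0 le_rfl hN (by linarith) (by linarith)
  obtain ⟨L, rfl⟩ := Nat.exists_eq_add_of_le hT
  exact fat_of_engine (st := fun j => st (T + j)) (c := fun j => c (T + j)) hM htr.drop heng
    (le_add_of_nonneg_right hN0) hthin

end FatEngine

/-! ### Short runs -/

/-- The bound on the length of a shortest run: the first summand is for runs inside the belts, the
second one for the runs that leave them. -/
def runBound {R : Type*} [CommSemiring R] (n M N : R) : R :=
  n * (thinHeight n (beltWidth n M N) M + 1) ^ 2 +
    2 * (fatSize n M N * (repBound (fatSize n M N) (fatSize n M N * fatSize n M N) + 1))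

section ShortRun

variable {n : ℕ} {V : VASS n} {L M N : ℕ} {q r : Fin n} {st : ℕ → Fin n} {c : ℕ → Vec2}

theorem thinHeight_cast (n W M : ℕ) : ((thinHeight n W M : ℕ) : ℤ) = thinHeight (n : ℤ) W M := by
  simp [thinHeight, beltSep]

theorem repBound_cast (K E : ℕ) : ((repBound K E : ℕ) : ℤ) = repBound (K : ℤ) E := by
  simp [repBound, slackLevel]

theorem exists_walk_of_thin (hM : vassNorm V ≤ M) (htr : IsTrace V quadrant L st c) (h0 : c 0 = 0)
    (hL : c L = 0) (hmin : ∀ L', Walk V quadrant L' (st 0) 0 (st L) 0 → L ≤ L') {W : ℕ}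
    (hthin : ∀ i ≤ L, Thin W (c i)) :
    ∃ L' ≤ n * (thinHeight n W M + 1) ^ 2, Walk V quadrant L' (st 0) 0 (st L) 0 := by
  have hbox : IsTrace V (box (thinHeight n W M)) L st c := by
    refine ⟨htr.step, fun i hi => ?_⟩
    obtain ⟨h1, h2⟩ := htr.mem i hi
    have hle := height_le_of_thin hM htr h0 hL hmin hthin hi
    rw [← thinHeight_cast] at hle
    exact ⟨⟨h1, by linarith⟩, h2, by linarith⟩
  obtain ⟨L', hL', hw⟩ := (hbox.walk L.zero_le le_rfl).shorten_box
  rw [h0, hL] at hw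
  exact ⟨L', hL', hw.mono fun _ => mem_quadrant_of_mem_box⟩

theorem exists_walk_of_not_thin (hM : vassNorm V ≤ M) (htr : IsTrace V quadrant L st c)
    (h0 : c 0 = 0) (hL : c L = 0) (hN : growth n M ^ n + M ≤ N) {t : ℕ} (ht : t ≤ L)
    (hthin : ¬Thin (beltWidth n M N : ℕ) (c t)) :
    ∃ L' ≤ 2 * (fatSize n M N * (repBound (fatSize n M N) (fatSize n M N * fatSize n M N) + 1)),
      Walk V quadrant L' (st 0) 0 (st L) 0 := by
  have hfat := fat_of_not_thin hM (htr.take ht) h0 hN hthin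
  obtain ⟨st', c', htr', hst0, hc0, hstL, hcL⟩ := (htr.walk ht le_rfl).to_reverse.exists_trace
  have hfat' := fat_of_not_thin ((vassNorm_reverse V).trans_le hM) htr' (hc0.trans hL) hN
    (by rwa [hcL])
  rw [hst0, hstL, hcL] at hfat'
  obtain ⟨L', hL', hw⟩ := hfat.exists_walk hfat'
  rw [← Nat.cast_mul, ← repBound_cast] at hL'
  exact ⟨L', by exact_mod_cast hL', hw⟩

theorem Walk.exists_le_runBound (hM : vassNorm V ≤ M) (h : Walk V quadrant L q 0 r 0)
    (hN : growth n M ^ n + M ≤ N) : ∃ L' ≤ runBound n M N, Walk V quadrant L' q 0 r 0 := by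
  classical
  have hex : ∃ L, Walk V quadrant L q 0 r 0 := ⟨L, h⟩
  obtain ⟨L₀, hw, hmin⟩ : ∃ L₀, Walk V quadrant L₀ q 0 r 0 ∧
      ∀ L', Walk V quadrant L' q 0 r 0 → L₀ ≤ L' :=
    ⟨Nat.find hex, Nat.find_spec hex, fun _ => Nat.find_min' hex⟩
  obtain ⟨st, c, htr, rfl, h0, rfl, hL⟩ := hw.exists_trace
  by_cases hthin : ∀ i ≤ L₀, Thin (beltWidth n M N : ℕ) (c i)
  · obtain ⟨L', hL', hw⟩ := exists_walk_of_thin hM htr h0 hL hmin hthin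
    exact ⟨L', hL'.trans (Nat.le_add_right _ _), hw⟩
  · push Not at hthin
    obtain ⟨t, ht, hthin⟩ := hthin
    obtain ⟨L', hL', hw⟩ := exists_walk_of_not_thin hM htr h0 hL hN ht hthin
    exact ⟨L', hL'.trans (Nat.le_add_left _ _), hw⟩

end ShortRun

/-! ### The polynomial -/

section Polynomial

open Polynomial

variable {n n' M M' N N' B B' W W' K K' E E' : ℕ}

@[gcongr]
theorem repBound_mono (hK : K ≤ K') (hE : E ≤ E') : repBound K E ≤ repBound K' E' := by
  unfold repBound slackLevel
  gcongr

@[gcongr]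
theorem thinHeight_mono (hn : n ≤ n') (hW : W ≤ W') (hM : M ≤ M') :
    thinHeight n W M ≤ thinHeight n' W' M' := by
  unfold thinHeight beltSep
  gcongr

@[gcongr]
theorem engineBound_mono (hn : n ≤ n') (hM : M ≤ M') (hN : N ≤ N') :
    engineBound n M N ≤ engineBound n' M' N' := by
  unfold engineBound engineSize
  gcongr

@[gcongr]
theorem flowBound_mono (hn : n ≤ n') (hM : M ≤ M') (hB : B ≤ B') :
    flowBound n M B ≤ flowBound n' M' B' := by
  unfold flowBound skelLength modBound
  gcongr

@[gcongr]
theorem seqBound_mono (hn : n ≤ n') (hM : M ≤ M') (hB : B ≤ B') :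
    seqBound n M B ≤ seqBound n' M' B' := by
  unfold seqBound ccwBound
  gcongr

@[gcongr]
theorem fatSize_mono (hn : n ≤ n') (hM : M ≤ M') (hN : N ≤ N') :
    fatSize n M N ≤ fatSize n' M' N' := by
  unfold fatSize
  gcongr

@[gcongr]
theorem beltWidth_mono (hn : n ≤ n') (hM : M ≤ M') (hN : N ≤ N') :
    beltWidth n M N ≤ beltWidth n' M' N' := by
  unfold beltWidth fatBound
  gcongr

theorem runBound_mono (hn : n ≤ n') (hM : M ≤ M') (hN : N ≤ N') :
    runBound n M N ≤ runBound n' M' N' := by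
  unfold runBound
  gcongr

theorem eval_runBound_X (A : ℕ) : (runBound X X X : ℕ[X]).eval A = runBound A A A := by
  simp [runBound, thinHeight, beltWidth, beltSep, fatSize, fatBound, flowBound, skelLength,
    modBound, seqBound, ccwBound, engineBound, engineSize, repBound, slackLevel]

theorem exists_eval_le_pow (p : ℕ[X]) : ∃ k, ∀ A ≥ 2, p.eval A ≤ A ^ k := by
  induction p using Polynomial.induction_on' with
  | add p p' ih ih' =>
    obtain ⟨k, hk⟩ := ih
    obtain ⟨k', hk'⟩ := ih'
    refine ⟨k + k' + 1, fun A hA => ?_⟩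
    have hA1 : 1 ≤ A := by omega
    calc (p + p').eval A ≤ A ^ k + A ^ k' := by
          rw [eval_add]
          exact add_le_add (hk A hA) (hk' A hA)
      _ ≤ A ^ (k + k') + A ^ (k + k') := by gcongr <;> omega
      _ = A ^ (k + k') * 2 := (mul_two _).symm
      _ ≤ A ^ (k + k' + 1) := by rw [pow_succ]; gcongr
  | monomial d a =>
    refine ⟨a + d, fun A hA => ?_⟩
    rw [eval_monomial, pow_add]
    gcongr
    exact a.lt_two_pow_self.le.trans (Nat.pow_le_pow_left hA a)

theorem exists_runBound_le_pow : ∃ k, ∀ A n M N : ℕ, 2 ≤ A → n ≤ A → M ≤ A → N ≤ A →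
    runBound n M N ≤ A ^ k := by
  obtain ⟨k, hk⟩ := exists_eval_le_pow (runBound X X X)
  exact ⟨k, fun A n M N hA hn hM hN =>
    (runBound_mono hn hM hN).trans ((eval_runBound_X A).symm.trans_le (hk A hA))⟩

end Polynomial

theorem growth_pow_add_le {n : ℕ} (hn : 0 < n) (M : ℕ) :
    growth n M ^ n + M ≤ (2 * (2 * (n * M) + 2) ^ 2) ^ n := by
  have hM : M ≤ n * M := Nat.le_mul_of_pos_left M hn
  have hgrowth : growth n M ≤ (2 * (n * M) + 2) ^ 2 := by
    rw [growth, sq, mul_assoc]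
    exact Nat.mul_le_mul (by omega) (by omega)
  have hMpow : M ≤ ((2 * (n * M) + 2) ^ 2) ^ n :=
    calc M ≤ 2 * (n * M) + 2 := by omega
      _ ≤ ((2 * (n * M) + 2) ^ 2) ^ n := by
        rw [← pow_mul]
        exact Nat.le_self_pow (by omega) _
  calc growth n M ^ n + M ≤ 2 * ((2 * (n * M) + 2) ^ 2) ^ n := by
        rw [two_mul]
        gcongr
    _ ≤ 2 ^ n * ((2 * (n * M) + 2) ^ 2) ^ n := by
        gcongr
        exact Nat.le_self_pow hn.ne' 2
    _ = (2 * (2 * (n * M) + 2) ^ 2) ^ n := (mul_pow _ _ _).symm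

/-! ### Runs as walks -/

section Run

variable {n L : ℕ} {V : VASS n} {q r : Fin n} {u w : Vec2}

theorem effect_cons (t : Transition n) (π : List (Transition n)) :
    effect (t :: π) = t.2.1 + effect π := by simp [effect]

theorem endState_cons (t : Transition n) (π : List (Transition n)) (q : Fin n) :
    endState (t :: π) q = endState π t.2.2 := by
  simp only [endState, stateAt, List.take_length, List.getLast?_cons]
  cases π.getLast? <;> rfl

theorem vecAt_cons_succ (t : Transition n) (π : List (Transition n)) (u : Vec2) (i : ℕ) :
    vecAt (t :: π) u (i + 1) = vecAt π (u + t.2.1) i := by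
  simp only [vecAt, List.take_succ_cons, effect_cons, add_assoc]

theorem isPath_iff {π : List (Transition n)} :
    IsPath V π ↔ (∀ t ∈ π, t ∈ V) ∧ π.IsChain (fun s t => s.2.2 = t.1) := Iff.rfl

theorem isPath_cons {t : Transition n} {π : List (Transition n)} :
    IsPath V (t :: π) ↔ t ∈ V ∧ startsAt π t.2.2 ∧ IsPath V π := by
  have hchain : (t :: π).IsChain (fun s t => s.2.2 = t.1) ↔
      startsAt π t.2.2 ∧ π.IsChain (fun s t => s.2.2 = t.1) := by
    rw [List.isChain_cons, startsAt]
    simp only [eq_comm]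
  rw [isPath_iff, isPath_iff, List.forall_mem_cons, hchain]
  tauto

theorem forall_vecAt_cons_nonneg {t : Transition n} {π : List (Transition n)} :
    (∀ i ≤ (t :: π).length, 0 ≤ vecAt (t :: π) u i) ↔
      0 ≤ u ∧ ∀ i ≤ π.length, 0 ≤ vecAt π (u + t.2.1) i := by
  simp only [← vecAt_cons_succ]
  refine ⟨fun h => ⟨by simpa [vecAt, effect] using h 0, fun i hi => h (i + 1) (by simpa)⟩, ?_⟩
  rintro ⟨hu, h⟩ (_ | i) hi
  exacts [by simpa [vecAt, effect], h i (by simpa using hi)]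

theorem isRun_nil : IsRun V [] q u ↔ 0 ≤ u := by
  simp [IsRun, isPath_iff, Enabled, startsAt, vecAt, effect]

theorem isRun_cons {t : Transition n} {π : List (Transition n)} :
    IsRun V (t :: π) q u ↔ 0 ≤ u ∧ t ∈ V ∧ t.1 = q ∧ IsRun V π t.2.2 (u + t.2.1) := by
  simp only [IsRun, Enabled, isPath_cons, forall_vecAt_cons_nonneg]
  have : startsAt (t :: π) q ↔ t.1 = q := by simp [startsAt]
  tauto

theorem walk_quadrant_iff : Walk V quadrant L q u r w ↔
    ∃ π, IsRun V π q u ∧ π.length = L ∧ endState π q = r ∧ u + effect π = w := by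
  constructor
  · intro h
    induction h with
    | nil h => exact ⟨[], isRun_nil.2 h, rfl, rfl, by simp [effect]⟩
    | @cons L p q r u v w hu ht _ ih =>
      obtain ⟨π, hrun, hlength, hend, heff⟩ := ih
      exact ⟨(p, v, q) :: π, isRun_cons.2 ⟨hu, ht, rfl, hrun⟩, by simp [hlength],
        by rw [endState_cons, hend], by rw [effect_cons, ← add_assoc, heff]⟩
  · rintro ⟨π, hrun, rfl, rfl, rfl⟩
    induction π generalizing q u with
    | nil => simpa [effect] using .nil (isRun_nil.1 hrun)
    | cons t π ih =>
      obtain ⟨hu, ht, rfl, h⟩ := isRun_cons.1 hrun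
      rw [endState_cons, effect_cons, ← add_assoc]
      exact .cons hu ht (ih h)

end Run

end TwoVASS

/-- Exponential run theorem.  There is a polynomial `p` with
natural coefficients such that for every 2-VASS `V` (with `n` states and norm
`M`) and every (0,0)-run of `V`, there is a (0,0)-run of `V` of length at most
`p(nM)ⁿ` with the same source and target configurations. -/
theorem exponential_run :
    ∃ p : Polynomial ℕ, ∀ (n : ℕ) (V : VASS n) (π : List (Transition n)) (q : Fin n),
      IsZeroRun V π q →
      ∃ π' : List (Transition n),
        IsZeroRun V π' q ∧ endState π' q = endState π q ∧
        π'.length ≤ (p.eval (n * vassNorm V)) ^ n := by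
  obtain ⟨k, hk⟩ := TwoVASS.exists_runBound_le_pow
  refine ⟨(2 * (2 * Polynomial.X + 2) ^ 2) ^ k, fun n V π q ⟨hrun, heff⟩ => ?_⟩
  set A := (2 * (2 * (n * vassNorm V) + 2) ^ 2) ^ n with hA
  have hN : TwoVASS.growth n (vassNorm V) ^ n + vassNorm V ≤ A :=
    TwoVASS.growth_pow_add_le q.pos _
  have hwalk : TwoVASS.Walk V TwoVASS.quadrant π.length q 0 (endState π q) 0 :=
    TwoVASS.walk_quadrant_iff.2 ⟨π, hrun, rfl, rfl, by rw [heff, add_zero]⟩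
  obtain ⟨L, hL, hshort⟩ := hwalk.exists_le_runBound le_rfl hN
  obtain ⟨π', hrun', hlen, hend, heff'⟩ := TwoVASS.walk_quadrant_iff.1 hshort
  refine ⟨π', ⟨hrun', by rwa [zero_add] at heff'⟩, hend, ?_⟩
  have h2 : 2 ^ n ≤ A := Nat.pow_le_pow_left (Nat.le_mul_of_pos_right 2 (by positivity)) n
  calc π'.length ≤ TwoVASS.runBound n (vassNorm V) A := hlen.trans_le hL
    _ ≤ A ^ k := hk _ _ _ _ ((Nat.le_self_pow q.pos.ne' 2).trans h2)
        (n.lt_two_pow_self.le.trans h2) (le_of_add_le_right hN) le_rfl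
    _ = _ := by simp [hA, pow_right_comm]
end

section
/- Small solutions of linear inequality systems: there exists a constant c ∈ ℕ such that for all d, k, M ∈ ℕ with M ≥ 1, every system of d linear inequalities in k variables with integer coefficients all of absolute value at most M (that is, a system A·x ≥ b with A ∈ ℤ^{d×k}, b ∈ ℤ^d, all entries of A and b of absolute value at most M) which admits a solution x ∈ ℕ^k, admits a solution x ∈ ℕ^k all of whose entries are at most (c·k·M)^d. -/
/-!
Let `m` be a minimal solution in `ℕ` of the system of equations `B *ᵥ m = b`, and suppose that a
coordinate `N = m j` is large. The lattice points `⌊(n / N) • m⌋`, `n < N`, lie within one unit of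
the segment from `0` to `m`, so `B` maps them close to the segment from `0` to `b`: their images
lie in a box with few integer points. As `N` is large, two of the points have the same image. Their
difference is a nonzero `y ≤ m` in the kernel of `B`, and `m - y` contradicts minimality.
Inequalities are reduced to equations by slack variables.
-/

open Matrix

theorem mul_mem_Icc_negPart_posPart {R : Type*} [Ring R] [Lattice R] [IsOrderedRing R]
    (a : R) {t N : R} (ht : 0 ≤ t) (htN : t ≤ N) :
    a * t ∈ Set.Icc (-(a⁻ * N)) (a⁺ * N) := by
  have hpos : a⁺ * t ≤ a⁺ * N := mul_le_mul_of_nonneg_left htN (posPart_nonneg a)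
  have hneg : a⁻ * t ≤ a⁻ * N := mul_le_mul_of_nonneg_left htN (negPart_nonneg a)
  have hpos₀ : 0 ≤ a⁺ * t := mul_nonneg (posPart_nonneg a) ht
  have hneg₀ : 0 ≤ a⁻ * t := mul_nonneg (negPart_nonneg a) ht
  have hsplit : a * t = a⁺ * t - a⁻ * t := by rw [← sub_mul, posPart_sub_negPart]
  rw [hsplit]
  exact ⟨zero_sub (a⁻ * N) ▸ sub_le_sub hpos₀ hneg, (sub_le_self _ hneg₀).trans hpos⟩

theorem natCast_comp_sub_of_le {ι R : Type*} [AddGroupWithOne R] {x y : ι → ℕ} (h : y ≤ x) :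
    (Nat.cast ∘ (x - y) : ι → R) = Nat.cast ∘ x - Nat.cast ∘ y :=
  funext fun j => Nat.cast_sub (h j)

section Equations

variable {ι κ : Type*} [Fintype ι] [Fintype κ]

theorem mul_dotProduct_natCast_div {R : Type*} [CommRing R] (a : ι → R) (m : ι → ℕ) (n N : ℕ) :
    (N : R) * (a ⬝ᵥ fun j => ((n * m j / N : ℕ) : R)) =
      (a ⬝ᵥ (Nat.cast ∘ m)) * n - ∑ j, a j * ((n * m j % N : ℕ) : R) := by
  simp only [dotProduct, Function.comp_apply, Finset.mul_sum, Finset.sum_mul,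
    ← Finset.sum_sub_distrib]
  refine Finset.sum_congr rfl fun j _ => ?_
  have hdiv : (N : R) * (n * m j / N : ℕ) + (n * m j % N : ℕ) = n * m j := by
    exact_mod_cast congrArg (Nat.cast (R := R)) (Nat.div_add_mod (n * m j) N)
  linear_combination a j * hdiv

theorem dotProduct_natCast_div_mem_Icc (a : ι → ℤ) (m : ι → ℕ) {n N : ℕ} (hN : 0 < N)
    (hn : n ≤ N) :
    (a ⬝ᵥ fun j => ((n * m j / N : ℕ) : ℤ)) ∈
      Finset.Icc (-((a ⬝ᵥ (Nat.cast ∘ m))⁻ + ∑ j, (a j)⁺))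
        ((a ⬝ᵥ (Nat.cast ∘ m))⁺ + ∑ j, (a j)⁻) := by
  have hN' : (0 : ℤ) < N := by exact_mod_cast hN
  have hscale := mul_dotProduct_natCast_div a m n N
  obtain ⟨hlow, hhigh⟩ := mul_mem_Icc_negPart_posPart (a ⬝ᵥ (Nat.cast ∘ m) : ℤ)
    (Nat.cast_nonneg n) (Nat.cast_le.2 hn : (n : ℤ) ≤ N)
  have hrem : ∀ j, a j * ((n * m j % N : ℕ) : ℤ) ∈ Set.Icc (-((a j)⁻ * N)) ((a j)⁺ * N) := fun j =>
    mul_mem_Icc_negPart_posPart (a j) (Nat.cast_nonneg _) (Nat.cast_le.2 (Nat.mod_lt _ hN).le)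
  have hremLow := Finset.sum_le_sum fun j (_ : j ∈ Finset.univ) => (hrem j).1
  have hremHigh := Finset.sum_le_sum fun j (_ : j ∈ Finset.univ) => (hrem j).2
  rw [Finset.sum_neg_distrib, ← Finset.sum_mul] at hremLow
  rw [← Finset.sum_mul] at hremHigh
  exact Finset.mem_Icc.2
    ⟨le_of_mul_le_mul_left (by linarith) hN', le_of_mul_le_mul_left (by linarith) hN'⟩

theorem card_Icc_negPart_posPart (a : ι → ℤ) (c : ℤ) :
    ((Finset.Icc (-(c⁻ + ∑ j, (a j)⁺)) (c⁺ + ∑ j, (a j)⁻)).card : ℤ) = 1 + (∑ j, |a j| + |c|) := by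
  have hlen : c⁺ + ∑ j, (a j)⁻ - -(c⁻ + ∑ j, (a j)⁺) = ∑ j, |a j| + |c| := by
    simp only [← posPart_add_negPart, Finset.sum_add_distrib]
    ring
  have hnonneg : 0 ≤ ∑ j, |a j| + |c| := by positivity
  rw [Int.card_Icc, Int.toNat_of_nonneg (by linarith)]
  linarith

theorem exists_mulVec_eq_zero_of_pow_lt (B : Matrix κ ι ℤ) (m : ι → ℕ) {L : ℕ}
    (hL : ∀ i, ∑ j, |B i j| + |(B *ᵥ (Nat.cast ∘ m)) i| ≤ L) {j : ι}
    (hj : (1 + L) ^ Fintype.card κ < m j) :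
    ∃ y ≤ m, 0 < y j ∧ B *ᵥ (Nat.cast ∘ y) = 0 := by
  classical
  have hpos : 0 < m j := (Nat.zero_le _).trans_lt hj
  let f : ℕ → ι → ℕ := fun n l => n * m l / m j
  let box : Finset (κ → ℤ) := Fintype.piFinset fun i =>
    Finset.Icc (-((B i ⬝ᵥ (Nat.cast ∘ m))⁻ + ∑ l, (B i l)⁺))
      ((B i ⬝ᵥ (Nat.cast ∘ m))⁺ + ∑ l, (B i l)⁻)
  have hbox : box.card ≤ (1 + L) ^ Fintype.card κ := by
    rw [Fintype.card_piFinset, ← Finset.card_univ]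
    refine Finset.prod_le_pow_card _ _ _ fun i _ => ?_
    zify
    rw [card_Icc_negPart_posPart]
    exact add_le_add_right (hL i) 1
  have hmaps : ∀ n ∈ Finset.range (m j), B *ᵥ (Nat.cast ∘ f n) ∈ box := fun n hn =>
    Fintype.mem_piFinset.2 fun i =>
      dotProduct_natCast_div_mem_Icc (B i) m hpos (Finset.mem_range.1 hn).le
  obtain ⟨p, hp, q, hq, hpq, heq⟩ := Finset.exists_ne_map_eq_of_card_lt_of_maps_to
    (by rw [Finset.card_range]; exact hbox.trans_lt hj) hmaps
  wlog hlt : p < q generalizing p q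
  · exact this q hq p hp hpq.symm heq.symm (hpq.symm.lt_of_le (not_lt.1 hlt))
  have hmono : f p ≤ f q := fun l => Nat.div_le_div_right (Nat.mul_le_mul_right _ hlt.le)
  have hfm : f q ≤ m := fun l =>
    Nat.div_le_of_le_mul (Nat.mul_le_mul_right _ (Finset.mem_range.1 hq).le)
  have hfj : ∀ n, f n j = n := fun n => Nat.mul_div_cancel n hpos
  refine ⟨f q - f p, tsub_le_self.trans hfm, ?_, ?_⟩
  · rw [Pi.sub_apply, hfj, hfj]
    exact Nat.sub_pos_of_lt hlt
  · rw [natCast_comp_sub_of_le hmono, mulVec_sub, heq, sub_self]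

theorem le_pow_of_minimal_mulVec_eq {B : Matrix κ ι ℤ} {b : κ → ℤ} {L : ℕ}
    (hL : ∀ i, ∑ j, |B i j| + |b i| ≤ L) {m : ι → ℕ}
    (hm : Minimal (fun x : ι → ℕ => B *ᵥ (Nat.cast ∘ x) = b) m) (j : ι) :
    m j ≤ (1 + L) ^ Fintype.card κ := by
  by_contra! hlarge
  obtain ⟨y, hy, hyj, hker⟩ := exists_mulVec_eq_zero_of_pow_lt B m (by rwa [hm.prop]) hlarge
  have hsol : B *ᵥ (Nat.cast ∘ (m - y)) = b := by
    rw [natCast_comp_sub_of_le hy, mulVec_sub, hker, sub_zero, hm.prop]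
  have hle : m j ≤ m j - y j := hm.le_of_le hsol tsub_le_self j
  have hyle : y j ≤ m j := hy j
  omega

end Equations

section Inequalities

variable {ι κ : Type*} [Fintype ι] [Fintype κ]

theorem fromCols_neg_one_mulVec_eq_iff [DecidableEq κ] {R : Type*} [Ring R] (A : Matrix κ ι R)
    (b : κ → R) (x : ι → ℕ) (s : κ → ℕ) :
    fromCols A (-1) *ᵥ (Nat.cast ∘ Sum.elim x s) = b ↔
      A *ᵥ (Nat.cast ∘ x) = b + Nat.cast ∘ s := by
  rw [Sum.comp_elim, fromCols_mulVec_sumElim, neg_mulVec, one_mulVec, ← sub_eq_add_neg,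
    sub_eq_iff_eq_add]

theorem sum_abs_fromCols_neg_one [DecidableEq κ] {R : Type*} [Ring R] [LinearOrder R]
    [IsOrderedRing R] (A : Matrix κ ι R) (i : κ) :
    ∑ j, |fromCols A (-1 : Matrix κ κ R) i j| = ∑ j, |A i j| + 1 := by
  simp [Fintype.sum_sum_type, one_apply, apply_ite abs]

theorem minimal_sumElim_of_minimal_le_mulVec [DecidableEq κ] {R : Type*} [Ring R] [PartialOrder R]
    [IsStrictOrderedRing R] {A : Matrix κ ι R} {b : κ → R} {x : ι → ℕ} {s : κ → ℕ}
    (hx : Minimal (fun x : ι → ℕ => b ≤ A *ᵥ (Nat.cast ∘ x)) x)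
    (hs : A *ᵥ (Nat.cast ∘ x) = b + Nat.cast ∘ s) :
    Minimal (fun m : ι ⊕ κ → ℕ => fromCols A (-1) *ᵥ (Nat.cast ∘ m) = b) (Sum.elim x s) := by
  refine ⟨(fromCols_neg_one_mulVec_eq_iff A b x s).2 hs, fun m hm hle => ?_⟩
  obtain ⟨x', s', rfl⟩ : ∃ x' s', m = Sum.elim x' s' := ⟨_, _, (Sum.elim_comp_inl_inr m).symm⟩
  have hs' : A *ᵥ (Nat.cast ∘ x') = b + Nat.cast ∘ s' :=
    (fromCols_neg_one_mulVec_eq_iff A b x' s').1 hm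
  have hx' : b ≤ A *ᵥ (Nat.cast ∘ x') := hs' ▸ le_add_of_nonneg_right fun i => Nat.cast_nonneg _
  obtain rfl : x = x' := hx.eq_of_ge hx' fun j => hle (.inl j)
  obtain rfl : s = s' := Nat.cast_injective.comp_left (add_left_cancel (hs.symm.trans hs'))
  exact le_rfl

theorem le_pow_of_minimal_le_mulVec {A : Matrix κ ι ℤ} {b : κ → ℤ} {L : ℕ}
    (hL : ∀ i, ∑ j, |A i j| + |b i| ≤ L) {x : ι → ℕ}
    (hx : Minimal (fun x : ι → ℕ => b ≤ A *ᵥ (Nat.cast ∘ x)) x) (j : ι) :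
    x j ≤ (2 + L) ^ Fintype.card κ := by
  classical
  let s : κ → ℕ := fun i => ((A *ᵥ (Nat.cast ∘ x)) i - b i).toNat
  have hs : A *ᵥ (Nat.cast ∘ x) = b + Nat.cast ∘ s := funext fun i => by
    simp only [s, Pi.add_apply, Function.comp_apply, Int.toNat_of_nonneg (sub_nonneg.2 (hx.prop i)),
      add_sub_cancel]
  have hL' : ∀ i, ∑ j, |fromCols A (-1 : Matrix κ κ ℤ) i j| + |b i| ≤ (1 + L : ℕ) := fun i => by
    rw [sum_abs_fromCols_neg_one]
    push_cast
    linarith [hL i]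
  have hbound := le_pow_of_minimal_mulVec_eq hL' (minimal_sumElim_of_minimal_le_mulVec hx hs)
    (.inl j)
  rwa [← add_assoc] at hbound

theorem small_solutions_of_linear_inequalities_general {A : Matrix κ ι ℤ} {b : κ → ℤ} {M : ℕ}
    (hM : 1 ≤ M) (hA : ∀ i j, |A i j| ≤ (M : ℤ)) (hb : ∀ i, |b i| ≤ (M : ℤ)) {x : ι → ℕ}
    (hx : Minimal (fun x : ι → ℕ => b ≤ A *ᵥ (Nat.cast ∘ x)) x) (j : ι) :
    x j ≤ (4 * Fintype.card ι * M) ^ Fintype.card κ := by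
  have hL : ∀ i, ∑ j, |A i j| + |b i| ≤ (Fintype.card ι * M + M : ℕ) := fun i => by
    have hrow : ∑ j, |A i j| ≤ Fintype.card ι * M := by
      simpa using Finset.sum_le_card_nsmul Finset.univ _ (M : ℤ) fun j _ => hA i j
    push_cast
    exact add_le_add hrow (hb i)
  have hbase : 2 + (Fintype.card ι * M + M) ≤ 4 * Fintype.card ι * M := by
    have hcard : 1 ≤ Fintype.card ι := Fintype.card_pos_iff.2 ⟨j⟩
    nlinarith [Nat.mul_le_mul hcard hM, Nat.mul_le_mul_right M hcard]
  exact (le_pow_of_minimal_le_mulVec hL hx j).trans (Nat.pow_le_pow_left hbase _)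

end Inequalities

/-- small solutions of linear inequality systems.  There is a
constant `c` such that for all `d, k, M` with `M ≥ 1`, every system `A·x ≥ b`
of `d` linear inequalities in `k` variables, with integer coefficients of
absolute value at most `M`, that has a solution over ℕ, has a solution over ℕ
all of whose entries are at most `(c·k·M)^d`. -/
theorem small_solutions_of_linear_inequalities :
    ∃ c : ℕ, ∀ (d k M : ℕ), 1 ≤ M →
      ∀ (A : Matrix (Fin d) (Fin k) ℤ) (b : Fin d → ℤ),
        (∀ i j, |A i j| ≤ (M : ℤ)) →
        (∀ i, |b i| ≤ (M : ℤ)) →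
        (∃ x : Fin k → ℕ, ∀ i, b i ≤ ∑ j, A i j * (x j : ℤ)) →
        ∃ x : Fin k → ℕ, (∀ i, b i ≤ ∑ j, A i j * (x j : ℤ)) ∧
          ∀ j, x j ≤ (c * k * M) ^ d := by
  refine ⟨4, fun d k M hM A b hA hb hsol => ?_⟩
  obtain ⟨x, hx⟩ := exists_minimal_of_wellFoundedLT
    (fun x : Fin k → ℕ => b ≤ A *ᵥ (Nat.cast ∘ x)) hsol
  exact ⟨x, hx.prop, by simpa using small_solutions_of_linear_inequalities_general hM hA hb hx⟩
end

section
/- Let V be a 2-VASS with n control states and norm M, let K ∈ ℕ, and let ρ be a run of V such that for some fixed coordinate j ∈ {1,2}, the j-th coordinate of the vector of every configuration in ρ is smaller than K, and such that ‖trg(ρ)‖ > ‖src(ρ)‖ + K·n·M. Then ρ contains, as an infix, a cycle whose effect is vertical or horizontal. -/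
/-!
Let `k` be a counter attaining the norm of the target, and colour each configuration of the run by
its control state and its `j`-th counter, which takes at most `K` values. An infix whose endpoints
have the same colour and which raises the `k`-th counter is a cycle as required. If there is none,
cut back from the target to the first visit of its colour: this does not lower the `k`-th counter,
the transition leading to that visit raised it by at most `M`, and the colour does not occur before.
Repeating this at most `K * n` times, the counter climbs by at most `K * n * M` in total.
-/

theorem le_add_card_nsmul_of_antitone_on_fibers {α G : Type*} [AddCommMonoid G] [Preorder G]
    [IsOrderedAddMonoid G] {c : ℕ → α} {y : ℕ → G} {M : G} (hM : 0 ≤ M) {S : Finset α} {L : ℕ}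
    (hcolour : ∀ i ≤ L, c i ∈ S) (hstep : ∀ i < L, y (i + 1) ≤ y i + M)
    (hanti : ∀ l r, l ≤ r → r ≤ L → c l = c r → y r ≤ y l) :
    y L ≤ y 0 + S.card • M := by
  classical
  induction hcard : S.card generalizing S L with
  | zero =>
    have hmem := hcolour L le_rfl
    simp [Finset.card_eq_zero.mp hcard] at hmem
  | succ d ih =>
    obtain ⟨f, hfL, hf, hfirst⟩ : ∃ f ≤ L, c f = c L ∧ ∀ i < f, c i ≠ c L :=
      have hex : ∃ i, c i = c L := ⟨L, rfl⟩
      ⟨Nat.find hex, Nat.find_min' hex rfl, Nat.find_spec hex, fun _ => Nat.find_min hex⟩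
    have hback : y L ≤ y f := hanti f L hfL le_rfl hf
    cases f with
    | zero => exact hback.trans (le_add_of_nonneg_right (nsmul_nonneg hM _))
    | succ p =>
      have hprefix : y p ≤ y 0 + d • M :=
        ih (S := S.erase (c L))
          (fun i hi => Finset.mem_erase.mpr ⟨hfirst i (by omega), hcolour i (by omega)⟩)
          (fun i hi => hstep i (by omega))
          (fun l r hlr hr => hanti l r hlr (by omega))
          (by rw [Finset.card_erase_of_mem (hcolour L le_rfl), hcard, Nat.add_sub_cancel])
      calc y L ≤ y (p + 1) := hback
        _ ≤ y p + M := hstep p hfL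
        _ ≤ y 0 + d • M + M := by gcongr
        _ = y 0 + (d + 1) • M := by rw [succ_nsmul, add_assoc]

theorem exists_lt_map_eq_lt_of_add_card_nsmul_lt {α G : Type*} [AddCommMonoid G] [LinearOrder G]
    [IsOrderedAddMonoid G] {c : ℕ → α} {y : ℕ → G} {M : G} (hM : 0 ≤ M) {S : Finset α} {L : ℕ}
    (hcolour : ∀ i ≤ L, c i ∈ S) (hstep : ∀ i < L, y (i + 1) ≤ y i + M)
    (hfar : y 0 + S.card • M < y L) :
    ∃ l r, l < r ∧ r ≤ L ∧ c l = c r ∧ y l < y r := by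
  by_contra! hanti
  refine hfar.not_ge (le_add_card_nsmul_of_antitone_on_fibers hM hcolour hstep ?_)
  intro l r hlr hr heq
  rcases hlr.eq_or_lt with rfl | hlt
  · exact le_rfl
  · exact hanti l r hlt hr heq

theorem proj_add (j : Fin 2) (v w : Vec2) : proj j (v + w) = proj j v + proj j w := by
  unfold proj
  split <;> rfl

theorem proj_nonneg {v : Vec2} (hv : 0 ≤ v) (j : Fin 2) : 0 ≤ proj j v := by
  unfold proj
  split
  exacts [hv.1, hv.2]

theorem proj_le_vnorm (j : Fin 2) (v : Vec2) : proj j v ≤ vnorm v := by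
  unfold proj vnorm
  split <;> omega

theorem exists_proj_eq_vnorm {v : Vec2} (hv : 0 ≤ v) : ∃ k, proj k v = vnorm v := by
  rcases le_total v.1.natAbs v.2.natAbs with h | h
  · exact ⟨1, by simpa [proj, vnorm, h] using (abs_of_nonneg hv.2).symm⟩
  · exact ⟨0, by simpa [proj, vnorm, h] using (abs_of_nonneg hv.1).symm⟩

theorem vert_or_horiz_of_proj {v : Vec2} {j k : Fin 2} (hj : proj j v = 0) (hk : 0 < proj k v) :
    Vert v ∨ Horiz v := by
  unfold Vert Horiz
  fin_cases j <;> fin_cases k <;> simp only [proj] at hj hk <;> grind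

section Transitions

variable {n : ℕ} {V : VASS n} {π : List (Transition n)}

theorem vnorm_le_vassNorm {t : Transition n} (ht : t ∈ V) : vnorm t.2.1 ≤ vassNorm V :=
  Finset.le_sup (f := fun t : Transition n => vnorm t.2.1) ht

theorem effect_append (π π' : List (Transition n)) :
    effect (π ++ π') = effect π + effect π' := by
  simp [effect]

theorem vecAt_zero (π : List (Transition n)) (u : Vec2) : vecAt π u 0 = u := by
  simp [vecAt, effect]

theorem vecAt_add_effect_infix (π : List (Transition n)) (u : Vec2) {l r : ℕ} (hlr : l ≤ r) :
    vecAt π u l + effect ((π.drop l).take (r - l)) = vecAt π u r := by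
  obtain ⟨d, rfl⟩ := Nat.exists_eq_add_of_le hlr
  rw [vecAt, vecAt, List.take_add, effect_append, add_assoc, Nat.add_sub_cancel_left]

theorem vecAt_succ (u : Vec2) {i : ℕ} (hi : i < π.length) :
    vecAt π u (i + 1) = vecAt π u i + π[i].2.1 := by
  simp [vecAt, effect, hi, add_assoc]

theorem proj_vecAt_succ_le (hπ : ∀ t ∈ π, t ∈ V) (u : Vec2) (k : Fin 2) {i : ℕ}
    (hi : i < π.length) :
    proj k (vecAt π u (i + 1)) ≤ proj k (vecAt π u i) + vassNorm V := by
  rw [vecAt_succ u hi, proj_add]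
  gcongr
  calc proj k π[i].2.1 ≤ vnorm π[i].2.1 := proj_le_vnorm k _
    _ ≤ vassNorm V := mod_cast vnorm_le_vassNorm (hπ _ (List.getElem_mem hi))

theorem exists_infix_cycle_proj_eq_zero_proj_pos (hπ : ∀ t ∈ π, t ∈ V) (q : Fin n) {u : Vec2}
    {j k : Fin 2} {S : Finset ℤ} (hS : ∀ i ≤ π.length, proj j (vecAt π u i) ∈ S)
    (hfar : proj k u + S.card * n * vassNorm V < proj k (vecAt π u π.length)) :
    ∃ l r, l < r ∧ r ≤ π.length ∧ stateAt π q l = stateAt π q r ∧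
      proj j (effect ((π.drop l).take (r - l))) = 0 ∧
      0 < proj k (effect ((π.drop l).take (r - l))) := by
  obtain ⟨l, r, hlr, hr, hcolour, hclimb⟩ := exists_lt_map_eq_lt_of_add_card_nsmul_lt
    (c := fun i => (proj j (vecAt π u i), stateAt π q i)) (y := fun i => proj k (vecAt π u i))
    (S := S ×ˢ Finset.univ) (Nat.cast_nonneg (vassNorm V))
    (fun i hi => Finset.mem_product.mpr ⟨hS i hi, Finset.mem_univ _⟩)
    (fun i => proj_vecAt_succ_le hπ u k)
    (by simpa [vecAt_zero] using hfar)
  obtain ⟨hproj, hstate⟩ := Prod.mk.inj hcolour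
  simp only [← vecAt_add_effect_infix π u hlr.le, proj_add] at hproj hclimb
  exact ⟨l, r, hlr, hr, hstate, left_eq_add.mp hproj, (lt_add_iff_pos_right _).mp hclimb⟩

end Transitions

/-- If along a run `ρ` of a 2-VASS `V` (with `n` states and
norm `M`) some fixed coordinate `j` stays smaller than `K` in every
configuration, and the norm of the target exceeds the norm of the source by
more than `K·n·M`, then `ρ` contains, as an infix, a cycle whose effect is
vertical or horizontal. -/
theorem one_coordinate_bounded_infix_cycle
    (n : ℕ) (V : VASS n) (π : List (Transition n)) (q : Fin n) (u : Vec2)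
    (K : ℕ) (j : Fin 2)
    (hrun : IsRun V π q u)
    (hbounded : ∀ i ≤ π.length, proj j (vecAt π u i) < (K : ℤ))
    (hfar : vnorm u + K * n * vassNorm V < vnorm (vecAt π u π.length)) :
    ∃ l r : ℕ, l < r ∧ r ≤ π.length ∧
      stateAt π q l = stateAt π q r ∧
      (Vert (effect (List.take (r - l) (List.drop l π))) ∨
       Horiz (effect (List.take (r - l) (List.drop l π)))) := by
  obtain ⟨hpath, -, hnonneg⟩ := hrun
  obtain ⟨k, hk⟩ := exists_proj_eq_vnorm (hnonneg π.length le_rfl)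
  have hstrip (i : ℕ) (hi : i ≤ π.length) : proj j (vecAt π u i) ∈ Finset.Ico (0 : ℤ) K :=
    Finset.mem_Ico.mpr ⟨proj_nonneg (hnonneg i hi) j, hbounded i hi⟩
  have hclimb : proj k u + (Finset.Ico (0 : ℤ) K).card * n * vassNorm V <
      proj k (vecAt π u π.length) := by
    calc proj k u + (Finset.Ico (0 : ℤ) K).card * n * vassNorm V
        = proj k u + K * n * vassNorm V := by simp
      _ ≤ vnorm u + K * n * vassNorm V := by gcongr; exact proj_le_vnorm k u
      _ < proj k (vecAt π u π.length) := by rw [hk]; exact_mod_cast hfar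
  obtain ⟨l, r, hlr, hr, hstate, hj, hpos⟩ :=
    exists_infix_cycle_proj_eq_zero_proj_pos hpath.1 q hstrip hclimb
  exact ⟨l, r, hlr, hr, hstate, vert_or_horiz_of_proj hj hpos⟩
end
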